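/- For every finite simple graph H there exists an integer c_H such that the following holds: for every finite simple graph G not containing H as an odd minor, every set S of positive integers with 1 ∈ S, and every positive integer k, if every induced bipartite subgraph of G is S-achieved k-choosable, then G is S-achieved (k+c_H)-choosable. -/

import Mathlib

open SimpleGraph

universe u v

namespace CFPaper

variable {V : Type u} {W : Type v}

/-- A coloring is proper if adjacent vertices get distinct colors. -/
def Proper (G : SimpleGraph V) (φ : V → ℕ) : Prop :=
  ∀ ⦃u w : V⦄, G.Adj u w → φ u ≠ φ w

/-- A coloring is conflict-free if every non-isolated vertex has a color appearing
exactly once in its open neighborhood. -/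
def ConflictFree (G : SimpleGraph V) (φ : V → ℕ) : Prop :=
  ∀ v : V, (G.neighborSet v).Nonempty →
    ∃ c : ℕ, {u : V | G.Adj v u ∧ φ u = c}.ncard = 1

/-- `G` is conflict-free `k`-choosable (k a real number). -/
def CFChoosable (G : SimpleGraph V) (k : ℝ) : Prop :=
  ∀ L : V → Finset ℕ, (∀ v, k ≤ ((L v).card : ℝ)) →
    ∃ φ : V → ℕ, (∀ v, φ v ∈ L v) ∧ Proper G φ ∧ ConflictFree G φ

/-- A coloring is `S`-achieved if for every non-isolated vertex there are `s ∈ S`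
and a color appearing exactly `s` times in its open neighborhood. -/
def SAchieved (S : Set ℕ) (G : SimpleGraph V) (φ : V → ℕ) : Prop :=
  ∀ v : V, (G.neighborSet v).Nonempty →
    ∃ s ∈ S, ∃ c : ℕ, {u : V | G.Adj v u ∧ φ u = c}.ncard = s

/-- `G` is `S`-achieved `t`-choosable. -/
def SChoosable (S : Set ℕ) (G : SimpleGraph V) (t : ℕ) : Prop :=
  ∀ L : V → Finset ℕ, (∀ v, t ≤ (L v).card) →
    ∃ φ : V → ℕ, (∀ v, φ v ∈ L v) ∧ Proper G φ ∧ SAchieved S G φ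

/-- `G` is properly `S`-achieved `t`-colorable (colors from `{1,…,t}`). -/
def SColorable (S : Set ℕ) (G : SimpleGraph V) (t : ℕ) : Prop :=
  ∃ φ : V → ℕ, (∀ v, φ v ∈ Finset.Icc 1 t) ∧ Proper G φ ∧ SAchieved S G φ

/-- `G` has a proper conflict-free coloring with colors from `{1,…,t}`. -/
def PCFColorable (G : SimpleGraph V) (t : ℕ) : Prop :=
  ∃ φ : V → ℕ, (∀ v, φ v ∈ Finset.Icc 1 t) ∧ Proper G φ ∧ ConflictFree G φ

/-- The proper conflict-free chromatic number. -/
noncomputable def chiPCF (G : SimpleGraph V) : ℕ := sInf {t : ℕ | PCFColorable G t}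

/-- `(B x : x : ι)` is a tree-decomposition of `G` with underlying tree `T`. -/
structure IsTreeDecomp (G : SimpleGraph V) {ι : Type*} (T : SimpleGraph ι) (B : ι → Set V) :
    Prop where
  tree : T.IsTree
  bags_connected : ∀ vv : V, (T.induce {x : ι | vv ∈ B x}).Connected
  edge_in_bag : ∀ ⦃a b : V⦄, G.Adj a b → ∃ x : ι, a ∈ B x ∧ b ∈ B x

/-- The torso of a tree-decomposition at a node `x`. -/
def torso (G : SimpleGraph V) {ι : Type*} (T : SimpleGraph ι) (B : ι → Set V) (x : ι) :
    SimpleGraph (B x) :=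
  SimpleGraph.fromRel fun a b =>
    G.Adj a b ∨ ∃ y : ι, T.Adj x y ∧ (a : V) ∈ B y ∧ (b : V) ∈ B y

/-- The frame of a tree-decomposition at a node `x`. -/
def frame (G : SimpleGraph V) {ι : Type*} (T : SimpleGraph ι) (B : ι → Set V) (x : ι) :
    Set (Set (B x)) :=
  {s : Set (B x) | ∃ y : ι, T.Adj x y ∧ s = {a : B x | (a : V) ∈ B y}}

/-- A subgraph `H` of `G` is `C`-compatible: every edge of `H` has both ends in some member
of `C`. -/
def Compatible (C : Set (Set V)) (H : SimpleGraph V) : Prop :=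
  ∀ ⦃a b : V⦄, H.Adj a b → ∃ c ∈ C, a ∈ c ∧ b ∈ c

/-- `G` is `(S,C,L,t)`-extendable. -/
def Extendable (S : Set ℕ) (G : SimpleGraph V) (C : Set (Set V)) (L : V → Finset ℕ)
    (t : ℕ) : Prop :=
  ∀ (Wc : Set V), G.IsClique Wc → Wc.ncard ≤ t →
  ∀ (H : SimpleGraph V), H ≤ G → Compatible C H →
  ∀ (φW : V → ℕ), (∀ w ∈ Wc, φW w ∈ L w) →
    (∀ a ∈ Wc, ∀ b ∈ Wc, G.Adj a b → φW a ≠ φW b) →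
  ∀ (f : V → ℕ) (g : V → Bool),
  ∃ φ : V → ℕ, (∀ w, φ w ∈ L w) ∧ Proper G φ ∧ (∀ w ∈ Wc, φ w = φW w) ∧
    (∀ w ∈ Wc, g w = false → ∀ u : V, G.Adj w u → u ∉ Wc → φ u ≠ f w) ∧
    (∀ w : V, (w ∉ Wc ∨ (w ∈ Wc ∧ g w = true)) →
      (((G \ H).neighborSet w = ∅) ∨
        ∃ c : ℕ, {u : V | (G \ H).Adj w u ∧ φ u = c}.ncard ∈ S))

/-- `H` is a minor of `G` (branch-set definition). -/
def IsMinor (H : SimpleGraph W) (G : SimpleGraph V) : Prop :=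
  ∃ ρ : W → Set V,
    (∀ w : W, (G.induce (ρ w)).Connected) ∧
    (Pairwise fun a b => Disjoint (ρ a) (ρ b)) ∧
    ∀ ⦃a b : W⦄, H.Adj a b → ∃ x ∈ ρ a, ∃ y ∈ ρ b, G.Adj x y

/-- The spanning subgraph of `G` whose edges are those between `A` and its complement. -/
def crossGraph (G : SimpleGraph V) (A : Set V) : SimpleGraph V :=
  SimpleGraph.fromRel fun x y => G.Adj x y ∧ x ∈ A ∧ y ∉ A

/-- The odd contraction of `G` determined by the bipartition `{A, Aᶜ}`: contract each
connected component of the spanning bipartite subgraph between `A` and `Aᶜ`. -/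
def oddContract (G : SimpleGraph V) (A : Set V) :
    SimpleGraph ((crossGraph G A).ConnectedComponent) :=
  SimpleGraph.fromRel fun Ct Dt =>
    ∃ x y : V, (crossGraph G A).connectedComponentMk x = Ct ∧
      (crossGraph G A).connectedComponentMk y = Dt ∧ G.Adj x y

/-- `OddContractions G H`: `H` is obtained from `G` by repeatedly applying odd
contractions. -/
inductive OddContractions : ∀ {α : Type u}, SimpleGraph α → ∀ {β : Type u}, SimpleGraph β → Prop
  | refl {α : Type u} (G : SimpleGraph α) : OddContractions G G
  | step {α : Type u} (G : SimpleGraph α) (A : Set α) {β : Type u} {H : SimpleGraph β} :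
      OddContractions (oddContract G A) H → OddContractions G H

/-- `H` is an odd minor of `G`: `H` is isomorphic to a graph obtained from a subgraph of `G`
by repeatedly applying odd contractions. -/
def IsOddMinor (H : SimpleGraph W) (G : SimpleGraph V) : Prop :=
  ∃ (s : Set V) (G₀ : SimpleGraph s), G₀ ≤ G.induce s ∧
    ∃ (β : Type u) (K : SimpleGraph β), OddContractions G₀ K ∧ Nonempty (H ≃g K)

/-- The graph obtained from `H` by subdividing each edge `e` exactly `n e` times, where
`σ` chooses an orientation of each edge. -/
def subdivGraph (H : SimpleGraph W) (σ : H.edgeSet → W × W) (n : H.edgeSet → ℕ) :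
    SimpleGraph (W ⊕ (Σ e : H.edgeSet, Fin (n e))) :=
  SimpleGraph.fromRel fun a b =>
    (∃ (x y : W) (h : H.Adj x y),
        a = Sum.inl x ∧ b = Sum.inl y ∧ n ⟨s(x, y), H.mem_edgeSet.mpr h⟩ = 0) ∨
    (∃ (x : W) (p : Σ e : H.edgeSet, Fin (n e)), a = Sum.inl x ∧ b = Sum.inr p ∧
        ((x = (σ p.1).1 ∧ (p.2 : ℕ) = 0) ∨ (x = (σ p.1).2 ∧ (p.2 : ℕ) = n p.1 - 1))) ∨
    (∃ p q : Σ e : H.edgeSet, Fin (n e), a = Sum.inr p ∧ b = Sum.inr q ∧ p.1 = q.1 ∧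
        (p.2 : ℕ) + 1 = (q.2 : ℕ))

/-- `σ` is a valid orientation of the edges of `H`. -/
def ValidOrientation (H : SimpleGraph W) (σ : H.edgeSet → W × W) : Prop :=
  ∀ e : H.edgeSet, s((σ e).1, (σ e).2) = (e : Sym2 W)

/-- `G` contains a subdivision of `H` as a subgraph. -/
def ContainsSubdivision (H : SimpleGraph W) (G : SimpleGraph V) : Prop :=
  ∃ (σ : H.edgeSet → W × W) (n : H.edgeSet → ℕ), ValidOrientation H σ ∧
    ∃ f : subdivGraph H σ n →g G, Function.Injective f

/-- The strong product of two graphs. -/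
def strongProd {α : Type*} {β : Type*} (A : SimpleGraph α) (B : SimpleGraph β) :
    SimpleGraph (α × β) :=
  SimpleGraph.fromRel fun p q =>
    (A.Adj p.1 q.1 ∧ p.2 = q.2) ∨ (p.1 = q.1 ∧ B.Adj p.2 q.2) ∨
      (A.Adj p.1 q.1 ∧ B.Adj p.2 q.2)


/-- A layering of `G`. -/
def IsLayering (G : SimpleGraph V) (Vl : ℕ → Set V) : Prop :=
  (∀ vv : V, ∃ i : ℕ, vv ∈ Vl i) ∧ (Pairwise fun i j => Disjoint (Vl i) (Vl j)) ∧
  ∀ ⦃a b : V⦄, G.Adj a b → ∃ i : ℕ, a ∈ Vl i ∪ Vl (i + 1) ∧ b ∈ Vl i ∪ Vl (i + 1)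

/-!
One shows by induction on `A` that every proper precoloring of a bounded number of vertices `Z` of
`A` extends to `A`, even if each vertex of `Z` forbids one color to its uncolored neighbors; the
forbidden color protects the color by which that vertex is already achieved.

If no bipartite subgraph of `G[A]` has a large complete minor, then `G[A]` is degenerate, even
after joining vertices with a common neighbor of small degree, and a greedy coloring gives every
vertex a neighbor of unique color; this is where `1 ∈ S` enters. Otherwise, many disjoint odd paths
between branch sets of the minor would yield an odd complete minor, hence the odd minor `H`. By
Tutte's theorem in an auxiliary graph, their absence produces a bounded set `X` such that `G[A] - X`
consists of a bipartite core and of pieces each attached to at most one core vertex.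

If many vertices of `Z` lie in one piece, then `X` and the anchor of the piece separate `A` into two
smaller sets, both with few precolored vertices. If not, color `X` and then the core, together with
one neighbor in its piece for every core vertex that has no neighbor in the core: these vertices
induce a bipartite graph, so `k` colors suffice. The pieces are independent from then on and are
handled by induction.
-/

/-! ### Maximum matchings -/

/-- A deletion set `Y` together with a labeling `κ` of the vertices that is constant on the
edges avoiding `Y`, and a set `O` of labels whose classes outside `Y` are odd. Up to merging
components, this is the obstruction in the Tutte–Berge formula. -/
structure IsOddBarrier {ι : Type*} (G : SimpleGraph V) (Y : Set V) (κ : V → ι) (O : Finset ι) :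
    Prop where
  eq_of_adj : ∀ ⦃x y⦄, x ∉ Y → y ∉ Y → G.Adj x y → κ x = κ y
  odd_ncard : ∀ o ∈ O, Odd {x | x ∉ Y ∧ κ x = o}.ncard

/-- The join of `G` with a complete graph on `d` vertices, which reduces the Tutte–Berge formula
to Tutte's theorem. -/
def joinComplete (G : SimpleGraph V) (d : ℕ) : SimpleGraph (V ⊕ Fin d) :=
  (G ⊕g ⊤) ⊔ completeBipartiteGraph V (Fin d)

section Matching

variable {G : SimpleGraph V} {d : ℕ}

theorem joinComplete_adj_inl {x y : V} :
    (joinComplete G d).Adj (.inl x) (.inl y) ↔ G.Adj x y := by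
  simp [joinComplete]

theorem joinComplete_adj_inr {i : Fin d} {a : V ⊕ Fin d} (h : a ≠ .inr i) :
    (joinComplete G d).Adj (.inr i) a := by
  cases a <;> simp_all [joinComplete, eq_comm]

theorem exists_isMatching_of_joinComplete {M : (joinComplete G d).Subgraph}
    (hM : M.IsPerfectMatching) : ∃ N : G.Subgraph, N.IsMatching ∧ N.vertsᶜ.ncard ≤ d := by
  rw [Subgraph.isPerfectMatching_iff] at hM
  choose m hm hm_unique using hM
  let N : G.Subgraph :=
    { verts := {x | ∃ y, M.Adj (.inl x) (.inl y)}
      Adj := fun x y => M.Adj (.inl x) (.inl y)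
      adj_sub := fun h => joinComplete_adj_inl.1 h.adj_sub
      edge_vert := fun {_ y} h => ⟨y, h⟩
      symm := ⟨fun _ _ h => h.symm⟩ }
  have hN : N.IsMatching := by
    rintro x ⟨y, hxy⟩
    refine ⟨y, hxy, fun z (hxz : M.Adj (.inl x) (.inl z)) => Sum.inl_injective (β := Fin d) ?_⟩
    rw [hm_unique _ _ hxy, hm_unique _ _ hxz]
  refine ⟨N, hN, ?_⟩
  calc N.vertsᶜ.ncard
      ≤ (Set.range (Sum.inr : Fin d → V ⊕ Fin d)).ncard := by
        refine Set.ncard_le_ncard_of_injOn (fun x => m (.inl x)) (fun x hx => ?_) ?_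
          (Set.finite_range _)
        · rcases h : m (.inl x) with y | i
          · exact absurd ⟨y, h ▸ hm _⟩ hx
          · exact ⟨i, rfl⟩
        · intro x _ y _ hxy
          have hmm : ∀ a, m (m a) = a := fun a => (hm_unique _ _ (hm a).symm).symm
          simpa [hmm] using congrArg m hxy
    _ = d := by
        rw [← Set.image_univ, Set.ncard_image_of_injective _ Sum.inr_injective, Set.ncard_univ,
          Nat.card_fin]

variable [Finite V] {u : Set (V ⊕ Fin d)}

theorem inr_mem_of_isTutteViolator (heven : Even (Nat.card V + d))
    (hu : (joinComplete G d).IsTutteViolator u) (i : Fin d) : Sum.inr i ∈ u := by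
  by_contra hi
  let K := ((⊤ : (joinComplete G d).Subgraph).deleteVerts u).coe
  have hK : K.Preconnected := by
    have hreach : ∀ a, K.Reachable ⟨.inr i, by simp [hi]⟩ a := by
      rintro ⟨a, ha⟩
      by_cases hai : a = .inr i
      · subst hai; rfl
      · refine Adj.reachable ?_
        simpa [K, hi, joinComplete_adj_inr hai] using ha
    exact fun a b => (hreach a).symm.trans (hreach b)
  have hle : K.oddComponents.ncard ≤ 1 := by
    have := hK.subsingleton_connectedComponent
    exact Set.ncard_le_one_of_subsingleton _
  have hlt : u.ncard < K.oddComponents.ncard := hu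
  obtain rfl : u = ∅ := by rw [← Set.ncard_eq_zero]; omega
  have hodd : Odd K.oddComponents.ncard := by
    rw [show K.oddComponents.ncard = 1 by omega]; exact odd_one
  rw [odd_ncard_oddComponents] at hodd
  have hcard : Nat.card ((⊤ : (joinComplete G d).Subgraph).deleteVerts ∅).verts
      = Nat.card V + d := by
    simp
  rw [hcard] at hodd
  exact Nat.not_odd_iff_even.2 heven hodd

theorem ncard_eq_ncard_preimage_inl_add (hu : ∀ i, Sum.inr i ∈ u) :
    u.ncard = (Sum.inl ⁻¹' u : Set V).ncard + d := by
  have hsplit : u = Sum.inl '' (Sum.inl ⁻¹' u) ∪ Set.range Sum.inr := by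
    ext (x | i) <;> simp [hu]
  conv_lhs => rw [hsplit]
  rw [Set.ncard_union_eq, Set.ncard_image_of_injective _ Sum.inl_injective, ← Set.image_univ,
    Set.ncard_image_of_injective _ Sum.inr_injective, Set.ncard_univ, Nat.card_fin]
  rw [Set.disjoint_left]
  rintro _ ⟨x, _, rfl⟩ ⟨i, hi⟩
  cases hi

theorem exists_isOddBarrier_of_isTutteViolator (heven : Even (Nat.card V + d))
    (hu : (joinComplete G d).IsTutteViolator u) :
    ∃ (Y : Set V) (ι : Type u) (κ : V → ι) (O : Finset ι),
      IsOddBarrier G Y κ O ∧ Y.ncard + d < O.card := by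
  classical
  have hinr := inr_mem_of_isTutteViolator heven hu
  let D := (⊤ : (joinComplete G d).Subgraph).deleteVerts u
  have hmem : ∀ x ∉ Sum.inl ⁻¹' u, (.inl x : V ⊕ Fin d) ∈ D.verts := fun x hx => by
    simpa [D] using hx
  let κ : V → Option D.coe.ConnectedComponent := fun x =>
    if hx : x ∉ Sum.inl ⁻¹' u then some (D.coe.connectedComponentMk ⟨_, hmem x hx⟩) else none
  have hκ : ∀ x (hx : x ∉ Sum.inl ⁻¹' u),
      κ x = some (D.coe.connectedComponentMk ⟨_, hmem x hx⟩) := fun x hx => dif_pos hx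
  refine ⟨Sum.inl ⁻¹' u, _, κ,
    (Set.toFinite D.coe.oddComponents).toFinset.map .some, ⟨?_, ?_⟩, ?_⟩
  · intro x y hx hy hxy
    rw [hκ x hx, hκ y hy, Option.some_inj, ConnectedComponent.eq]
    refine Adj.reachable ?_
    simpa [D, joinComplete_adj_inl, hxy] using And.intro hx hy
  · simp only [Finset.mem_map, Set.Finite.mem_toFinset]
    rintro _ ⟨c, hc, rfl⟩
    have himage : Subtype.val '' c.supp =
        Sum.inl '' {x | x ∉ Sum.inl ⁻¹' u ∧ κ x = some c} := by
      ext a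
      constructor
      · rintro ⟨⟨x | i, hx⟩, hxc, rfl⟩
        · have hxu : x ∉ Sum.inl ⁻¹' u := by simpa [D] using hx
          exact ⟨x, ⟨hxu, by rw [hκ x hxu]; exact congrArg some hxc⟩, rfl⟩
        · simp [D, hinr i] at hx
      · rintro ⟨x, ⟨hx, hxc⟩, rfl⟩
        rw [hκ x hx, Option.some_inj] at hxc
        exact ⟨_, hxc, rfl⟩
    have hcard := congrArg Set.ncard himage
    rw [Set.ncard_image_of_injective _ Subtype.val_injective,
      Set.ncard_image_of_injective _ Sum.inl_injective] at hcard
    exact hcard ▸ hc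
  · rw [Finset.card_map, ← Set.ncard_eq_toFinset_card, ← ncard_eq_ncard_preimage_inl_add hinr]
    exact hu

theorem exists_isMatching_or_isOddBarrier (G : SimpleGraph V) (heven : Even (Nat.card V + d)) :
    (∃ M : G.Subgraph, M.IsMatching ∧ M.vertsᶜ.ncard ≤ d) ∨
    ∃ (Y : Set V) (ι : Type u) (κ : V → ι) (O : Finset ι),
      IsOddBarrier G Y κ O ∧ Y.ncard + d < O.card := by
  by_cases h : ∃ M : (joinComplete G d).Subgraph, M.IsPerfectMatching
  · obtain ⟨M, hM⟩ := h
    exact .inl (exists_isMatching_of_joinComplete hM)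
  · have := Fintype.ofFinite V
    rw [tutte] at h
    push Not at h
    obtain ⟨u, hu⟩ := h
    exact .inr (exists_isOddBarrier_of_isTutteViolator heven hu)

end Matching

/-! ### Disjoint odd paths between terminals -/

theorem eq_zero_or_eq_one (i : ZMod 2) : i = 0 ∨ i = 1 := by
  revert i; decide

theorem eq_add_one_of_ne {i j : ZMod 2} (h : i ≠ j) : i = j + 1 := by
  revert i j; decide

/-- The total weight of a walk under an edge weighting. It serves both for signings, with values
in `ZMod 2`, and for costs, with values in `ℕ`. -/
def weight {R : Type*} [AddCommMonoid R] {G : SimpleGraph V} (w : Sym2 V → R) {a b : V}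
    (p : G.Walk a b) : R :=
  (p.edges.map w).sum

section Weight

variable {R : Type*} [AddCommMonoid R] {G G' : SimpleGraph V} (w : Sym2 V → R) {a b c : V}

theorem weight_nil : weight w (.nil : G.Walk a a) = 0 := rfl

theorem weight_cons (h : G.Adj a b) (p : G.Walk b c) :
    weight w (.cons h p) = w s(a, b) + weight w p := by
  simp [weight]

theorem weight_append (p : G.Walk a b) (q : G.Walk b c) :
    weight w (p.append q) = weight w p + weight w q := by
  simp [weight]

theorem weight_reverse (p : G.Walk a b) : weight w p.reverse = weight w p := by
  simp [weight, List.sum_reverse]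

theorem weight_mapLe (h : G ≤ G') (p : G.Walk a b) : weight w (p.mapLe h) = weight w p := by
  simp [weight]

end Weight

/-- A path of odd weight between two vertices of `T`. Its ends are automatically distinct, but it
may pass through further vertices of `T`. -/
structure OddPath (G : SimpleGraph V) (τ : Sym2 V → ZMod 2) (T : Set V) where
  fst : V
  snd : V
  walk : G.Walk fst snd
  isPath : walk.IsPath
  fst_mem : fst ∈ T
  snd_mem : snd ∈ T
  weight_eq : weight τ walk = 1

/-- The set of vertices of an odd path. -/
def OddPath.verts {G : SimpleGraph V} {τ : Sym2 V → ZMod 2} {T : Set V} (P : OddPath G τ T) :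
    Set V :=
  {v | v ∈ P.walk.support}

/-- The obstruction to many disjoint odd paths between terminals. Outside `X`, the vertices with
`α v = some v` form the core, on which `χ` witnesses that all cycles are balanced for `τ`; every
other vertex is attached to at most one core vertex, its anchor `α v`. -/
structure IsAnchoring (G : SimpleGraph V) (τ : Sym2 V → ZMod 2) (X : Finset V) (α : V → Option V)
    (χ : V → ZMod 2) : Prop where
  anchor_eq_self : ∀ ⦃v u⦄, α v = some u → α u = some u
  notMem : ∀ ⦃v⦄, α v = some v → v ∉ X
  eq_or_add_eq : ∀ ⦃u v⦄, G.Adj u v → u ∉ X → v ∉ X →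
    α u = α v ∨ α u = some u ∧ α v = some v ∧ χ u + χ v = τ s(u, v)

/-- The graph of ports: every vertex is split into two ports, joined to each other unless the
vertex is a terminal. A path through the ports that uses edges of `G` and pairs of ports
alternately switches ports according to `τ`, and its ends are forced to sit at port `0`, which
makes its weight odd. -/
def portGraph (G : SimpleGraph V) (τ : Sym2 V → ZMod 2) (T : Set V) :
    SimpleGraph (V × ZMod 2) where
  Adj x y := x.1 = y.1 ∧ x.2 ≠ y.2 ∧ x.1 ∉ T ∨
    G.Adj x.1 y.1 ∧ y.2 = x.2 + τ s(x.1, y.1) + 1 ∧ (x.1 ∈ T → x.2 = 0) ∧ (y.1 ∈ T → y.2 = 0)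
  symm := ⟨by
    rintro ⟨u, i⟩ ⟨v, j⟩ (⟨rfl : u = v, hij, hu⟩ | ⟨huv, hj, hu, hv⟩)
    · exact .inl ⟨rfl, hij.symm, hu⟩
    · refine .inr ⟨huv.symm, ?_, hv, hu⟩
      rw [hj, Sym2.eq_swap]
      grind⟩
  loopless := ⟨by
    rintro x (⟨-, h, -⟩ | ⟨h, -⟩)
    · exact h rfl
    · exact h.ne rfl⟩

section MatchedPorts

variable {G : SimpleGraph V} {τ : Sym2 V → ZMod 2} {T : Set V}
  {M : (portGraph G τ T).Subgraph} {u v : V} {i j : ZMod 2}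

theorem portGraph_adj_of_ne (h : (portGraph G τ T).Adj (u, i) (v, j)) (huv : u ≠ v) :
    G.Adj u v ∧ j = i + τ s(u, v) + 1 ∧ (u ∈ T → i = 0) ∧ (v ∈ T → j = 0) :=
  h.resolve_left fun h => huv h.1

theorem port_eq_zero_of_mem (hu : u ∈ T) (h : (u, i) ∈ M.verts) (hM : M.IsMatching) : i = 0 := by
  obtain ⟨⟨v, j⟩, hadj, -⟩ := hM h
  rcases hadj.adj_sub with ⟨-, -, h⟩ | ⟨-, -, h, -⟩
  exacts [absurd hu h, h hu]

/-- The subgraph of `G` traced by a matching of the port graph. -/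
def portTrace (M : (portGraph G τ T).Subgraph) : SimpleGraph V where
  Adj u v := u ≠ v ∧ ∃ i j, M.Adj (u, i) (v, j)
  symm := ⟨fun _ _ ⟨h, i, j, hij⟩ => ⟨h.symm, j, i, hij.symm⟩⟩
  loopless := ⟨fun _ h => h.1 rfl⟩

theorem portTrace_adj : (portTrace M).Adj u v ↔ u ≠ v ∧ ∃ i j, M.Adj (u, i) (v, j) := .rfl

theorem portTrace_le (M : (portGraph G τ T).Subgraph) : portTrace M ≤ G :=
  fun _ _ ⟨h, _, _, hij⟩ => (portGraph_adj_of_ne hij.adj_sub h).1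

theorem weight_eq_of_isPath_portTrace (hM : M.IsMatching) {b : V} (p : (portTrace M).Walk u b)
    (hp : p.IsPath) (hb : b ∈ T) (hub : u = b → i = 1)
    (hi : ∀ x, M.Adj (u, i + 1) x → x.1 ∉ p.support) : weight τ p = 1 + i := by
  induction p generalizing i with
  | nil => rw [weight_nil, hub rfl]; rfl
  | @cons u v b h p ih =>
    obtain ⟨huv, i', j, hij⟩ := portTrace_adj.1 h
    obtain rfl : i' = i := by
      by_contra hne
      exact hi (v, j) (eq_add_one_of_ne hne ▸ hij) (by simp)
    obtain ⟨-, hj, -, hv⟩ := portGraph_adj_of_ne hij.adj_sub huv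
    rw [Walk.cons_isPath_iff] at hp
    have hrest : weight τ p = 1 + (j + 1) := by
      refine ih hp.1 hb (fun h => by rw [hv (h ▸ hb), zero_add]) fun x hx => ?_
      rw [show j + 1 + 1 = j by grind] at hx
      rw [hM.eq_of_adj_right hx.symm hij]
      exact hp.2
    rw [weight_cons, hrest, hj]
    grind

theorem exists_oddPath_of_reachable (hM : M.IsMatching) (hu : u ∈ T) (hv : v ∈ T) (huv : u ≠ v)
    (h : (portTrace M).Reachable u v) :
    ∃ P : OddPath G τ T, P.verts ⊆ ((portTrace M).connectedComponentMk u).supp := by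
  classical
  obtain ⟨p, hp⟩ := h.exists_isPath
  have hweight : weight τ p = 1 := by
    simpa using weight_eq_of_isPath_portTrace (i := 0) hM p hp hv (fun h => absurd h huv)
      fun x hx => absurd (port_eq_zero_of_mem hu (M.edge_vert hx) hM) (by decide)
  refine ⟨⟨u, v, p.mapLe (portTrace_le M), hp.mapLe _, hu, hv, ?_⟩, fun x hx => ?_⟩
  · rw [weight_mapLe, hweight]
  · have hx : x ∈ p.support := by simpa [OddPath.verts] using hx
    exact ConnectedComponent.sound ⟨(p.takeUntil x hx).reverse⟩

theorem ncard_neighborSet_portTrace_le (hM : M.IsMatching) (v : V) :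
    ((portTrace M).neighborSet v).ncard ≤ {i | (v, i) ∈ M.verts}.ncard := by
  choose! m _ hm_unique using fun x (hx : x ∈ M.verts) => hM hx
  refine (Set.ncard_le_ncard ?_ (Set.toFinite _)).trans
    (Set.ncard_image_le (f := fun i => (m (v, i)).1))
  rintro w ⟨-, i, j, hij⟩
  exact ⟨i, M.edge_vert hij, congrArg Prod.fst (hm_unique _ (M.edge_vert hij) _ hij).symm⟩

theorem ncard_neighborSet_portTrace_le_two (hM : M.IsMatching) (v : V) :
    ((portTrace M).neighborSet v).ncard ≤ 2 :=
  (ncard_neighborSet_portTrace_le hM v).trans <| by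
    simpa using Set.ncard_le_card (α := ZMod 2) {i | (v, i) ∈ M.verts}

theorem ncard_neighborSet_portTrace_le_one (hM : M.IsMatching) (hv : v ∈ T) :
    ((portTrace M).neighborSet v).ncard ≤ 1 :=
  (ncard_neighborSet_portTrace_le hM v).trans <|
    (Set.ncard_le_one_iff (Set.toFinite _)).2 fun hi hj =>
      (port_eq_zero_of_mem hv hi hM).trans (port_eq_zero_of_mem hv hj hM).symm

theorem even_ncard_unmatched_ports [Finite V] (hM : M.IsMatching)
    (K : (portTrace M).ConnectedComponent) :
    Even {x | x ∉ M.verts ∧ x.1 ∈ K.supp}.ncard := by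
  have hmatched : Even (M.verts ∩ Prod.fst ⁻¹' K.supp).ncard := by
    have hMK : (M.induce (M.verts ∩ Prod.fst ⁻¹' K.supp)).IsMatching := by
      rintro ⟨u, i⟩ ⟨hui, huK⟩
      obtain ⟨⟨v, j⟩, hadj, hunique⟩ := hM hui
      have hvK : v ∈ K.supp := by
        by_cases huv : u = v
        · exact huv ▸ huK
        · have huvM : (portTrace M).Adj u v := ⟨huv, i, j, hadj⟩
          exact (ConnectedComponent.mem_supp_congr_adj K huvM).1 huK
      exact ⟨(v, j), ⟨⟨hui, huK⟩, ⟨M.edge_vert hadj.symm, hvK⟩, hadj⟩,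
        fun y hy => hunique y hy.2.2⟩
    have := Fintype.ofFinite (M.induce (M.verts ∩ Prod.fst ⁻¹' K.supp)).verts
    have heven := hMK.even_card
    rwa [← Set.ncard_eq_toFinset_card'] at heven
  have hall : Even (Prod.fst ⁻¹' K.supp : Set (V × ZMod 2)).ncard := by
    rw [← Set.prod_univ, Set.ncard_prod, Set.ncard_univ, Nat.card_zmod]
    exact even_two.mul_left _
  have hsplit := Set.ncard_inter_add_ncard_sdiff_eq_ncard (Prod.fst ⁻¹' K.supp) M.verts
  rw [Set.inter_comm] at hsplit
  rw [← hsplit, Nat.even_add] at hall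
  convert hall.1 hmatched using 2
  ext x
  exact and_comm

end MatchedPorts

theorem ncard_degree_le_one_le_two [Finite V] {Γ : SimpleGraph V} (hΓ : Γ.Connected)
    (h : ∀ v, (Γ.neighborSet v).ncard ≤ 2) : {v | (Γ.neighborSet v).ncard ≤ 1}.ncard ≤ 2 := by
  classical
  have := Fintype.ofFinite V
  have hdegree : ∀ v, Γ.degree v = (Γ.neighborSet v).ncard := fun v => by
    rw [Set.ncard_eq_toFinset_card', ← card_neighborFinset_eq_degree, neighborFinset]
  have hedges := hΓ.card_vert_le_card_edgeSet_add_one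
  rw [Nat.card_eq_fintype_card, Nat.card_eq_fintype_card, ← edgeFinset_card] at hedges
  have hsum := Γ.sum_degrees_eq_twice_card_edges
  have hle : ∑ v, (Γ.degree v + if Γ.degree v ≤ 1 then 1 else 0) ≤ ∑ _v : V, 2 := by
    refine Finset.sum_le_sum fun v _ => ?_
    have := hdegree v ▸ h v
    split_ifs <;> omega
  simp only [Finset.sum_add_distrib, Finset.sum_boole, Finset.sum_const, Finset.card_univ,
    smul_eq_mul, Nat.cast_id, hsum] at hle
  rw [Set.ncard_eq_toFinset_card']
  simp only [← hdegree, Set.toFinset_ofPred]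
  omega

theorem ncard_degree_le_one_inter_supp_le_two [Finite V] {Γ : SimpleGraph V}
    (h : ∀ v, (Γ.neighborSet v).ncard ≤ 2) (K : Γ.ConnectedComponent) :
    {v ∈ K.supp | (Γ.neighborSet v).ncard ≤ 1}.ncard ≤ 2 := by
  have hle : ∀ v : K, (K.toSimpleGraph.neighborSet v).ncard ≤ (Γ.neighborSet v).ncard := fun v =>
    Set.ncard_le_ncard_of_injOn Subtype.val (fun _ hw => hw) Subtype.val_injective.injOn
  refine le_trans ?_ (ncard_degree_le_one_le_two K.connected_toSimpleGraph
    fun v => (hle v).trans (h v))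
  rw [← Set.ncard_image_of_injective _ Subtype.val_injective]
  exact Set.ncard_le_ncard fun v hv => ⟨⟨v, hv.1⟩, (hle _).trans hv.2, rfl⟩

theorem sum_ncard_fiber {α β : Type*} [Finite α] [Fintype β] (f : α → β) (s : Set α) :
    ∑ b, {a | a ∈ s ∧ f a = b}.ncard = s.ncard := by
  classical
  rw [Set.ncard_eq_toFinset_card s, Finset.card_eq_sum_card_fiberwise (t := Finset.univ) (f := f)
    (by simp [Set.MapsTo])]
  refine Finset.sum_congr rfl fun b _ => ?_
  rw [← Set.ncard_coe_finset]
  congr 1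
  ext a
  simp

section MatchedPorts

variable [Finite V] {G : SimpleGraph V} {τ : Sym2 V → ZMod 2} {T : Set V}
  {M : (portGraph G τ T).Subgraph}

theorem ncard_terminals_inter_supp_le_two (hM : M.IsMatching)
    (K : (portTrace M).ConnectedComponent) : (T ∩ K.supp).ncard ≤ 2 :=
  (Set.ncard_le_ncard fun _ hv =>
    And.intro hv.2 (ncard_neighborSet_portTrace_le_one hM hv.1)).trans <|
    ncard_degree_le_one_inter_supp_le_two (ncard_neighborSet_portTrace_le_two hM) K

theorem ncard_terminals_inter_supp_le_unmatched (hM : M.IsMatching)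
    (K : (portTrace M).ConnectedComponent) :
    (T ∩ K.supp).ncard ≤ {x | x ∉ M.verts ∧ x.1 ∈ K.supp}.ncard := by
  refine Set.ncard_le_ncard_of_injOn (fun v => (v, 1)) (fun v hv => ⟨fun h => ?_, hv.2⟩)
    (by simp [Set.InjOn])
  exact one_ne_zero (port_eq_zero_of_mem hv.1 h hM)

theorem le_ncard_components_of_isMatching (hM : M.IsMatching) {k : ℕ}
    (hk : M.vertsᶜ.ncard + 2 * k ≤ 2 * T.ncard) :
    k ≤ {K : (portTrace M).ConnectedComponent | 1 < (T ∩ K.supp).ncard}.ncard := by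
  classical
  have := Fintype.ofFinite (portTrace M).ConnectedComponent
  let free (K : (portTrace M).ConnectedComponent) : ℕ :=
    {x | x ∉ M.verts ∧ x.1 ∈ K.supp}.ncard
  have hsum : ∑ K : (portTrace M).ConnectedComponent, (T ∩ K.supp).ncard = T.ncard := by
    rw [← sum_ncard_fiber (portTrace M).connectedComponentMk T]
    rfl
  have hsum_free : ∑ K, free K = M.vertsᶜ.ncard := by
    rw [← sum_ncard_fiber (fun x => (portTrace M).connectedComponentMk x.1) M.vertsᶜ]
    rfl
  have hle : ∑ K : (portTrace M).ConnectedComponent, 2 * (T ∩ K.supp).ncard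
      ≤ ∑ K, (free K + 2 * if 1 < (T ∩ K.supp).ncard then 1 else 0) := by
    have two_mul_le : ∀ {t f : ℕ}, t ≤ 2 → t ≤ f → Even f →
        2 * t ≤ f + 2 * if 1 < t then 1 else 0 := by
      rintro t f _ _ ⟨e, rfl⟩
      split_ifs <;> omega
    exact Finset.sum_le_sum fun K _ => two_mul_le (ncard_terminals_inter_supp_le_two hM K)
      (ncard_terminals_inter_supp_le_unmatched hM K) (even_ncard_unmatched_ports hM K)
  simp only [Finset.sum_add_distrib, ← Finset.mul_sum, hsum, hsum_free, Finset.sum_boole,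
    Nat.cast_id] at hle
  rw [Set.ncard_eq_toFinset_card', Set.toFinset_ofPred]
  omega

theorem exists_disjoint_oddPaths_of_isMatching (hM : M.IsMatching) {k : ℕ}
    (hk : M.vertsᶜ.ncard + 2 * k ≤ 2 * T.ncard) :
    ∃ P : Fin k → OddPath G τ T, Pairwise fun i j => Disjoint (P i).verts (P j).verts := by
  have hpath : ∀ K : (portTrace M).ConnectedComponent, 1 < (T ∩ K.supp).ncard →
      ∃ P : OddPath G τ T, P.verts ⊆ K.supp := fun K hK => by
    obtain ⟨u, v, ⟨hu, huK⟩, ⟨hv, hvK⟩, huv⟩ := (Set.one_lt_ncard_iff (Set.toFinite _)).1 hK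
    exact huK ▸ exists_oddPath_of_reachable hM hu hv huv
      (ConnectedComponent.exact (huK.trans hvK.symm))
  obtain ⟨e⟩ : Nonempty
      (Fin k ↪ {K : (portTrace M).ConnectedComponent | 1 < (T ∩ K.supp).ncard}) := by
    have := Fintype.ofFinite {K : (portTrace M).ConnectedComponent | 1 < (T ∩ K.supp).ncard}
    rw [Function.Embedding.nonempty_iff_card_le, Fintype.card_fin, ← Nat.card_eq_fintype_card]
    exact le_ncard_components_of_isMatching hM hk
  choose P hP using fun i => hpath (e i) (e i).2
  refine ⟨P, fun i j hij => Set.disjoint_of_subset (hP i) (hP j) ?_⟩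
  refine Set.disjoint_left.2 fun v hvi hvj => hij (e.injective (Subtype.ext ?_))
  exact hvi.symm.trans hvj

end MatchedPorts

theorem exists_partialInverse {α β : Type*} {f : α → β} {s : Set α} (hf : Set.InjOn f s) :
    ∃ r : β → Option α, ∀ b a, r b = some a ↔ a ∈ s ∧ f a = b := by
  classical
  refine ⟨fun b => if h : ∃ a ∈ s, f a = b then some h.choose else none, fun b a => ?_⟩
  constructor
  · intro hba
    dsimp only at hba
    split_ifs at hba with h
    exact Option.some_inj.1 hba ▸ h.choose_spec
  · rintro ⟨ha, rfl⟩
    have h : ∃ a' ∈ s, f a' = f a := ⟨a, ha, rfl⟩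
    refine (dif_pos h).trans (congrArg some ?_)
    exact hf h.choose_spec.1 ha h.choose_spec.2

section Barrier

variable {G : SimpleGraph V} {τ : Sym2 V → ZMod 2} {T : Set V} {Y : Set (V × ZMod 2)}
  {ι : Type*} {κ : V × ZMod 2 → ι} {O : Finset ι} {u v : V} {i : ZMod 2}

open scoped Classical in
/-- A port of `v` outside `Y`, if there is one that is usable in the port graph. -/
noncomputable def freePort (T : Set V) (Y : Set (V × ZMod 2)) (v : V) : ZMod 2 :=
  if v ∉ T ∧ (v, 0) ∈ Y then 1 else 0

/-- The vertices all of whose usable ports are deleted by `Y`. -/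
def deletedVerts (T : Set V) (Y : Set (V × ZMod 2)) : Set V :=
  {v | (v, 0) ∈ Y ∧ (v ∈ T ∨ (v, 1) ∈ Y)}

/-- The vertices exactly one of whose usable ports survives the deletion of `Y`. -/
def halfVerts (T : Set V) (Y : Set (V × ZMod 2)) : Set V :=
  {v | (v, freePort T Y v) ∉ Y ∧ (v ∈ T ∨ (v, freePort T Y v + 1) ∈ Y)}

theorem freePort_of_mem (hv : v ∈ T) : freePort T Y v = 0 := by
  simp [freePort, hv]

theorem freePort_notMem (hv : v ∉ deletedVerts T Y) : (v, freePort T Y v) ∉ Y := by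
  by_cases hT : v ∈ T <;> by_cases h0 : (v, 0) ∈ Y <;> simp_all [freePort, deletedVerts]

theorem disjoint_deletedVerts_halfVerts : Disjoint (deletedVerts T Y) (halfVerts T Y) := by
  refine Set.disjoint_left.2 fun v hv hv' => ?_
  by_cases hT : v ∈ T <;> by_cases h0 : (v, 0) ∈ Y <;>
    simp_all [freePort, deletedVerts, halfVerts]

theorem terminals_subset : T ⊆ deletedVerts T Y ∪ halfVerts T Y := by
  intro v hv
  by_cases h : (v, 0) ∈ Y <;> simp [deletedVerts, halfVerts, freePort_of_mem, hv, h]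

theorem port_notMem_of_notMem_halfVerts (hv : v ∉ deletedVerts T Y) (hv' : v ∉ halfVerts T Y)
    (i : ZMod 2) : (v, i) ∉ Y := by
  by_cases hi : i = freePort T Y v
  · exact hi ▸ freePort_notMem hv
  · intro h
    exact hv' ⟨freePort_notMem hv, .inr (eq_add_one_of_ne hi ▸ h)⟩

theorem ncard_add_ncard_eq [Finite V] (T : Set V) (Y : Set (V × ZMod 2)) :
    Y.ncard + {v | v ∈ T ∧ (v, 1) ∉ Y}.ncard
      = 2 * (deletedVerts T Y).ncard + (halfVerts T Y).ncard := by
  classical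
  have := Fintype.ofFinite V
  have hncard : ∀ {α : Type u} [Fintype α] (s : Set α), s.ncard = ∑ a, if a ∈ s then 1 else 0 :=
    fun s => by simp [Set.ncard_eq_toFinset_card']
  have hports : ∀ f : ZMod 2 → ℕ, ∑ i, f i = f 0 + f 1 := fun f => Fin.sum_univ_two f
  simp only [hncard, Fintype.sum_prod_type, hports, Finset.mul_sum, ← Finset.sum_add_distrib]
  refine Finset.sum_congr rfl fun v _ => ?_
  have h11 : (1 : ZMod 2) + 1 = 0 := rfl
  by_cases hT : v ∈ T <;> by_cases h0 : (v, (0 : ZMod 2)) ∈ Y <;>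
    by_cases h1 : (v, (1 : ZMod 2)) ∈ Y <;>
    simp [deletedVerts, halfVerts, freePort, hT, h0, h1, h11]

theorem IsOddBarrier.eq_freePort (h : IsOddBarrier (portGraph G τ T) Y κ O)
    (hv : v ∉ deletedVerts T Y) (hi : (v, i) ∉ Y) (hi' : v ∈ T → i = 0) :
    κ (v, i) = κ (v, freePort T Y v) := by
  by_cases hif : i = freePort T Y v
  · rw [hif]
  · have hvT : v ∉ T := fun hvT => hif ((hi' hvT).trans (freePort_of_mem hvT).symm)
    exact h.eq_of_adj hi (freePort_notMem hv) (.inl ⟨rfl, hif, hvT⟩)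

theorem IsOddBarrier.subset_image (h : IsOddBarrier (portGraph G τ T) Y κ O) :
    (O : Set ι) ⊆ (fun v => κ (v, freePort T Y v)) '' halfVerts T Y ∪
      (fun v => κ (v, 1)) '' {v | v ∈ T ∧ (v, 1) ∉ Y} := by
  intro o ho
  by_contra hcon
  rw [Set.mem_union, not_or] at hcon
  have hT : ∀ v i, (v, i) ∉ Y → κ (v, i) = o → v ∈ T → i = 0 := fun v i hi hio hv => by
    rcases eq_zero_or_eq_one i with rfl | rfl
    exacts [rfl, absurd ⟨v, ⟨hv, hi⟩, hio⟩ hcon.2]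
  have hfull : ∀ v i, (v, i) ∉ Y → κ (v, i) = o → ∀ j, (v, j) ∉ Y ∧ κ (v, j) = o := by
    intro v i hi hio
    have hdel : v ∉ deletedVerts T Y := by
      rintro ⟨h0, h1⟩
      rcases eq_zero_or_eq_one i with rfl | rfl
      exacts [hi h0, h1.elim (fun hv => one_ne_zero (hT v 1 hi hio hv)) hi]
    have hfree := h.eq_freePort hdel hi (hT v i hi hio)
    have hhalf : v ∉ halfVerts T Y := fun hv => hcon.1 ⟨v, hv, hfree.symm.trans hio⟩
    have hvT : v ∉ T := fun hv => (terminals_subset hv).elim hdel hhalf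
    have hport := port_notMem_of_notMem_halfVerts hdel hhalf
    exact fun j => ⟨hport j,
      (h.eq_freePort hdel (hport j) fun hv => absurd hv hvT).trans (hfree.symm.trans hio)⟩
  have hprod : {x | x ∉ Y ∧ κ x = o} = {v | (v, 0) ∉ Y ∧ κ (v, 0) = o} ×ˢ Set.univ := by
    ext ⟨v, i⟩
    simp only [Set.mem_ofPred_eq, Set.mem_prod, Set.mem_univ, and_true]
    exact ⟨fun hv => hfull v i hv.1 hv.2 0, fun hv => hfull v 0 hv.1 hv.2 i⟩
  have hodd := h.odd_ncard o ho
  rw [hprod, Set.ncard_prod, Set.ncard_univ, Nat.card_zmod] at hodd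
  exact Nat.not_even_iff_odd.2 hodd (even_two.mul_left _)

theorem IsOddBarrier.exists_core [Finite V] (h : IsOddBarrier (portGraph G τ T) Y κ O) {k : ℕ}
    (hlt : Y.ncard + 2 * T.ncard < O.card + 2 * k) :
    ∃ U ⊆ halfVerts T Y, Set.InjOn (fun v => κ (v, freePort T Y v)) U ∧
      (deletedVerts T Y ∪ halfVerts T Y \ U).ncard ≤ 2 * k := by
  obtain ⟨U, hU, hbij⟩ :=
    Set.exists_subset_bijOn (halfVerts T Y) fun v => κ (v, freePort T Y v)
  refine ⟨U, hU, hbij.injOn, ?_⟩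
  have hO : O.card ≤ U.ncard + {v | v ∈ T ∧ (v, 1) ∉ Y}.ncard := by
    rw [← Set.ncard_coe_finset]
    refine (Set.ncard_le_ncard h.subset_image (Set.toFinite _)).trans
      ((Set.ncard_union_le _ _).trans (add_le_add ?_ (Set.ncard_image_le (Set.toFinite _))))
    exact hbij.image_eq ▸ Set.ncard_image_le (Set.toFinite _)
  have hT : {v | v ∈ T ∧ (v, 1) ∉ Y}.ncard ≤ T.ncard := Set.ncard_le_ncard fun v hv => hv.1
  have hcount := ncard_add_ncard_eq T Y
  have hunion := Set.ncard_union_le (deletedVerts T Y) (halfVerts T Y \ U)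
  have hdiff := Set.ncard_sdiff_add_ncard_of_subset hU
  omega

theorem IsOddBarrier.exists_isAnchoring [Finite V] (h : IsOddBarrier (portGraph G τ T) Y κ O)
    {k : ℕ} (hlt : Y.ncard + 2 * T.ncard < O.card + 2 * k) :
    ∃ (X : Finset V) (α : V → Option V) (χ : V → ZMod 2), X.card ≤ 2 * k ∧
      IsAnchoring G τ X α χ ∧ ∀ t ∈ T, t ∉ X → α t = some t ∧ χ t = 0 := by
  obtain ⟨U, hU, hinj, hcard⟩ := h.exists_core hlt
  obtain ⟨r, hr⟩ := exists_partialInverse hinj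
  let X := (Set.toFinite (deletedVerts T Y ∪ halfVerts T Y \ U)).toFinset
  have hX : ∀ {v}, v ∉ X → v ∉ deletedVerts T Y ∧ (v ∈ halfVerts T Y → v ∈ U) := by
    simp [X]
  have hself : ∀ {v}, r (κ (v, freePort T Y v)) = some v ↔ v ∈ U := fun {v} => by simp [hr]
  have heq : ∀ {u v}, G.Adj u v → u ∉ X → v ∉ X → v ∉ U →
      κ (u, freePort T Y u) = κ (v, freePort T Y v) := by
    intro u v huv hu hv hvU
    have hv_half : v ∉ halfVerts T Y := fun h => hvU ((hX hv).2 h)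
    have hvT : v ∉ T := fun hT => (terminals_subset hT).elim (hX hv).1 hv_half
    have hport := port_notMem_of_notMem_halfVerts (hX hv).1 hv_half
    rw [← h.eq_freePort (hX hv).1 (hport (freePort T Y u + τ s(u, v) + 1))
      fun hT => absurd hT hvT]
    exact h.eq_of_adj (freePort_notMem (hX hu).1) (hport _)
      (.inr ⟨huv, rfl, freePort_of_mem, fun hT => absurd hT hvT⟩)
  refine ⟨X, fun v => r (κ (v, freePort T Y v)), freePort T Y, ?_, ⟨?_, ?_, ?_⟩, ?_⟩
  · rwa [← Set.ncard_eq_toFinset_card]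
  · exact fun v u hvu => hself.2 ((hr _ _).1 hvu).1
  · intro v hv
    have hvU := hself.1 hv
    simpa [X, hvU] using disjoint_deletedVerts_halfVerts.notMem_of_mem_right (hU hvU)
  · intro u v huv hu hv
    by_cases hvU : v ∈ U
    · by_cases huU : u ∈ U
      · by_cases hsum : freePort T Y u + freePort T Y v = τ s(u, v)
        · exact .inr ⟨hself.2 huU, hself.2 hvU, hsum⟩
        · refine .inl (congrArg r ?_)
          refine h.eq_of_adj (freePort_notMem (hX hu).1) (freePort_notMem (hX hv).1)
            (.inr ⟨huv, ?_, freePort_of_mem, freePort_of_mem⟩)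
          have := eq_add_one_of_ne hsum
          grind
      · exact .inl (congrArg r (heq huv.symm hv hu huU).symm)
    · exact .inl (congrArg r (heq huv hu hv hvU))
  · exact fun t ht htX =>
      ⟨hself.2 ((hX htX).2 ((terminals_subset ht).resolve_left (hX htX).1)), freePort_of_mem ht⟩

end Barrier

theorem exists_oddPaths_or_isAnchoring [Finite V] (G : SimpleGraph V) (τ : Sym2 V → ZMod 2)
    (T : Finset V) (k : ℕ) :
    (∃ P : Fin k → OddPath G τ T, Pairwise fun i j => Disjoint (P i).verts (P j).verts) ∨
    ∃ (X : Finset V) (α : V → Option V) (χ : V → ZMod 2), X.card ≤ 2 * k ∧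
      IsAnchoring G τ X α χ ∧ ∀ t ∈ T, t ∉ X → α t = some t ∧ χ t = 0 := by
  rcases le_or_gt T.card (2 * k) with hk | hk
  · exact .inr ⟨T, fun _ => none, 0, hk, ⟨by simp, by simp, fun _ _ _ _ _ => .inl rfl⟩,
      fun t ht htT => absurd ht htT⟩
  have heven : Even (Nat.card (V × ZMod 2) + (2 * T.card - 2 * k)) := by
    rw [Nat.card_prod, Nat.card_zmod, ← Nat.mul_sub]
    exact (even_two.mul_left _).add (even_two.mul_right _)
  rcases exists_isMatching_or_isOddBarrier (portGraph G τ T) heven with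
    ⟨M, hM, hcard⟩ | ⟨Y, ι, κ, O, h, hcard⟩
  · refine .inl (exists_disjoint_oddPaths_of_isMatching hM ?_)
    rw [Set.ncard_coe_finset]
    omega
  · refine .inr (h.exists_isAnchoring ?_)
    rw [Set.ncard_coe_finset]
    omega

/-! ### Complete minors in dense graphs -/

/-- The vertices `a` and `b` are joined by a walk of `G` inside `s`. No membership is required when
`a = b`. -/
def ReachableIn (G : SimpleGraph V) (s : Set V) : V → V → Prop :=
  Relation.ReflTransGen fun x y => G.Adj x y ∧ x ∈ s ∧ y ∈ s

/-- The set `s` induces a connected, possibly empty, subgraph of `G`. -/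
def ConnectedIn (G : SimpleGraph V) (s : Set V) : Prop :=
  ∀ a ∈ s, ∀ b ∈ s, ReachableIn G s a b

section Connected

variable {G G' : SimpleGraph V} {s t : Set V} {a b c : V}

theorem ReachableIn.mono (h : ReachableIn G s a b) (hst : s ⊆ t)
    (hG : ∀ x ∈ s, ∀ y ∈ s, G.Adj x y → G'.Adj x y) : ReachableIn G' t a b :=
  Relation.ReflTransGen.mono
    (fun x y ⟨hxy, hx, hy⟩ => ⟨hG x hx y hy hxy, hst hx, hst hy⟩) a b h

theorem ReachableIn.mono_set (h : ReachableIn G s a b) (hst : s ⊆ t) : ReachableIn G t a b :=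
  h.mono hst fun _ _ _ _ => id

theorem ReachableIn.symm (h : ReachableIn G s a b) : ReachableIn G s b a := by
  induction h with
  | refl => exact .refl
  | tail _ h ih => exact .head ⟨h.1.symm, h.2.2, h.2.1⟩ ih

theorem ReachableIn.trans (h : ReachableIn G s a b) (h' : ReachableIn G s b c) :
    ReachableIn G s a c :=
  Relation.ReflTransGen.trans h h'

theorem ReachableIn.of_adj (h : G.Adj a b) (ha : a ∈ s) (hb : b ∈ s) : ReachableIn G s a b :=
  .single ⟨h, ha, hb⟩

theorem ConnectedIn.singleton (G : SimpleGraph V) (v : V) : ConnectedIn G {v} := by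
  rintro _ rfl _ rfl
  exact .refl

theorem ConnectedIn.of_center (c : V) (h : ∀ a ∈ s, ReachableIn G s a c) : ConnectedIn G s :=
  fun a ha b hb => (h a ha).trans (h b hb).symm

theorem ConnectedIn.biUnion {r : Set V} {σ : V → Set V} (hr : ConnectedIn G' r)
    (hσ : ∀ u ∈ r, ConnectedIn G (σ u)) (hself : ∀ u ∈ r, u ∈ σ u)
    (hadj : ∀ u ∈ r, ∀ w ∈ r, G'.Adj u w → ∃ x ∈ σ u, ∃ y ∈ σ w, G.Adj x y) :
    ConnectedIn G (⋃ u ∈ r, σ u) := by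
  have within {u x y : V} (hu : u ∈ r) (hx : x ∈ σ u) (hy : y ∈ σ u) :
      ReachableIn G (⋃ u ∈ r, σ u) x y :=
    (hσ u hu x hx y hy).mono_set (Set.subset_biUnion_of_mem hu)
  have across (u w : V) (h : ReachableIn G' r u w) : ReachableIn G (⋃ u ∈ r, σ u) u w := by
    induction h with
    | refl => exact .refl
    | @tail b c _ hbc ih =>
      obtain ⟨h, hb, hc⟩ := hbc
      obtain ⟨x, hx, y, hy, hxy⟩ := hadj b hb c hc h
      exact ((ih.trans (within hb (hself b hb) hx)).trans (.of_adj hxy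
        (Set.mem_biUnion hb hx) (Set.mem_biUnion hc hy))).trans (within hc hy (hself c hc))
  intro a ha b hb
  obtain ⟨u, hu, ha⟩ := Set.mem_iUnion₂.1 ha
  obtain ⟨w, hw, hb⟩ := Set.mem_iUnion₂.1 hb
  exact ((within hu ha (hself u hu)).trans (across u w (hr u hu w hw))).trans
    (within hw (hself w hw) hb)

end Connected

/-- The sets `ρ i` are the branch sets of a complete minor of `G` living inside `A`. -/
structure IsCliqueModel (G : SimpleGraph V) (A : Set V) {m : ℕ} (ρ : Fin m → Set V) : Prop where
  subset : ∀ i, ρ i ⊆ A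
  nonempty : ∀ i, (ρ i).Nonempty
  connectedIn : ∀ i, ConnectedIn G (ρ i)
  disjoint : ∀ i j, i ≠ j → Disjoint (ρ i) (ρ j)
  exists_adj : ∀ i j, i ≠ j → ∃ x ∈ ρ i, ∃ y ∈ ρ j, G.Adj x y

namespace IsCliqueModel

variable {G G' : SimpleGraph V} {A A' : Set V} {m : ℕ} {ρ : Fin m → Set V}

theorem mono (h : IsCliqueModel G A ρ) (hA : A ⊆ A') : IsCliqueModel G A' ρ :=
  { h with subset := fun i => (h.subset i).trans hA }

theorem biUnion (h : IsCliqueModel G' A' ρ) (σ : V → Set V) (hA : ∀ u ∈ A', σ u ⊆ A)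
    (hself : ∀ u ∈ A', u ∈ σ u) (hconn : ∀ u ∈ A', ConnectedIn G (σ u))
    (hdisj : ∀ u ∈ A', ∀ w ∈ A', u ≠ w → Disjoint (σ u) (σ w))
    (hadj : ∀ u ∈ A', ∀ w ∈ A', G'.Adj u w → ∃ x ∈ σ u, ∃ y ∈ σ w, G.Adj x y) :
    IsCliqueModel G A fun i => ⋃ u ∈ ρ i, σ u where
  subset i := Set.iUnion₂_subset fun u hu => hA u (h.subset i hu)
  nonempty i :=
    have ⟨u, hu⟩ := h.nonempty i
    ⟨u, Set.mem_biUnion hu (hself u (h.subset i hu))⟩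
  connectedIn i := (h.connectedIn i).biUnion (fun u hu => hconn u (h.subset i hu))
    (fun u hu => hself u (h.subset i hu))
    fun u hu w hw => hadj u (h.subset i hu) w (h.subset i hw)
  disjoint i j hij := by
    simp only [Set.disjoint_iUnion_left, Set.disjoint_iUnion_right]
    intro w hw u hu
    exact hdisj u (h.subset i hu) w (h.subset j hw)
      ((h.disjoint i j hij).ne_of_mem hu hw)
  exists_adj i j hij :=
    have ⟨x, hx, y, hy, hxy⟩ := h.exists_adj i j hij
    have ⟨x', hx', y', hy', hxy'⟩ := hadj x (h.subset i hx) y (h.subset j hy) hxy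
    ⟨x', Set.mem_biUnion hx hx', y', Set.mem_biUnion hy hy', hxy'⟩

theorem cons {v : V} (h : IsCliqueModel G (A ∩ G.neighborSet v) ρ) (hv : v ∈ A) :
    IsCliqueModel G A (Fin.cons {v} ρ : Fin (m + 1) → Set V) := by
  have hadj (i : Fin m) {u : V} (hu : u ∈ ρ i) : G.Adj v u := (h.subset i hu).2
  have hdisj (i : Fin m) : v ∉ ρ i := fun hi => (hadj i hi).ne rfl
  refine ⟨Fin.cases (by simpa using hv) fun i u hu => (h.subset i hu).1,
    Fin.cases (by simp) h.nonempty, Fin.cases (.singleton G v) h.connectedIn,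
    Fin.cases (Fin.cases (absurd rfl) fun j _ => ?_) fun i =>
      Fin.cases (fun _ => ?_) fun j hij => ?_,
    Fin.cases (Fin.cases (absurd rfl) fun j _ => ?_) fun i =>
      Fin.cases (fun _ => ?_) fun j hij => ?_⟩
  · simpa using hdisj j
  · simpa using hdisj i
  · exact h.disjoint i j fun hij' => hij (congrArg _ hij')
  · obtain ⟨u, hu⟩ := h.nonempty j
    exact ⟨v, rfl, u, hu, hadj j hu⟩
  · obtain ⟨u, hu⟩ := h.nonempty i
    exact ⟨u, hu, v, rfl, (hadj i hu).symm⟩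
  · exact h.exists_adj i j fun hij' => hij (congrArg _ hij')

end IsCliqueModel

open scoped Classical in
/-- The neighbors of `v` in `A`. Degree counts are kept inside finite sets, so the ambient graph
may be arbitrary. -/
noncomputable def nbrsIn (G : SimpleGraph V) (A : Finset V) (v : V) : Finset V :=
  A.filter (G.Adj v)

/-- The graph obtained from `G` by contracting `y` into `x`, with `y` kept as an isolated vertex. -/
def contract (G : SimpleGraph V) (x y : V) : SimpleGraph V where
  Adj u v := u ≠ v ∧ u ≠ y ∧ v ≠ y ∧ (G.Adj u v ∨ u = x ∧ G.Adj y v ∨ v = x ∧ G.Adj y u)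
  symm := ⟨fun _ _ ⟨huv, hu, hv, h⟩ =>
    ⟨huv.symm, hv, hu, h.imp .symm .symm⟩⟩
  loopless := ⟨fun _ h => h.1 rfl⟩

section Density

variable {G : SimpleGraph V} {A R : Finset V} {u v x y : V}

@[simp]
theorem mem_nbrsIn : u ∈ nbrsIn G A v ↔ u ∈ A ∧ G.Adj v u := by
  simp [nbrsIn]

theorem coe_nbrsIn : (nbrsIn G A v : Set V) = ↑A ∩ G.neighborSet v := by
  ext; simp

theorem nbrsIn_mono {A B : Finset V} (h : A ⊆ B) (v : V) : nbrsIn G A v ⊆ nbrsIn G B v := by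
  intro u
  simpa using fun hu huv => ⟨h hu, huv⟩

theorem nbrsIn_nbrsIn [DecidableEq V] :
    nbrsIn G (nbrsIn G A x) y = nbrsIn G A x ∩ nbrsIn G A y := by
  ext; simp; tauto

theorem card_nbrsIn_add_card_nbrsIn_le [DecidableEq V] (hxy : G.Adj x y) :
    (nbrsIn G A y).card + (nbrsIn G A x).card ≤
      (nbrsIn (contract G x y) (A.erase y) x).card + 2 + (nbrsIn G (nbrsIn G A x) y).card := by
  have hsub : nbrsIn G A x ∪ nbrsIn G A y ⊆
      insert x (insert y (nbrsIn (contract G x y) (A.erase y) x)) := by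
    intro u hu
    simp only [Finset.mem_union, Finset.mem_insert, mem_nbrsIn, Finset.mem_erase, contract]
      at hu ⊢
    have := hxy.ne
    grind
  have hcard := Finset.card_le_card hsub
  have hx := Finset.card_insert_le x (insert y (nbrsIn (contract G x y) (A.erase y) x))
  have hy := Finset.card_insert_le y (nbrsIn (contract G x y) (A.erase y) x)
  have hadd := Finset.card_union_add_card_inter (nbrsIn G A x) (nbrsIn G A y)
  rw [nbrsIn_nbrsIn]
  omega

theorem card_nbrsIn_le_of_not_adj [DecidableEq V] (hx : x ∈ A) (hxy : G.Adj x y) (hux : u ≠ x)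
    (huy : u ≠ y) (hu : ¬ (G.Adj x u ∧ G.Adj y u)) :
    (nbrsIn G A u).card ≤ (nbrsIn (contract G x y) (A.erase y) u).card := by
  refine Finset.card_le_card_of_injOn (fun w => if w = y then x else w) ?_ ?_
  · intro w hw
    simp only [Finset.mem_coe, mem_nbrsIn, Finset.mem_erase, contract] at hw ⊢
    have := hw.2.ne
    have := hxy.ne
    have := hw.2.symm
    grind
  · intro w hw w' hw' h
    simp only [Finset.mem_coe, mem_nbrsIn] at hw hw'
    have := hw.2.symm
    have := hw'.2.symm
    grind

theorem card_nbrsIn_le_add_one [DecidableEq V] (huy : u ≠ y) :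
    (nbrsIn G A u).card ≤ (nbrsIn (contract G x y) (A.erase y) u).card + 1 := by
  have hsub : nbrsIn G A u ⊆ insert y (nbrsIn (contract G x y) (A.erase y) u) := by
    intro w hw
    simp only [mem_nbrsIn, Finset.mem_insert, Finset.mem_erase, contract] at hw ⊢
    have := hw.2.ne
    grind
  exact (Finset.card_le_card hsub).trans (Finset.card_insert_le _ _)

theorem sum_card_nbrsIn_le_contract [DecidableEq V] (hx : x ∈ A) (hy : y ∈ A) (hxy : G.Adj x y) :
    ∑ u ∈ A, (nbrsIn G A u).card ≤
      ∑ u ∈ A.erase y, (nbrsIn (contract G x y) (A.erase y) u).card + 2 +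
        2 * (nbrsIn G (nbrsIn G A x) y).card := by
  classical
  set B := (A.erase y).erase x with hB
  have hxy' : x ∈ A.erase y := Finset.mem_erase.2 ⟨hxy.ne, hx⟩
  have hcommon : ∑ u ∈ B, (if G.Adj x u ∧ G.Adj y u then 1 else 0) ≤
      (nbrsIn G (nbrsIn G A x) y).card := by
    rw [Finset.sum_boole, Nat.cast_id]
    refine Finset.card_le_card fun u hu => ?_
    simp only [B, Finset.mem_filter, Finset.mem_erase, mem_nbrsIn] at hu ⊢
    tauto
  have hrest : ∑ u ∈ B, (nbrsIn G A u).card ≤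
      ∑ u ∈ B, (nbrsIn (contract G x y) (A.erase y) u).card +
        ∑ u ∈ B, (if G.Adj x u ∧ G.Adj y u then 1 else 0) := by
    rw [← Finset.sum_add_distrib]
    refine Finset.sum_le_sum fun u hu => ?_
    simp only [B, Finset.mem_erase] at hu
    split_ifs with h
    · exact card_nbrsIn_le_add_one hu.2.1
    · exact card_nbrsIn_le_of_not_adj hx hxy hu.1 hu.2.1 h
  rw [← Finset.add_sum_erase A _ hy, ← Finset.add_sum_erase _ _ hxy',
    ← Finset.add_sum_erase (A.erase y) _ hxy', ← hB]
  have := card_nbrsIn_add_card_nbrsIn_le (A := A) hxy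
  omega

theorem IsCliqueModel.exists_of_contract {m : ℕ} {ρ : Fin m → Set V} [DecidableEq V]
    (h : IsCliqueModel (contract G x y) (A.erase y : Finset V) ρ)
    (hx : x ∈ A) (hy : y ∈ A) (hxy : G.Adj x y) :
    ∃ ρ' : Fin m → Set V, IsCliqueModel G A ρ' := by
  refine ⟨_, h.biUnion (fun u => if u = x then {x, y} else {u}) ?_ ?_ ?_ ?_ ?_⟩
  · intro u hu w hw
    have := Finset.mem_erase.1 hu
    split_ifs at hw <;> grind
  · intro u _
    split_ifs <;> grind
  · intro u _
    split_ifs with h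
    · refine .of_center x ?_
      rintro a (rfl | rfl)
      · exact .refl
      · exact .of_adj hxy.symm (by simp) (by simp)
    · exact .singleton G u
  · intro u hu w hw huw
    have := Finset.mem_erase.1 hu
    have := Finset.mem_erase.1 hw
    rw [Set.disjoint_left]
    intro z
    split_ifs <;> grind
  · rintro u - w - ⟨huw, huy, hwy, huw' | ⟨rfl, hyw⟩ | ⟨rfl, hyu⟩⟩
    · exact ⟨u, by split_ifs <;> simp_all, w, by split_ifs <;> simp_all, huw'⟩
    · exact ⟨y, by simp, w, by simp [huw.symm], hyw⟩
    · exact ⟨u, by simp [huw], y, by simp, hyu.symm⟩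

/- Contracting an edge with fewer than `2 ^ m` common neighbors keeps the density; if there is no
such edge, some neighborhood has density `2 ^ m`. -/
theorem exists_isCliqueModel_of_dense (m : ℕ) : ∀ (G : SimpleGraph V) (A : Finset V), A.Nonempty →
    2 ^ m * A.card ≤ ∑ u ∈ A, (nbrsIn G A u).card → ∃ ρ : Fin m → Set V, IsCliqueModel G A ρ := by
  classical
  induction m with
  | zero => exact fun G A _ _ => ⟨fun i => i.elim0, by constructor <;> exact fun i => i.elim0⟩
  | succ m ihm =>
    intro G A
    induction hn : A.card using Nat.strong_induction_on generalizing G A with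
    | _ n ihn =>
    subst hn
    intro hA hdense
    by_cases hsparse : ∃ x ∈ A, ∃ y ∈ nbrsIn G A x, (nbrsIn G (nbrsIn G A x) y).card < 2 ^ m
    · obtain ⟨x, hx, y, hy, hcard⟩ := hsparse
      obtain ⟨hy, hxy⟩ := mem_nbrsIn.1 hy
      have hsum := sum_card_nbrsIn_le_contract hx hy hxy
      have herase := Finset.card_erase_add_one hy
      obtain ⟨ρ, hρ⟩ := ihn (A.erase y).card (by omega) (contract G x y) (A.erase y) rfl
        ⟨x, Finset.mem_erase.2 ⟨hxy.ne, hx⟩⟩ (by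
          rw [← herase, mul_add_one, pow_succ'] at hdense
          rw [pow_succ']
          omega)
      exact hρ.exists_of_contract hx hy hxy
    · push Not at hsparse
      have hpos : ∑ u ∈ A, (nbrsIn G A u).card ≠ 0 := by
        have := Nat.mul_pos (pow_pos two_pos (m + 1)) hA.card_pos
        omega
      obtain ⟨v, hv, hvd⟩ := Finset.exists_ne_zero_of_sum_ne_zero hpos
      obtain ⟨ρ, hρ⟩ := ihm G (nbrsIn G A v) (Finset.card_ne_zero.1 hvd) <| by
        rw [mul_comm, ← smul_eq_mul, ← Finset.sum_const]
        refine Finset.sum_le_sum fun u hu => (hsparse v hv u hu)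
      rw [coe_nbrsIn] at hρ
      exact ⟨_, hρ.cons hv⟩

end Density

/-! ### Bipartite clique models and degenerate list coloring -/

/-- The spanning subgraph of `G` formed by its edges with differently colored ends. -/
def bichromatic (G : SimpleGraph V) (χ : V → ZMod 2) : SimpleGraph V where
  Adj u v := G.Adj u v ∧ χ u ≠ χ v
  symm := ⟨fun _ _ h => ⟨h.1.symm, h.2.symm⟩⟩
  loopless := ⟨fun _ h => h.2 rfl⟩

/-- Some bipartite subgraph of `G` has a complete minor with `M` branch sets inside `A`. -/
def HasBipartiteCliqueModel (G : SimpleGraph V) (A : Set V) (M : ℕ) : Prop :=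
  ∃ (χ : V → ZMod 2) (ρ : Fin M → Set V), IsCliqueModel (bichromatic G χ) A ρ

/-- Two distinct vertices are adjacent if they have a common neighbor in `D`. -/
def commonNbrGraph (G : SimpleGraph V) (D : Set V) : SimpleGraph V where
  Adj u w := u ≠ w ∧ ∃ d ∈ D, G.Adj u d ∧ G.Adj d w
  symm := ⟨fun _ _ ⟨h, d, hd, hu, hw⟩ => ⟨h.symm, d, hd, hw.symm, hu.symm⟩⟩
  loopless := ⟨fun _ h => h.1 rfl⟩

section MaxCut

variable {G : SimpleGraph V} {R : Finset V} {χ : V → ZMod 2} {x : V}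

theorem sum_card_nbrsIn_insert [DecidableEq V] (hx : x ∉ R) (G : SimpleGraph V) :
    ∑ u ∈ insert x R, (nbrsIn G (insert x R) u).card =
      ∑ u ∈ R, (nbrsIn G R u).card + 2 * (nbrsIn G R x).card := by
  classical
  have hself : nbrsIn G (insert x R) x = nbrsIn G R x := by
    simp [nbrsIn, Finset.filter_insert]
  have hrest : ∀ u ∈ R, (nbrsIn G (insert x R) u).card =
      (nbrsIn G R u).card + if G.Adj x u then 1 else 0 := by
    intro u _
    unfold nbrsIn
    rw [Finset.filter_insert]
    by_cases h : G.Adj u x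
    · rw [if_pos h, if_pos h.symm, Finset.card_insert_of_notMem (by simp [hx])]
    · rw [if_neg h, if_neg (fun h' => h h'.symm), add_zero]
  rw [Finset.sum_insert hx, hself, Finset.sum_congr rfl hrest, Finset.sum_add_distrib,
    Finset.sum_boole, Nat.cast_id, nbrsIn]
  ring

theorem nbrsIn_bichromatic_update [DecidableEq V] (hx : x ∉ R) (c : ZMod 2) {u : V} (hu : u ∈ R) :
    nbrsIn (bichromatic G (Function.update χ x c)) R u = nbrsIn (bichromatic G χ) R u := by
  ext v
  simp only [mem_nbrsIn, bichromatic]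
  refine and_congr_right fun hv => ?_
  rw [Function.update_of_ne (ne_of_mem_of_not_mem hu hx),
    Function.update_of_ne (ne_of_mem_of_not_mem hv hx)]

theorem card_nbrsIn_eq_add_bichromatic [DecidableEq V] (hx : x ∉ R) :
    (nbrsIn G R x).card = (nbrsIn (bichromatic G (Function.update χ x 0)) R x).card +
      (nbrsIn (bichromatic G (Function.update χ x 1)) R x).card := by
  have hfilter (c : ZMod 2) : nbrsIn (bichromatic G (Function.update χ x (c + 1))) R x =
      (nbrsIn G R x).filter fun v => χ v = c := by
    ext v
    simp only [mem_nbrsIn, bichromatic, Function.update_self, Finset.mem_filter, and_assoc]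
    refine and_congr_right fun hv => and_congr_right fun _ => ?_
    rw [Function.update_of_ne (ne_of_mem_of_not_mem hv hx)]
    exact ⟨fun h => by have := eq_add_one_of_ne h.symm; grind, fun h => by simp [h]⟩
  have hnot : ((nbrsIn G R x).filter fun v => χ v = 0) =
      (nbrsIn G R x).filter fun v => ¬ χ v = 1 := by
    refine Finset.filter_congr fun v _ => ?_
    rcases eq_zero_or_eq_one (χ v) with h | h <;> simp [h]
  have h0 := hfilter 1
  have h1 := hfilter 0
  rw [show (1 : ZMod 2) + 1 = 0 from rfl] at h0
  rw [zero_add] at h1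
  rw [h0, h1, hnot, Finset.card_filter_add_card_filter_not]

theorem exists_bichromatic_dense (G : SimpleGraph V) (R : Finset V) : ∃ χ : V → ZMod 2,
    ∑ u ∈ R, (nbrsIn G R u).card ≤ 2 * ∑ u ∈ R, (nbrsIn (bichromatic G χ) R u).card := by
  classical
  induction R using Finset.induction_on with
  | empty => exact ⟨0, by simp⟩
  | insert x R hx ih =>
    obtain ⟨χ, hχ⟩ := ih
    have hsplit := card_nbrsIn_eq_add_bichromatic (G := G) (χ := χ) hx
    have hupdate (c : ZMod 2) : ∑ u ∈ R, (nbrsIn (bichromatic G (Function.update χ x c)) R u).card =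
        ∑ u ∈ R, (nbrsIn (bichromatic G χ) R u).card :=
      Finset.sum_congr rfl fun u hu => by rw [nbrsIn_bichromatic_update hx c hu]
    rcases le_total (nbrsIn (bichromatic G (Function.update χ x 1)) R x).card
      (nbrsIn (bichromatic G (Function.update χ x 0)) R x).card with h | h
    · refine ⟨Function.update χ x 0, ?_⟩
      rw [sum_card_nbrsIn_insert hx, sum_card_nbrsIn_insert hx, hupdate]
      omega
    · refine ⟨Function.update χ x 1, ?_⟩
      rw [sum_card_nbrsIn_insert hx, sum_card_nbrsIn_insert hx, hupdate]
      omega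

end MaxCut

section Sparse

variable {G Γ : SimpleGraph V} {A R : Finset V} {D : Set V} {M q : ℕ}

theorem HasBipartiteCliqueModel.mono {A A' : Set V} (h : HasBipartiteCliqueModel G A M)
    (hA : A ⊆ A') : HasBipartiteCliqueModel G A' M :=
  have ⟨χ, ρ, hρ⟩ := h
  ⟨χ, ρ, hρ.mono hA⟩

theorem hasBipartiteCliqueModel_of_dense (hR : R.Nonempty)
    (h : 2 * 2 ^ M * R.card ≤ ∑ u ∈ R, (nbrsIn G R u).card) : HasBipartiteCliqueModel G R M := by
  obtain ⟨χ, hχ⟩ := exists_bichromatic_dense G R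
  have hdense : 2 ^ M * R.card ≤ ∑ u ∈ R, (nbrsIn (bichromatic G χ) R u).card := by
    rw [mul_assoc] at h
    omega
  exact ⟨χ, exists_isCliqueModel_of_dense M _ R hR hdense⟩

/- The subdivision vertices are absorbed into the branch sets of the first of their two ends; all
edges used run between `R` and its complement. -/
theorem IsCliqueModel.hasBipartiteCliqueModel_of_subdivision {ρ : Fin M → Set V} {e : V → V × V}
    (hρ : IsCliqueModel Γ R ρ) (hRA : R ⊆ A) (hD : D ⊆ A \ R)
    (he : ∀ d ∈ D, G.Adj (e d).1 d ∧ G.Adj d (e d).2)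
    (hΓ : ∀ u w, Γ.Adj u w → ∃ d ∈ D, e d = (u, w) ∨ e d = (w, u)) :
    HasBipartiteCliqueModel G A M := by
  classical
  let χ : V → ZMod 2 := fun v => if v ∈ R then 1 else 0
  have hχ {u d : V} (hu : u ∈ R) (hd : d ∈ D) (h : G.Adj u d) : (bichromatic G χ).Adj u d :=
    ⟨h, by simp [χ, hu, show d ∉ R from (hD hd).2]⟩
  refine ⟨χ, _, hρ.biUnion (fun u => insert u {d | d ∈ D ∧ (e d).1 = u}) ?_ ?_ ?_ ?_ ?_⟩
  · rintro u hu w (rfl | ⟨hw, -⟩)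
    exacts [hRA hu, (hD hw).1]
  · exact fun u _ => .inl rfl
  · refine fun u hu => .of_center u ?_
    rintro a (rfl | ⟨ha, rfl⟩)
    · exact .refl
    · exact .of_adj (hχ hu ha (he a ha).1).symm (.inr ⟨ha, rfl⟩) (.inl rfl)
  · refine fun u hu w hw huw => Set.disjoint_left.2 ?_
    rintro a (rfl | ⟨ha, rfl⟩) (rfl | ⟨ha', hw'⟩)
    exacts [huw rfl, (hD ha').2 hu, (hD ha).2 hw, huw hw']
  · intro u hu w hw huw
    obtain ⟨d, hd, h | h⟩ := hΓ u w huw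
    · have hdw := (he d hd).2
      rw [h] at hdw
      exact ⟨d, .inr ⟨hd, by rw [h]⟩, w, .inl rfl, (hχ hw hd hdw.symm).symm⟩
    · have hdu := (he d hd).2
      rw [h] at hdu
      exact ⟨u, .inl rfl, d, .inr ⟨hd, by rw [h]⟩, hχ hu hd hdu.symm⟩

open scoped Classical in
theorem sum_card_nbrsIn (G : SimpleGraph V) (R : Finset V) :
    ∑ u ∈ R, (nbrsIn G R u).card = ((R ×ˢ R).filter fun p => G.Adj p.1 p.2).card := by
  simp only [nbrsIn, Finset.card_filter, Finset.sum_product]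

theorem exists_distinct_connectors {D : Finset V} (hD : ∀ d ∈ D, (nbrsIn G R d).card ≤ q) :
    ∃ D' ⊆ D, ∃ e : V → V × V,
      (∀ d ∈ D', e d ∈ R ×ˢ R ∧ (e d).1 ≠ (e d).2 ∧ G.Adj (e d).1 d ∧ G.Adj d (e d).2) ∧
      Set.InjOn e D' ∧ ∑ u ∈ R, (nbrsIn (commonNbrGraph G D) R u).card ≤ q * q * D'.card := by
  classical
  let P := (R ×ˢ R).filter fun p => (commonNbrGraph G D).Adj p.1 p.2
  have hconn (p : V × V) : ∃ d, p ∈ P → d ∈ D ∧ G.Adj p.1 d ∧ G.Adj d p.2 := by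
    by_cases hp : p ∈ P
    · obtain ⟨-, -, d, hd⟩ := Finset.mem_filter.1 hp
      exact ⟨d, fun _ => hd⟩
    · exact ⟨p.1, fun h => absurd h hp⟩
  choose l hl using hconn
  have hcard : P.card ≤ q * q * (P.image l).card := by
    refine Finset.card_le_mul_card_image P _ fun d hd => ?_
    obtain ⟨p, hp, rfl⟩ := Finset.mem_image.1 hd
    have hfiber : P.filter (fun p' => l p' = l p) ⊆ nbrsIn G R (l p) ×ˢ nbrsIn G R (l p) := by
      intro p' hp'
      obtain ⟨hp', heq⟩ := Finset.mem_filter.1 hp'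
      have ⟨_, h1, h2⟩ := heq ▸ hl p' hp'
      have hR := Finset.mem_product.1 (Finset.mem_filter.1 hp').1
      simp [hR, h1.symm, h2]
    calc _ ≤ _ := Finset.card_le_card hfiber
      _ = _ := Finset.card_product _ _
      _ ≤ q * q := Nat.mul_le_mul (hD _ (hl p hp).1) (hD _ (hl p hp).1)
  have hinv (d : V) : ∃ p, d ∈ P.image l → p ∈ P ∧ l p = d := by
    by_cases hd : d ∈ P.image l
    · exact (Finset.mem_image.1 hd).imp fun p hp _ => hp
    · exact ⟨(d, d), fun h => absurd h hd⟩
  choose e he using hinv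
  refine ⟨P.image l, Finset.image_subset_iff.2 fun p hp => (hl p hp).1, e, fun d hd => ?_,
    fun d hd d' hd' h => ?_, (sum_card_nbrsIn _ R).trans_le hcard⟩
  · obtain ⟨hp, hlp⟩ := he d hd
    obtain ⟨hR, hne, -⟩ := Finset.mem_filter.1 hp
    exact ⟨hR, hne, by simpa only [hlp] using (hl _ hp).2⟩
  · rw [← (he d hd).2, ← (he d' hd').2, h]

theorem hasBipartiteCliqueModel_of_commonNbrGraph_dense [DecidableEq V] (hR : R.Nonempty)
    (hRA : R ⊆ A) (hq : ∀ d ∈ A \ R, (nbrsIn G R d).card ≤ q) (hpos : 0 < q)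
    (h : q * q * (2 ^ M * R.card) ≤
      ∑ u ∈ R, (nbrsIn (commonNbrGraph G (A \ R : Finset V)) R u).card) :
    HasBipartiteCliqueModel G A M := by
  classical
  obtain ⟨D, hD, e, he, hinj, hcard⟩ := exists_distinct_connectors hq
  let Γ : SimpleGraph V := .fromRel fun u w => ∃ d ∈ D, e d = (u, w)
  have hΓ : D.card ≤ ∑ u ∈ R, (nbrsIn Γ R u).card := by
    rw [sum_card_nbrsIn]
    refine Finset.card_le_card_of_injOn e (fun d hd => ?_) hinj
    obtain ⟨hR, hne, -⟩ := he d hd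
    have hadj : Γ.Adj (e d).1 (e d).2 := ⟨hne, .inl ⟨d, hd, rfl⟩⟩
    simp [Finset.mem_product.1 hR, hadj]
  have hdense := Nat.le_of_mul_le_mul_left (h.trans hcard) (Nat.mul_pos hpos hpos)
  obtain ⟨ρ, hρ⟩ := exists_isCliqueModel_of_dense M Γ R hR (hdense.trans hΓ)
  refine hρ.hasBipartiteCliqueModel_of_subdivision (D := D) (e := e) hRA ?_
    (fun d hd => (he d hd).2.2) ?_
  · simpa using Finset.coe_subset.2 hD
  · rintro u w ⟨-, ⟨d, hd, h⟩ | ⟨d, hd, h⟩⟩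
    exacts [⟨d, hd, .inl h⟩, ⟨d, hd, .inr h⟩]

/-- The degree up to which vertices count as sparse in a graph without bipartite `M`-clique
models. -/
def sparseDegree (M : ℕ) : ℕ := 4 * 2 ^ M

/-- The analogue of `sparseDegree` for `commonNbrGraph`. -/
def sparseCommonDegree (M : ℕ) : ℕ := 2 * (sparseDegree M * sparseDegree M * 2 ^ M)

theorem mul_card_filter_le_sum {α : Type*} (s : Finset α) (f : α → ℕ) (n : ℕ) :
    n * (s.filter fun a => n < f a).card ≤ ∑ a ∈ s, f a :=
  calc n * (s.filter fun a => n < f a).card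
      ≤ ∑ a ∈ s with n < f a, f a := by
        rw [mul_comm, ← smul_eq_mul]
        exact Finset.card_nsmul_le_sum _ _ _ fun a ha => (Finset.mem_filter.1 ha).2.le
    _ ≤ ∑ a ∈ s, f a := Finset.sum_le_sum_of_subset (Finset.filter_subset _ _)

theorem exists_sparse_vertex [DecidableEq V] (hno : ¬ HasBipartiteCliqueModel G A M)
    (hR : R.Nonempty) (hRA : R ⊆ A)
    (hq : ∀ d ∈ A \ R, (nbrsIn G R d).card ≤ sparseDegree M) :
    ∃ u ∈ R, (nbrsIn G R u).card ≤ sparseDegree M ∧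
      (nbrsIn (commonNbrGraph G (A \ R : Finset V)) R u).card ≤ sparseCommonDegree M := by
  by_contra! hcon
  have h1 := mul_card_filter_le_sum R (fun u => (nbrsIn G R u).card) (sparseDegree M)
  have h2 := mul_card_filter_le_sum R
    (fun u => (nbrsIn (commonNbrGraph G (A \ R : Finset V)) R u).card) (sparseCommonDegree M)
  set R₁ := R.filter fun u => sparseDegree M < (nbrsIn G R u).card
  set R₂ := R.filter fun u => sparseCommonDegree M <
    (nbrsIn (commonNbrGraph G (A \ R : Finset V)) R u).card
  have hcover : R ⊆ R₁ ∪ R₂ := by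
    intro u hu
    simp only [R₁, R₂, Finset.mem_union, Finset.mem_filter, hu, true_and]
    exact (le_or_gt _ _).symm.imp_right (hcon u hu)
  have hcard := (Finset.card_le_card hcover).trans (Finset.card_union_le _ _)
  rcases le_or_gt R.card (2 * R₁.card) with h | h
  · refine hno ((hasBipartiteCliqueModel_of_dense hR (h1.trans' ?_)).mono (by simpa using hRA))
    unfold sparseDegree
    nlinarith [Nat.zero_le (2 ^ M)]
  · refine hno (hasBipartiteCliqueModel_of_commonNbrGraph_dense hR hRA hq
      (by unfold sparseDegree; positivity) (h2.trans' ?_))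
    unfold sparseCommonDegree
    have : R.card ≤ 2 * R₂.card := by omega
    nlinarith [Nat.zero_le (sparseDegree M * sparseDegree M * 2 ^ M)]

end Sparse

/-- The vertex `w` is a neighbor of `v` in `R` whose color appears on no other neighbor of `v`
in `R`. -/
structure IsUniqueNbr (G : SimpleGraph V) (R : Finset V) (φ : V → ℕ) (v w : V) : Prop where
  mem : w ∈ R
  adj : G.Adj v w
  eq_of_color_eq : ∀ w' ∈ R, G.Adj v w' → φ w' = φ w → w' = w

theorem exists_mem_forall_ne {α β : Type*} {l : Finset β} {s t : Finset α} {f g : α → β}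
    (h : 2 * s.card + t.card < l.card) :
    ∃ c ∈ l, (∀ a ∈ s, f a ≠ c) ∧ (∀ a ∈ s, g a ≠ c) ∧ ∀ a ∈ t, f a ≠ c := by
  classical
  have hcard : (s.image f ∪ s.image g ∪ t.image f).card < l.card := by
    have h1 := Finset.card_union_le (s.image f ∪ s.image g) (t.image f)
    have h2 := Finset.card_union_le (s.image f) (s.image g)
    have h3 := s.card_image_le (f := f)
    have h4 := s.card_image_le (f := g)
    have h5 := t.card_image_le (f := f)
    omega
  obtain ⟨c, hc, hcF⟩ := Finset.exists_mem_notMem_of_card_lt_card hcard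
  simp only [Finset.mem_union, Finset.mem_image, not_or, not_exists, not_and] at hcF
  exact ⟨c, hc, hcF.1.1, hcF.1.2, hcF.2⟩

section Greedy

variable {G : SimpleGraph V} {A R : Finset V} {φ : V → ℕ} {u v w : V} {c M : ℕ}

theorem IsUniqueNbr.update_self [DecidableEq V] (hu : u ∈ R) (hvu : G.Adj v u)
    (hc : ∀ w ∈ R.erase u, G.Adj v w → φ w ≠ c) :
    IsUniqueNbr G R (Function.update φ u c) v u := by
  refine ⟨hu, hvu, fun w hw hvw h => ?_⟩
  by_contra hne
  rw [Function.update_of_ne hne, Function.update_self] at h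
  exact hc w (Finset.mem_erase.2 ⟨hne, hw⟩) hvw h

theorem IsUniqueNbr.update [DecidableEq V] (h : IsUniqueNbr G (R.erase u) φ v w)
    (hc : G.Adj v u → φ w ≠ c) :
    IsUniqueNbr G R (Function.update φ u c) v w := by
  obtain ⟨hwu, hw⟩ := Finset.mem_erase.1 h.mem
  refine ⟨hw, h.adj, fun w' hw' hvw' heq => ?_⟩
  rw [Function.update_of_ne hwu] at heq
  by_cases hw'u : w' = u
  · subst hw'u
    rw [Function.update_self] at heq
    exact absurd heq.symm (hc hvw')
  · rw [Function.update_of_ne hw'u] at heq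
    exact h.eq_of_color_eq w' (Finset.mem_erase.2 ⟨hw'u, hw'⟩) hvw' heq

/- The new color avoids the colors seen by `u`, the witnesses of the neighbors of `u` in `R`, and
the colors of the vertices sharing with `u` a neighbor in `A \ R`, whose witness is then `u`. -/
theorem exists_isUniqueNbr_update [DecidableEq V] {wit : V → V} (hu : u ∈ R)
    (hwit : ∀ v ∈ A, (nbrsIn G (R.erase u) v).Nonempty → IsUniqueNbr G (R.erase u) φ v (wit v))
    (hcwit : ∀ v ∈ nbrsIn G R u, φ (wit v) ≠ c)
    (hccommon : ∀ w ∈ nbrsIn (commonNbrGraph G (A \ R : Finset V)) R u, φ w ≠ c)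
    (hv : v ∈ A) (hne : (nbrsIn G R v).Nonempty) :
    ∃ w, IsUniqueNbr G R (Function.update φ u c) v w := by
  by_cases hvu : G.Adj v u
  · by_cases hvR : v ∈ R
    · by_cases hnbr : (nbrsIn G (R.erase u) v).Nonempty
      · exact ⟨_, (hwit v hv hnbr).update fun _ => hcwit v (by simp [hvR, hvu.symm])⟩
      · exact ⟨u, .update_self hu hvu fun w hw hvw => absurd ⟨w, mem_nbrsIn.2 ⟨hw, hvw⟩⟩ hnbr⟩
    · refine ⟨u, .update_self hu hvu fun w hw hvw => hccommon w ?_⟩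
      obtain ⟨hwu, hw⟩ := Finset.mem_erase.1 hw
      exact mem_nbrsIn.2 ⟨hw, hwu.symm, v, by simp [hv, hvR], hvu.symm, hvw⟩
  · obtain ⟨w, hw⟩ := hne
    obtain ⟨hw, hvw⟩ := mem_nbrsIn.1 hw
    have hnbr : (nbrsIn G (R.erase u) v).Nonempty :=
      ⟨w, mem_nbrsIn.2 ⟨Finset.mem_erase.2 ⟨fun h => hvu (h ▸ hvw), hw⟩, hvw⟩⟩
    exact ⟨_, (hwit v hv hnbr).update fun h => absurd h hvu⟩

theorem update_ne_update_of_adj [DecidableEq V]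
    (hφ : ∀ a ∈ R.erase u, ∀ b ∈ R.erase u, G.Adj a b → φ a ≠ φ b)
    (hc : ∀ v ∈ nbrsIn G R u, φ v ≠ c) (hv : v ∈ R) (hw : w ∈ R) (hvw : G.Adj v w) :
    Function.update φ u c v ≠ Function.update φ u c w := by
  rcases eq_or_ne v u with rfl | hvu
  · rw [Function.update_self, Function.update_of_ne hvw.ne']
    exact (hc w (mem_nbrsIn.2 ⟨hw, hvw⟩)).symm
  rw [Function.update_of_ne hvu]
  rcases eq_or_ne w u with rfl | hwu
  · rw [Function.update_self]
    exact hc v (mem_nbrsIn.2 ⟨hv, hvw.symm⟩)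
  · rw [Function.update_of_ne hwu]
    exact hφ v (Finset.mem_erase.2 ⟨hvu, hv⟩) w (Finset.mem_erase.2 ⟨hwu, hw⟩) hvw

theorem exists_coloring_isUniqueNbr (hno : ¬ HasBipartiteCliqueModel G A M) {L : V → Finset ℕ}
    (hL : ∀ v ∈ A, 2 * sparseDegree M + sparseCommonDegree M < (L v).card) :
    ∃ φ : V → ℕ, (∀ v ∈ A, φ v ∈ L v) ∧ (∀ u ∈ A, ∀ v ∈ A, G.Adj u v → φ u ≠ φ v) ∧
      ∀ v ∈ A, (nbrsIn G A v).Nonempty → ∃ w, IsUniqueNbr G A φ v w := by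
  classical
  suffices H : ∀ R ⊆ A, (∀ d ∈ A \ R, (nbrsIn G R d).card ≤ sparseDegree M) →
      ∃ φ : V → ℕ, (∀ v ∈ R, φ v ∈ L v) ∧ (∀ u ∈ R, ∀ v ∈ R, G.Adj u v → φ u ≠ φ v) ∧
        ∀ v ∈ A, (nbrsIn G R v).Nonempty → ∃ w, IsUniqueNbr G R φ v w from
    H A subset_rfl (by simp)
  intro R
  induction R using Finset.strongInduction with
  | H R ih =>
  intro hRA hq
  rcases R.eq_empty_or_nonempty with rfl | hR
  · exact ⟨0, by simp, by simp, fun v _ ⟨w, hw⟩ => by simp at hw⟩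
  obtain ⟨u, hu, hu₁, hu₂⟩ := exists_sparse_vertex hno hR hRA hq
  have hsub := Finset.erase_subset u R
  obtain ⟨φ, hφL, hφ, hφu⟩ := ih (R.erase u) (Finset.erase_ssubset hu) (hsub.trans hRA) <| by
    intro d hd
    refine (Finset.card_le_card (nbrsIn_mono hsub d)).trans ?_
    by_cases hdu : d = u
    · exact hdu ▸ hu₁
    · exact hq d (by simp_all)
  choose! wit hwit using hφu
  obtain ⟨c, hcL, hc, hcwit, hccommon⟩ :
      ∃ c ∈ L u, (∀ v ∈ nbrsIn G R u, φ v ≠ c) ∧ (∀ v ∈ nbrsIn G R u, φ (wit v) ≠ c) ∧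
        ∀ w ∈ nbrsIn (commonNbrGraph G (A \ R : Finset V)) R u, φ w ≠ c :=
    exists_mem_forall_ne (by have := hL u (hRA hu); omega)
  refine ⟨Function.update φ u c, fun v hv => ?_,
    fun _ ha _ hb hab => update_ne_update_of_adj hφ hc ha hb hab,
    fun _ hv => exists_isUniqueNbr_update hu hwit hcwit hccommon hv⟩
  by_cases h : v = u
  · simpa [h] using hcL
  · rw [Function.update_of_ne h]
    exact hφL v (Finset.mem_erase.2 ⟨h, hv⟩)

end Greedy

/-! ### Odd clique models -/

/-- The sets `Q i` are the branch sets of an odd complete minor: each is connected through edges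
that are bichromatic for `ψ`, and any two are joined by a monochromatic edge. -/
structure IsOddCliqueModel (G : SimpleGraph V) (ψ : V → ZMod 2) (Q : W → Set V) : Prop where
  nonempty : ∀ i, (Q i).Nonempty
  connectedIn : ∀ i, ConnectedIn (bichromatic G ψ) (Q i)
  disjoint : ∀ ⦃i j⦄, i ≠ j → Disjoint (Q i) (Q j)
  exists_adj : ∀ ⦃i j⦄, i ≠ j → ∃ x ∈ Q i, ∃ y ∈ Q j, G.Adj x y ∧ ψ x = ψ y

theorem crossGraph_setOf_eq_one (G : SimpleGraph V) (ψ : V → ZMod 2) :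
    crossGraph G {v | ψ v = 1} = bichromatic G ψ := by
  ext x y
  have hx := eq_zero_or_eq_one (ψ x)
  have hy := eq_zero_or_eq_one (ψ y)
  simp only [crossGraph, bichromatic, fromRel_adj, Set.mem_ofPred_eq]
  constructor
  · rintro ⟨-, ⟨h, hx, hy⟩ | ⟨h, hx, hy⟩⟩
    exacts [⟨h, fun e => hy (e ▸ hx)⟩, ⟨h.symm, fun e => hy (e ▸ hx)⟩]
  · rintro ⟨h, hne⟩
    refine ⟨h.ne, ?_⟩
    rcases hx with hx | hx
    · exact .inr ⟨h.symm, hy.resolve_left fun e => hne (hx.trans e.symm), by simp [hx]⟩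
    · exact .inl ⟨h, hx, fun e => hne (hx.trans e.symm)⟩

theorem nonempty_iso_oddContract {G : SimpleGraph V} {A : Set V} {H : SimpleGraph W} {idx : V → W}
    (hsurj : Function.Surjective idx)
    (hreach : ∀ x y, (crossGraph G A).Reachable x y ↔ idx x = idx y)
    (hadj : ∀ i j, H.Adj i j ↔ i ≠ j ∧ ∃ x y, idx x = i ∧ idx y = j ∧ G.Adj x y) :
    Nonempty (H ≃g oddContract G A) := by
  let f : (crossGraph G A).ConnectedComponent → W :=
    Quot.lift idx fun x y h => (hreach x y).1 h
  have hf (x : V) (c : (crossGraph G A).ConnectedComponent) :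
      (crossGraph G A).connectedComponentMk x = c ↔ idx x = f c := by
    induction c using ConnectedComponent.ind with
    | h y => exact ConnectedComponent.eq.trans (hreach x y)
  have hbij : Function.Bijective f := by
    refine ⟨fun c d h => ?_, fun i => ?_⟩
    · induction c using ConnectedComponent.ind with
      | h x => exact (hf x d).2 h
    · obtain ⟨x, rfl⟩ := hsurj i
      exact ⟨(crossGraph G A).connectedComponentMk x, rfl⟩
  have hiso {c d : (crossGraph G A).ConnectedComponent} :
      H.Adj (f c) (f d) ↔ (oddContract G A).Adj c d := by
    simp only [oddContract, fromRel_adj, hf, hadj, hbij.1.ne_iff]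
    refine and_congr_right fun _ => ⟨.inl, ?_⟩
    rintro (h | ⟨x, y, hx, hy, h⟩)
    exacts [h, ⟨y, x, hy, hx, h.symm⟩]
  exact ⟨(⟨.ofBijective f hbij, hiso⟩ : oddContract G A ≃g H).symm⟩

namespace IsOddCliqueModel

variable {G : SimpleGraph V} {ψ : V → ZMod 2} {Q : W → Set V}

theorem eq_of_mem (h : IsOddCliqueModel G ψ Q) {i j : W} {x : V} (hi : x ∈ Q i) (hj : x ∈ Q j) :
    i = j :=
  by_contra fun hne => Set.disjoint_left.1 (h.disjoint hne) hi hj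

/-- The spanning subgraph of `⋃ i, Q i` that keeps the bichromatic edges within the branch sets
and the monochromatic edges between branch sets adjacent in `H`. Here `idx` assigns to each vertex
the index of its branch set. -/
def modelGraph (G : SimpleGraph V) (ψ : V → ZMod 2) (H : SimpleGraph W) {s : Set V}
    (idx : s → W) : SimpleGraph s where
  Adj x y := G.Adj x y ∧ (idx x = idx y ∧ ψ x ≠ ψ y ∨ H.Adj (idx x) (idx y) ∧ ψ x = ψ y)
  symm := ⟨fun _ _ ⟨h, h'⟩ =>
    ⟨h.symm, h'.imp (fun h => ⟨h.1.symm, h.2.symm⟩) fun h => ⟨h.1.symm, h.2.symm⟩⟩⟩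
  loopless := ⟨fun _ h => h.1.ne rfl⟩

theorem reachable_modelGraph_iff (h : IsOddCliqueModel G ψ Q) (H : SimpleGraph W)
    {idx : (⋃ i, Q i : Set V) → W} (hidx : ∀ x, x.1 ∈ Q (idx x)) (x y : (⋃ i, Q i : Set V)) :
    (bichromatic (modelGraph G ψ H idx) fun x => ψ x).Reachable x y ↔ idx x = idx y := by
  constructor
  · rintro ⟨p⟩
    induction p with
    | nil => rfl
    | cons hadj _ ih =>
      exact (hadj.1.2.resolve_right fun h' => hadj.2 h'.2).1.trans ih
  · intro hxy
    have hreach (b : V) (hb : ReachableIn (bichromatic G ψ) (Q (idx x)) x b)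
        (hmem : b ∈ ⋃ i, Q i) :
        (bichromatic (modelGraph G ψ H idx) fun x => ψ x).Reachable x ⟨b, hmem⟩ := by
      induction hb with
      | refl => exact .refl _
      | @tail b c _ hbc ih =>
        obtain ⟨⟨hadj, hne⟩, hb, hc⟩ := hbc
        have hb' := Set.mem_iUnion_of_mem _ hb
        have heq : idx ⟨b, hb'⟩ = idx ⟨c, hmem⟩ :=
          (h.eq_of_mem (hidx _) hb).trans (h.eq_of_mem hc (hidx ⟨c, hmem⟩))
        exact (ih hb').trans (Adj.reachable ⟨⟨hadj, .inl ⟨heq, hne⟩⟩, hne⟩)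
    exact hreach y (h.connectedIn _ _ (hidx x) _ (hxy ▸ hidx y)) y.2

theorem isOddMinor (h : IsOddCliqueModel G ψ Q) (H : SimpleGraph W) : IsOddMinor H G := by
  choose idx hidx using fun x : (⋃ i, Q i : Set V) => Set.mem_iUnion.1 x.2
  have idx_eq {x : V} {i : W} (hx : x ∈ Q i) : idx ⟨x, Set.mem_iUnion_of_mem i hx⟩ = i :=
    h.eq_of_mem (hidx ⟨x, _⟩) hx
  refine ⟨_, modelGraph G ψ H idx, fun _ _ => And.left, _, _,
    .step _ {x | ψ x.1 = 1} (.refl _), nonempty_iso_oddContract (idx := idx) ?_ ?_ ?_⟩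
  · intro i
    obtain ⟨x, hx⟩ := h.nonempty i
    exact ⟨_, idx_eq hx⟩
  · rw [crossGraph_setOf_eq_one _ fun x : (⋃ i, Q i : Set V) => ψ x]
    exact h.reachable_modelGraph_iff H hidx
  · intro i j
    constructor
    · intro hij
      obtain ⟨x, hx, y, hy, hxy, hψ⟩ := h.exists_adj hij.ne
      exact ⟨hij.ne, _, _, idx_eq hx, idx_eq hy, hxy,
        .inr ⟨by rwa [idx_eq hx, idx_eq hy], hψ⟩⟩
    · rintro ⟨hne, x, y, rfl, rfl, -, h | h⟩
      exacts [absurd h.1 hne, h.1]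

end IsOddCliqueModel

section Shrinking

variable {G L : SimpleGraph V} {s : Set V} {a b : V}

theorem ReachableIn.of_walk (p : G.Walk a b) (h : ∀ v ∈ p.support, v ∈ s) :
    ReachableIn G s a b := by
  induction p with
  | nil => exact .refl
  | cons hadj p ih =>
    rw [Walk.support_cons, List.forall_mem_cons] at h
    exact .head ⟨hadj, h.1, h.2 _ p.start_mem_support⟩ (ih h.2)

theorem ReachableIn.of_walk_fibers {π : V → V} (p : L.Walk a b)
    (hfiber : ∀ u ∈ p.support, ∀ x y, π x = u → π y = u → ReachableIn G s x y)
    (hadj : ∀ d ∈ p.darts, ∃ x y, π x = d.fst ∧ π y = d.snd ∧ ReachableIn G s x y) {x y : V}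
    (hx : π x = a) (hy : π y ∈ p.support) : ReachableIn G s x y := by
  induction p generalizing x with
  | nil => exact hfiber _ (by simp) x y hx (by simpa using hy)
  | @cons a c b h p ih =>
    rw [Walk.support_cons, List.forall_mem_cons] at hfiber
    rw [Walk.darts_cons, List.forall_mem_cons] at hadj
    rw [Walk.support_cons, List.mem_cons] at hy
    obtain hy | hy := hy
    · exact hfiber.1 x y hx hy
    · obtain ⟨x', y', hx', hy', h'⟩ := hadj.1
      exact ((hfiber.1 x x' hx hx').trans h').trans (ih hfiber.2 hadj.2 hy' hy)

theorem exists_potential (τ : Sym2 V → ZMod 2) (p : G.Walk a b) (hp : p.IsPath) :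
    ∃ g : V → ZMod 2, g a = 0 ∧ g b = weight τ p ∧ ∀ d ∈ p.darts, g d.fst + g d.snd = τ d.edge := by
  classical
  induction p with
  | nil => exact ⟨0, rfl, rfl, by simp⟩
  | @cons u v b h p ih =>
    rw [Walk.cons_isPath_iff] at hp
    obtain ⟨g, hv, hb, hg⟩ := ih hp.1
    have hne {w : V} (hw : w ∈ p.support) : w ≠ u := ne_of_mem_of_not_mem hw hp.2
    refine ⟨Function.update (fun w => g w + τ s(u, v)) u 0, by simp, ?_, ?_⟩
    · rw [Function.update_of_ne (hne p.end_mem_support), hb, weight_cons, add_comm]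
    · rw [Walk.darts_cons, List.forall_mem_cons]
      refine ⟨by simp [hne p.start_mem_support, hv, Dart.edge], fun d hd => ?_⟩
      rw [Function.update_of_ne (hne (p.dart_fst_mem_support_of_mem_darts hd)),
        Function.update_of_ne (hne (p.dart_snd_mem_support_of_mem_darts hd)), ← hg d hd]
      grind

variable {χ : V → ZMod 2} {π : V → V} {τ : Sym2 V → ZMod 2} {T : Set V} {P : W → OddPath L τ T}

theorem OddPath.fst_mem_verts (P : OddPath L τ T) : P.fst ∈ P.verts := P.walk.start_mem_support

theorem OddPath.snd_mem_verts (P : OddPath L τ T) : P.snd ∈ P.verts := P.walk.end_mem_support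

theorem OddPath.fst_ne_snd (P : OddPath L τ T) : P.fst ≠ P.snd := by
  obtain ⟨a, b, p, hp, -, -, hw⟩ := P
  rintro (rfl : a = b)
  rw [(Walk.isPath_iff_nil.1 hp).eq_nil, weight_nil] at hw
  exact zero_ne_one hw

theorem eq_of_mem_verts (hP : Pairwise fun i j => Disjoint (P i).verts (P j).verts) {i j : W}
    {v : V} (hi : v ∈ (P i).verts) (hj : v ∈ (P j).verts) : i = j :=
  by_contra fun hne => Set.disjoint_left.1 (hP hne) hi hj

theorem exists_common_potential (hP : Pairwise fun i j => Disjoint (P i).verts (P j).verts) :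
    ∃ g : V → ZMod 2, ∀ i, g (P i).fst = 0 ∧ g (P i).snd = 1 ∧
      ∀ d ∈ (P i).walk.darts, g d.fst + g d.snd = τ d.edge := by
  classical
  choose g hfst hsnd hg using fun i => exists_potential τ (P i).walk (P i).isPath
  let g' (v : V) : ZMod 2 := if h : ∃ i, v ∈ (P i).verts then g h.choose v else 0
  have hg' {i : W} {v : V} (hv : v ∈ (P i).verts) : g' v = g i v := by
    have h : ∃ i, v ∈ (P i).verts := ⟨i, hv⟩
    simp only [g']
    rw [dif_pos h, eq_of_mem_verts hP h.choose_spec hv]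
  refine ⟨g', fun i => ⟨?_, ?_, fun d hd => ?_⟩⟩
  · rw [hg' (P i).fst_mem_verts, hfst]
  · rw [hg' (P i).snd_mem_verts, hsnd, (P i).weight_eq]
  · rw [hg' ((P i).walk.dart_fst_mem_support_of_mem_darts hd),
      hg' ((P i).walk.dart_snd_mem_support_of_mem_darts hd), hg i d hd]

/-- Recoloring every fiber of `π` by the potential of the paths makes the preimages of the paths
connected, while edges between a first end and a last end turn monochromatic. -/
theorem exists_isOddCliqueModel_of_oddPaths
    (hP : Pairwise fun i j => Disjoint (P i).verts (P j).verts)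
    (hconn : ∀ u, ConnectedIn (bichromatic G χ) (π ⁻¹' {u}))
    (hL : ∀ u v, L.Adj u v →
      ∃ x y, π x = u ∧ π y = v ∧ G.Adj x y ∧ χ x + χ y + τ s(u, v) = 1)
    (hT : ∀ u ∈ T, ∀ v ∈ T, u ≠ v → ∃ x y, π x = u ∧ π y = v ∧ (bichromatic G χ).Adj x y) :
    ∃ (ψ : V → ZMod 2) (Q : W → Set V), IsOddCliqueModel G ψ Q := by
  obtain ⟨g, hg⟩ := exists_common_potential hP
  have hfiber (i : W) (u : V) (hu : u ∈ (P i).verts) (x y : V) (hx : π x = u) (hy : π y = u) :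
      ReachableIn (bichromatic G fun v => χ v + g (π v)) (π ⁻¹' (P i).verts) x y := by
    refine (hconn u x hx y hy).mono (Set.preimage_mono (Set.singleton_subset_iff.2 hu)) ?_
    rintro v rfl w (hw : π w = π v) ⟨hvw, hne⟩
    exact ⟨hvw, by simpa [hw] using hne⟩
  refine ⟨fun v => χ v + g (π v), fun i => π ⁻¹' (P i).verts, fun i => ?_, fun i x hx y hy => ?_,
    fun i j hij => (hP hij).preimage π, fun i j hij => ?_⟩
  · obtain ⟨x, -, hx, -⟩ := hT _ (P i).fst_mem _ (P i).snd_mem (P i).fst_ne_snd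
    exact ⟨x, Set.mem_preimage.2 (hx ▸ (P i).fst_mem_verts)⟩
  · have hdart (d : L.Dart) (hd : d ∈ (P i).walk.darts) : ∃ x y, π x = d.fst ∧ π y = d.snd ∧
        ReachableIn (bichromatic G fun v => χ v + g (π v)) (π ⁻¹' (P i).verts) x y := by
      obtain ⟨x, y, hx, hy, hxy, hχ⟩ := hL _ _ d.adj
      have hgd : g d.fst + g d.snd = τ s(d.fst, d.snd) := (hg i).2.2 d hd
      have hne : χ x + g (π x) ≠ χ y + g (π y) := by
        simp only [hx, hy]
        grind
      exact ⟨x, y, hx, hy, .of_adj ⟨hxy, hne⟩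
        (hx ▸ (P i).walk.dart_fst_mem_support_of_mem_darts hd :)
        (hy ▸ (P i).walk.dart_snd_mem_support_of_mem_darts hd :)⟩
    obtain ⟨z, -, hz, -⟩ := hT _ (P i).fst_mem _ (P i).snd_mem (P i).fst_ne_snd
    have hreach {w : V} := ReachableIn.of_walk_fibers (y := w) (P i).walk (hfiber i) hdart hz
    exact (hreach hx).symm.trans (hreach hy)
  · have hne : (P i).fst ≠ (P j).snd :=
      (hP hij).ne_of_mem (P i).fst_mem_verts (P j).snd_mem_verts
    obtain ⟨x, y, hx, hy, hxy, hχ⟩ := hT _ (P i).fst_mem _ (P j).snd_mem hne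
    refine ⟨x, Set.mem_preimage.2 (hx ▸ (P i).fst_mem_verts), y,
      Set.mem_preimage.2 (hy ▸ (P j).snd_mem_verts), hxy, ?_⟩
    rw [hx, hy, (hg i).1, (hg j).2.1, add_zero]
    exact eq_add_one_of_ne hχ

end Shrinking

/-! ### Rerouting odd paths -/

section Rerouting

variable {G B : SimpleGraph V} {s t : Set V} {a b c x y : V}

theorem weight_ne_zero_of_mem_of_notMem {w : Sym2 V → ℕ}
    (hw : ∀ u ∈ s, ∀ v, v ∉ s → w s(u, v) ≠ 0) (p : G.Walk a b) (ha : a ∈ s) (hb : b ∉ s) :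
    weight w p ≠ 0 := by
  obtain ⟨d, hd, hfst, hsnd⟩ := p.exists_boundary_dart s ha hb
  intro h
  exact hw _ hfst _ hsnd (List.sum_eq_zero_iff.1 h _ (List.mem_map_of_mem (List.mem_map_of_mem hd)))

theorem weight_eq_zero {R : Type*} [AddCommMonoid R] {w : Sym2 V → R} {p : G.Walk a b}
    (h : ∀ u v, G.Adj u v → u ∈ p.support → v ∈ p.support → w s(u, v) = 0) : weight w p = 0 := by
  refine List.sum_eq_zero fun r hr => ?_
  obtain ⟨e, he, rfl⟩ := List.mem_map.1 hr
  induction e with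
  | h u v =>
    exact h u v (p.adj_of_mem_edges he) (p.fst_mem_support_of_mem_edges he)
      (p.snd_mem_support_of_mem_edges he)

theorem ReachableIn.exists_isPath_first_hit (h : ReachableIn G s a x) (ha : a ∈ s) (hx : x ∈ t) :
    ∃ y ∈ t, ∃ p : G.Walk a y, p.IsPath ∧ ∀ v ∈ p.support, v ∈ s ∧ (v ∈ t → v = y) := by
  classical
  suffices h : ∃ y ∈ t, ∃ p : G.Walk a y, ∀ v ∈ p.support, v ∈ s ∧ (v ∈ t → v = y) by
    obtain ⟨y, hy, p, hp⟩ := h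
    exact ⟨y, hy, p.bypass, p.bypass_isPath,
      fun v hv => hp v (Walk.support_bypass_subset_support _ hv)⟩
  induction h using Relation.ReflTransGen.head_induction_on with
  | refl => exact ⟨x, hx, .nil, by simp [ha]⟩
  | @head a c hac _ ih =>
    obtain ⟨y, hy, p, hp⟩ := ih hac.2.2
    by_cases hat : a ∈ t
    · exact ⟨a, hat, .nil, by simp [ha]⟩
    · refine ⟨y, hy, .cons hac.1 p, ?_⟩
      rw [Walk.support_cons, List.forall_mem_cons]
      exact ⟨⟨ha, fun h => absurd h hat⟩, hp⟩

theorem isPath_append {p : G.Walk a b} {q : G.Walk b c} (hp : p.IsPath) (hq : q.IsPath)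
    (h : ∀ v ∈ p.support, v ∈ q.support → v = b) : (p.append q).IsPath := by
  induction p with
  | nil => simpa using hq
  | @cons a d b had p ih =>
    rw [Walk.cons_isPath_iff] at hp
    rw [Walk.support_cons, List.forall_mem_cons] at h
    rw [Walk.cons_append, Walk.cons_isPath_iff, Walk.mem_support_append_iff]
    refine ⟨ih hp.1 hq h.2, ?_⟩
    rintro (ha | ha)
    · exact hp.2 ha
    · exact hp.2 (h.1 ha ▸ p.end_mem_support)

/-- Of the two halves of an odd path at `x`, one has odd weight; the even connection `q` replaces
the other one. -/
theorem OddPath.exists_shortcut {τ : Sym2 V → ZMod 2} (P : OddPath G τ t) {w : Sym2 V → ℕ}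
    (ha : a ∈ t) (hx : x ∈ P.verts) {q : G.Walk a x} (hq : q.IsPath)
    (hqP : ∀ v ∈ q.support, v ∈ P.verts → v = x) (hτ : weight τ q = 0) (hw : weight w q = 0)
    (hfst : ∀ p : G.Walk x P.fst, weight w p ≠ 0) (hsnd : ∀ p : G.Walk x P.snd, weight w p ≠ 0) :
    ∃ R : OddPath G τ t, (∀ v ∈ R.verts, v ∈ P.verts ∨ v ∈ q.support) ∧
      weight w R.walk < weight w P.walk := by
  obtain ⟨b, c, p, hp, hb, hc, hodd⟩ := P
  obtain ⟨p₁, p₂, hp₁, hp₂, rfl⟩ := hp.mem_support_iff_exists_append.1 hx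
  simp only [OddPath.verts, Set.mem_ofPred_eq, Walk.mem_support_append_iff] at hqP ⊢
  rw [weight_append] at hodd ⊢
  have hpos₁ := hfst p₁.reverse
  have hpos₂ := hsnd p₂
  rw [weight_reverse] at hpos₁
  rcases eq_zero_or_eq_one (weight τ p₁) with h | h
  · refine ⟨⟨a, c, q.append p₂, isPath_append hq hp₂ fun v hv hv' => hqP v hv (.inr hv'), ha, hc,
      ?_⟩, fun v hv => ?_, ?_⟩
    · rw [weight_append, hτ, ← hodd, h]
    · rw [Walk.mem_support_append_iff] at hv
      tauto
    · rw [weight_append]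
      omega
  · refine ⟨⟨b, a, p₁.append q.reverse, isPath_append hp₁ hq.reverse fun v hv hv' =>
      hqP v (by simpa using hv') (.inl hv), hb, ha, ?_⟩, fun v hv => ?_, ?_⟩
    · rw [weight_append, weight_reverse, hτ, h, add_zero]
    · simp only [Walk.mem_support_append_iff, Walk.support_reverse, List.mem_reverse] at hv
      tauto
    · simp only [weight_append, weight_reverse]
      omega

open scoped Classical in
/-- The number of edges outside the bags `ρ j` is the potential function of the rerouting. -/
noncomputable def bagCost {m : ℕ} (ρ : Fin m → Set V) (e : Sym2 V) : ℕ :=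
  if ∃ j, ∀ v ∈ e, v ∈ ρ j then 0 else 1

theorem IsCliqueModel.eq_of_mem {A : Set V} {m : ℕ} {ρ : Fin m → Set V} (h : IsCliqueModel G A ρ)
    {i j : Fin m} (hi : x ∈ ρ i) (hj : x ∈ ρ j) : i = j :=
  by_contra fun hne => Set.disjoint_left.1 (h.disjoint i j hne) hi hj

theorem IsCliqueModel.bagCost_ne_zero {A : Set V} {m : ℕ} {ρ : Fin m → Set V}
    (h : IsCliqueModel G A ρ) {j : Fin m} (hx : x ∈ ρ j) (hy : y ∉ ρ j) :
    bagCost ρ s(x, y) ≠ 0 := by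
  simp only [bagCost, Sym2.ball, ne_eq, ite_eq_left_iff, one_ne_zero, imp_false, not_not]
  rintro ⟨i, hi, hi'⟩
  exact hy (h.eq_of_mem hi hx ▸ hi')

theorem pairwise_disjoint_update {ι : Type*} [DecidableEq ι] {τ : Sym2 V → ZMod 2}
    {P : ι → OddPath G τ t} (hP : Pairwise fun i j => Disjoint (P i).verts (P j).verts) {i : ι}
    {R : OddPath G τ t} (hR : ∀ j ≠ i, Disjoint R.verts (P j).verts) :
    Pairwise fun j l =>
      Disjoint (Function.update P i R j).verts (Function.update P i R l).verts := by
  intro j l hjl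
  by_cases hj : j = i
  · subst hj
    simpa [Function.update_of_ne hjl.symm] using hR l hjl.symm
  · by_cases hl : l = i
    · subst hl
      simpa [Function.update_of_ne hj] using (hR j hj).symm
    · simpa [Function.update_of_ne hj, Function.update_of_ne hl] using hP hjl

variable {ι : Type*} {τ : Sym2 V → ZMod 2} {A : Set V} {m : ℕ} {ρ : Fin m → Set V} {z : Fin m → V}
  {P : ι → OddPath G τ (Set.range z)}

theorem exists_shortcut_of_mem_bag (hBG : B ≤ G) (hτ : ∀ u v, B.Adj u v → τ s(u, v) = 0)
    (hρ : IsCliqueModel B A ρ) (hz : ∀ j, z j ∈ ρ j)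
    (hP : Pairwise fun i j => Disjoint (P i).verts (P j).verts) {j : Fin m}
    (hx : ∃ i, x ∈ (P i).verts) (hxj : x ∈ ρ j)
    (hend : ∀ i, (P i).fst ≠ z j ∧ (P i).snd ≠ z j) :
    ∃ i, ∃ R : OddPath G τ (Set.range z), (∀ l ≠ i, Disjoint R.verts (P l).verts) ∧
      weight (bagCost ρ) R.walk < weight (bagCost ρ) (P i).walk := by
  obtain ⟨y, ⟨i, hy⟩, q, hq, hqs⟩ := (hρ.connectedIn j _ (hz j) _ hxj).exists_isPath_first_hit
    (t := {v | ∃ i, v ∈ (P i).verts}) (hz j) hx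
  have hmem {v : V} (hv : v ∈ q.support) (hv' : ∃ i, v ∈ (P i).verts) : v = y := (hqs v hv).2 hv'
  have hyj : y ∈ ρ j := (hqs y q.end_mem_support).1
  have hcost {v : V} (hv : v ∈ Set.range z) (hne : v ≠ z j) (p : G.Walk y v) :
      weight (bagCost ρ) p ≠ 0 := by
    obtain ⟨l, rfl⟩ := hv
    exact weight_ne_zero_of_mem_of_notMem (fun u hu v hv => hρ.bagCost_ne_zero hu hv) p hyj
      fun h => hne (hρ.eq_of_mem (hz l) h ▸ rfl)
  obtain ⟨R, hR, hlt⟩ := (P i).exists_shortcut (w := bagCost ρ) (q := q.mapLe hBG) ⟨j, rfl⟩ hy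
    ((Walk.isPath_mapLe hBG).2 hq) (fun v hv hv' => hmem (by simpa using hv) ⟨i, hv'⟩)
    (by rw [weight_mapLe]; exact weight_eq_zero fun u v h _ _ => hτ u v h)
    (by
      rw [weight_mapLe]
      exact weight_eq_zero fun u v _ hu hv =>
        if_pos ⟨j, Sym2.ball.2 ⟨(hqs u hu).1, (hqs v hv).1⟩⟩)
    (hcost (P i).fst_mem (hend i).1) (hcost (P i).snd_mem (hend i).2)
  refine ⟨i, R, fun l hl => Set.disjoint_left.2 fun v hv hvl => hl ?_, hlt⟩
  rcases hR v hv with h | h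
  · exact eq_of_mem_verts hP hvl h
  · exact eq_of_mem_verts hP hvl (hmem (by simpa using h) ⟨l, hvl⟩ ▸ hy)

/-- A family with the fewest edges outside the bags cannot be shortcut through a bag. -/
theorem exists_oddPaths_forall_mem_bag [Finite ι] (hBG : B ≤ G)
    (hτ : ∀ u v, B.Adj u v → τ s(u, v) = 0) (hρ : IsCliqueModel B A ρ) (hz : ∀ j, z j ∈ ρ j)
    (hex : ∃ P : ι → OddPath G τ (Set.range z),
      Pairwise fun i j => Disjoint (P i).verts (P j).verts) :
    ∃ P : ι → OddPath G τ (Set.range z), Pairwise (fun i j => Disjoint (P i).verts (P j).verts) ∧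
      ∀ i j, ∀ x ∈ (P i).verts, x ∈ ρ j → ∃ i, (P i).fst = z j ∨ (P i).snd = z j := by
  classical
  cases nonempty_fintype ι
  obtain ⟨P, hP, hmin⟩ := exists_minimalFor_of_wellFoundedLT
    (fun P : ι → OddPath G τ (Set.range z) => Pairwise fun i j => Disjoint (P i).verts (P j).verts)
    (fun P => ∑ i, weight (bagCost ρ) (P i).walk) hex
  refine ⟨P, hP, fun i j x hx hxj => ?_⟩
  by_contra! hend
  obtain ⟨i, R, hR, hlt⟩ := exists_shortcut_of_mem_bag hBG hτ hρ hz hP ⟨i, hx⟩ hxj hend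
  have hsum : ∑ l, weight (bagCost ρ) (Function.update P i R l).walk <
      ∑ l, weight (bagCost ρ) (P l).walk := by
    refine Finset.sum_lt_sum (fun l _ => ?_) ⟨i, Finset.mem_univ i, by rwa [Function.update_self]⟩
    by_cases hl : l = i
    · subst hl
      rw [Function.update_self]
      exact hlt.le
    · rw [Function.update_of_ne hl]
  exact hsum.not_ge (hmin (pairwise_disjoint_update hP hR) hsum.le)

end Rerouting

/-! ### Central vertices of branch sets -/

section Centroid

variable {B : SimpleGraph V} {s : Set V} {a b c v w : V}

theorem ReachableIn.mem (h : ReachableIn B s a b) (ha : a ∈ s) : b ∈ s := by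
  cases h with
  | refl => exact ha
  | tail _ h => exact h.2.2

theorem ReachableIn.restrict (h : ReachableIn B s a b) :
    ReachableIn B {x | ReachableIn B s a x} a b := by
  induction h with
  | refl => exact .refl
  | tail h h' ih => exact ih.tail ⟨h'.1, h, h.tail h'⟩

theorem ReachableIn.exists_adj_of_ne (h : ReachableIn B s a v) (hne : a ≠ v) :
    ∃ u, ReachableIn B (s \ {v}) a u ∧ B.Adj u v := by
  suffices hor : ∀ b, ReachableIn B s a b →
      (ReachableIn B (s \ {v}) a b ∧ b ≠ v) ∨ ∃ u, ReachableIn B (s \ {v}) a u ∧ B.Adj u v from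
    (hor v h).resolve_left fun h => h.2 rfl
  intro b hb
  induction hb with
  | refl => exact .inl ⟨.refl, hne⟩
  | @tail b c _ hbc ih =>
    refine ih.elim (fun ⟨hb, hbv⟩ => ?_) .inr
    by_cases hcv : c = v
    · exact .inr ⟨b, hb, hcv ▸ hbc.1⟩
    · exact .inl ⟨hb.tail ⟨hbc.1, ⟨hbc.2.1, hbv⟩, hbc.2.2, hcv⟩, hcv⟩

theorem ConnectedIn.reachableIn_sdiff (hs : ConnectedIn B s) (ha : a ∈ s) (hv : v ∈ s)
    (hvw : v ≠ w) (h : ¬ ReachableIn B (s \ {v}) a w) : ReachableIn B (s \ {w}) v a := by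
  by_cases hav : a = v
  · exact hav ▸ .refl
  obtain ⟨u, hu, huv⟩ := (hs a ha v hv).exists_adj_of_ne hav
  have hsub {x : V} (hx : ReachableIn B (s \ {v}) a x) : x ∈ s \ {w} :=
    ⟨(hx.mem ⟨ha, hav⟩).1, fun hxw => h (hxw ▸ hx)⟩
  have hau : ReachableIn B (s \ {w}) a u := hu.restrict.mono_set fun _ => hsub
  exact (hau.trans (.of_adj huv (hsub hu) ⟨hv, hvw⟩)).symm

open scoped Classical in
/-- Otherwise choose a vertex `c` and a deletion `v` leaving `c` with too few targets such that the
component of `c` is largest: the next choice `v`, `w` is a contradiction on either side of `v`. -/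
theorem ConnectedIn.exists_centroid [Finite V] {ι : Type*} (hs : ConnectedIn B s)
    (hne : s.Nonempty) {J : Finset ι} {y : ι → V} (hy : ∀ j ∈ J, y j ∈ s) :
    ∃ c ∈ s, ∀ v ≠ c, J.card ≤ 2 * {j ∈ J | ReachableIn B (s \ {v}) c (y j)}.card := by
  let bad : Set (V × V) := {p | p.1 ∈ s ∧ p.2 ≠ p.1 ∧
    2 * {j ∈ J | ReachableIn B (s \ {p.2}) p.1 (y j)}.card < J.card}
  by_contra! hcon
  have exists_bad {c : V} (hc : c ∈ s) : ∃ v, (c, v) ∈ bad := by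
    obtain ⟨v, hv, hlt⟩ := hcon c hc
    exact ⟨v, hc, hv, hlt⟩
  obtain ⟨⟨c, v⟩, ⟨hc, hvc, hlt⟩, hmax⟩ := bad.toFinite.exists_maximalFor
    (fun p => {x | ReachableIn B (s \ {p.2}) p.1 x}) bad
    (let ⟨c, hc⟩ := hne; let ⟨v, hv⟩ := exists_bad hc; ⟨(c, v), hv⟩)
  have hv : v ∈ s := by
    by_contra hv
    rw [Set.sdiff_singleton_eq_self hv,
      Finset.filter_true_of_mem fun j hj => hs c hc _ (hy j hj)] at hlt
    omega
  obtain ⟨w, hvw⟩ := exists_bad hv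
  have hwv : v ≠ w := hvw.2.1.symm
  by_cases hw : ReachableIn B (s \ {v}) c w
  · have hcover : J ⊆ {j ∈ J | ReachableIn B (s \ {v}) c (y j)} ∪
        {j ∈ J | ReachableIn B (s \ {w}) v (y j)} := fun j hj => by
      by_cases hcj : ReachableIn B (s \ {v}) c (y j)
      · exact Finset.mem_union_left _ (Finset.mem_filter.2 ⟨hj, hcj⟩)
      · exact Finset.mem_union_right _ (Finset.mem_filter.2 ⟨hj,
          hs.reachableIn_sdiff (hy j hj) hv hwv fun h => hcj (hw.trans h.symm)⟩)
    have hle := (Finset.card_le_card hcover).trans (Finset.card_union_le _ _)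
    have hlt' := hvw.2.2
    dsimp only at hlt hlt'
    omega
  · have hmem (x : V) (hx : ReachableIn B (s \ {v}) c x) : x ∈ s \ {v} := hx.mem ⟨hc, hvc.symm⟩
    have hsub : {x | ReachableIn B (s \ {v}) c x} ⊆ {x | ReachableIn B (s \ {w}) v x} :=
      fun x hx => hs.reachableIn_sdiff (hmem x hx).1 hv hwv fun h => hw (hx.trans h)
    exact (hmem v (hmax hvw hsub (.refl : ReachableIn B (s \ {w}) v v))).2 rfl

open scoped Classical in
/-- The bags with a neighbor in the bag `ρ c` that the center `z c` reaches inside the bag without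
using `v`. -/
noncomputable def reachableBags {m : ℕ} (B : SimpleGraph V) (ρ : Fin m → Set V) (z : Fin m → V)
    (c : Fin m) (v : V) : Finset (Fin m) :=
  {j | j ≠ c ∧ ∃ y ∈ ρ c, ∃ x ∈ ρ j, B.Adj y x ∧ ReachableIn B (ρ c \ {v}) (z c) y}

theorem IsCliqueModel.exists_centers [Finite V] {A : Set V} {m : ℕ} {ρ : Fin m → Set V}
    (hρ : IsCliqueModel B A ρ) : ∃ z : Fin m → V, (∀ c, z c ∈ ρ c) ∧
      ∀ c, ∀ v ≠ z c, m ≤ 2 * (reachableBags B ρ z c v).card + 1 := by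
  classical
  have hadj (c j : Fin m) : ∃ y, j ≠ c → y ∈ ρ c ∧ ∃ x ∈ ρ j, B.Adj y x := by
    by_cases hne : j = c
    · exact ⟨(hρ.nonempty c).some, fun h => absurd hne h⟩
    · obtain ⟨y, hy, hyx⟩ := hρ.exists_adj c j (Ne.symm hne)
      exact ⟨y, fun _ => ⟨hy, hyx⟩⟩
  choose y hy using hadj
  choose z hz hcard using fun c => (hρ.connectedIn c).exists_centroid (hρ.nonempty c)
    (J := Finset.univ.erase c) (y := y c) fun j hj => (hy c j (Finset.ne_of_mem_erase hj)).1
  refine ⟨z, hz, fun c v hv => ?_⟩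
  have hsub : {j ∈ Finset.univ.erase c | ReachableIn B (ρ c \ {v}) (z c) (y c j)} ⊆
      reachableBags B ρ z c v := fun j hj => by
    simp only [Finset.mem_filter, Finset.mem_erase, Finset.mem_univ, and_true] at hj
    obtain ⟨hyc, x, hx, hyx⟩ := hy c j hj.1
    simpa only [reachableBags, Finset.mem_filter, Finset.mem_univ, true_and] using
      ⟨hj.1, y c j, hyc, x, hx, hyx, hj.2⟩
  have hle := Finset.card_le_card hsub
  have hhalf := hcard c v hv
  rw [Finset.card_erase_of_mem (Finset.mem_univ c), Finset.card_univ, Fintype.card_fin] at hhalf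
  omega

end Centroid

/-! ### Escaping along odd paths -/

theorem ReachableIn.eq_of_forall_adj {β : Type*} {G : SimpleGraph V} {s : Set V} {a b : V}
    (h : ReachableIn G s a b) {f : V → β} (hf : ∀ x ∈ s, ∀ y ∈ s, G.Adj x y → f x = f y) :
    f a = f b := by
  induction h with
  | refl => rfl
  | tail _ h ih => exact ih.trans (hf _ h.2.1 _ h.2.2 h.1)

/-- The edges of sign zero. -/
def neutral (L : SimpleGraph V) (τ : Sym2 V → ZMod 2) : SimpleGraph V where
  Adj u v := L.Adj u v ∧ τ s(u, v) = 0
  symm := ⟨fun _ _ h => ⟨h.1.symm, Sym2.eq_swap ▸ h.2⟩⟩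
  loopless := ⟨fun _ h => h.1.ne rfl⟩

theorem neutral_le (L : SimpleGraph V) (τ : Sym2 V → ZMod 2) : neutral L τ ≤ L := fun _ _ h => h.1

theorem weight_eq_add {G : SimpleGraph V} {w : Sym2 V → ZMod 2} {χ : V → ZMod 2} {a b : V}
    {p : G.Walk a b}
    (h : ∀ u v, G.Adj u v → u ∈ p.support → v ∈ p.support → w s(u, v) = χ u + χ v) :
    weight w p = χ a + χ b := by
  induction p with
  | nil => rw [weight_nil, CharTwo.add_self_eq_zero]
  | @cons a c b hac p ih =>
    rw [weight_cons, h a c hac (by simp) (by simp),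
      ih fun u v huv hu hv => h u v huv (by simp [hu]) (by simp [hv])]
    grind

theorem reachableIn_of_isPath {G : SimpleGraph V} {a b x v : V} {p : G.Walk a b} (hp : p.IsPath)
    (hx : x ∈ p.support) (hvx : v ≠ x) :
    ReachableIn G ({w | w ∈ p.support} \ {v}) x a ∨
      ReachableIn G ({w | w ∈ p.support} \ {v}) x b := by
  obtain ⟨q, r, -, -, rfl⟩ := hp.mem_support_iff_exists_append.1 hx
  simp only [Walk.mem_support_append_iff]
  by_cases hv : v ∈ q.support
  · refine .inr (ReachableIn.of_walk r ?_)
    rintro w hw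
    refine ⟨.inr hw, ?_⟩
    rintro rfl
    exact hp.ne_of_mem_support_of_append hvx hv hw rfl
  · refine .inl (ReachableIn.of_walk q ?_).symm
    rintro w hw
    refine ⟨.inl hw, ?_⟩
    rintro rfl
    exact hv hw

/-- Avoiding `X` and the vertex `v`, the vertex `u` can be joined through edges of sign zero to a
core vertex of color zero. -/
def Escapes (L : SimpleGraph V) (τ : Sym2 V → ZMod 2) (X : Finset V) (α : V → Option V)
    (χ : V → ZMod 2) (u v : V) : Prop :=
  ∃ (Z : Set V) (q : V), u ∈ Z ∧ (∀ x ∈ Z, x ∉ X ∧ x ≠ v) ∧ ReachableIn (neutral L τ) Z u q ∧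
    α q = some q ∧ χ q = 0

namespace IsAnchoring

variable {G L : SimpleGraph V} {σ τ : Sym2 V → ZMod 2} {T : Set V} {X : Finset V}
  {α : V → Option V} {χ : V → ZMod 2} {Z : Set V} {a b p q : V}

theorem anchor_eq_of_reachableIn (hα : IsAnchoring L τ X α χ) (hZ : ∀ x ∈ Z, x ∉ X)
    (hp : ∀ x ∈ Z, α p ≠ some x) (h : ReachableIn L Z p q) : α q = α p := by
  refine (h.eq_of_forall_adj (f := fun x => α x = α p) fun x hx y hy hxy => ?_).mp rfl
  rcases hα.eq_or_add_eq hxy (hZ x hx) (hZ y hy) with h | ⟨hαx, hαy, -⟩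
  · rw [h]
  · exact propext (iff_of_false (hαx ▸ (hp x hx).symm) (hαy ▸ (hp y hy).symm))

theorem color_eq_of_reachableIn (hα : IsAnchoring L τ X α χ) (hZ : ∀ x ∈ Z, x ∉ X)
    (h : ReachableIn (neutral L τ) Z a b) (ha : α a = some a) (hb : α b = some b) :
    χ a = χ b := by
  have hmap : (α a).map χ = (α b).map χ := by
    refine h.eq_of_forall_adj (f := fun x => (α x).map χ) fun x hx y hy ⟨hxy, hτ⟩ => ?_
    rcases hα.eq_or_add_eq hxy (hZ x hx) (hZ y hy) with h | ⟨hαx, hαy, hχ⟩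
    · rw [h]
    · rw [hαx, hαy, Option.map_some, Option.map_some, CharTwo.add_eq_zero.1 (hχ.trans hτ)]
  simpa [ha, hb] using hmap

theorem anchor_eq_self_of_forall_ne (hα : IsAnchoring L τ X α χ) (hne : ∃ v, v ≠ p)
    (h : ∀ v ≠ p, ∃ (Z : Set V) (q : V), p ∈ Z ∧ (∀ x ∈ Z, x ∉ X ∧ x ≠ v) ∧ ReachableIn L Z p q ∧
      α q = some q) : α p = some p := by
  by_contra hp
  obtain ⟨v, hv, hpv⟩ : ∃ v, v ≠ p ∧ ∀ u, α p = some u → u = v := by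
    cases hu : α p with
    | none =>
      obtain ⟨v, hv⟩ := hne
      exact ⟨v, hv, by simp⟩
    | some u => exact ⟨u, fun h => hp (h ▸ hu), by simp⟩
  obtain ⟨Z, q, hpZ, hZ, hreach, hq⟩ := h v hv
  have heq := hα.anchor_eq_of_reachableIn (fun x hx => (hZ x hx).1)
    (fun x hx hpx => (hZ x hx).2 (hpv x hpx)) hreach
  exact (hZ q (hreach.mem hpZ)).2 (hpv q (heq ▸ hq))

variable {P : OddPath G σ T}

theorem anchor_eq_self_of_mem_verts (hα : IsAnchoring L τ X α χ)
    (hPL : ∀ u ∈ P.verts, ∀ v ∈ P.verts, G.Adj u v → L.Adj u v) (hPX : ∀ v ∈ P.verts, v ∉ X)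
    (hexit : ∀ e, e = P.fst ∨ e = P.snd → ∀ v ≠ e, Escapes L τ X α χ e v) (hp : p ∈ P.verts) :
    α p = some p := by
  refine hα.anchor_eq_self_of_forall_ne ?_ fun v hv => ?_
  · by_cases h : P.fst = p
    · exact ⟨P.snd, fun h' => P.fst_ne_snd (h.trans h'.symm)⟩
    · exact ⟨P.fst, h⟩
  obtain ⟨e, he, hpe⟩ : ∃ e, (e = P.fst ∨ e = P.snd) ∧ ReachableIn G (P.verts \ {v}) p e :=
    (reachableIn_of_isPath P.isPath hp hv).elim (fun h => ⟨_, .inl rfl, h⟩)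
      fun h => ⟨_, .inr rfl, h⟩
  have hpv : p ∈ P.verts \ {v} := ⟨hp, hv.symm⟩
  have hev : v ≠ e := fun h => (hpe.mem hpv).2 h.symm
  obtain ⟨Z, q, -, hZ, hreach, hq, -⟩ := hexit e he v hev
  refine ⟨P.verts \ {v} ∪ Z, q, .inl hpv, ?_, ?_, hq⟩
  · rintro x (hx | hx)
    exacts [⟨hPX x hx.1, hx.2⟩, hZ x hx]
  · exact (hpe.mono Set.subset_union_left fun x hx y hy => hPL x hx.1 y hy.1).trans
      (hreach.mono Set.subset_union_right fun _ _ _ _ h => neutral_le L τ h)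

theorem false_of_oddPath (hα : IsAnchoring L τ X α χ)
    (hPL : ∀ u ∈ P.verts, ∀ v ∈ P.verts, G.Adj u v → L.Adj u v ∧ τ s(u, v) = σ s(u, v))
    (hPX : ∀ v ∈ P.verts, v ∉ X)
    (hexit : ∀ e, e = P.fst ∨ e = P.snd → ∀ v ≠ e, Escapes L τ X α χ e v) : False := by
  have hcore {p : V} (hp : p ∈ P.verts) : α p = some p :=
    hα.anchor_eq_self_of_mem_verts (fun u hu v hv h => (hPL u hu v hv h).1) hPX hexit hp
  have hzero {e v : V} (he : e = P.fst ∨ e = P.snd) (hmem : e ∈ P.verts) (hv : v ≠ e) :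
      χ e = 0 := by
    obtain ⟨Z, q, -, hZ, hreach, hq, hχ⟩ := hexit e he v hv
    rw [hα.color_eq_of_reachableIn (fun x hx => (hZ x hx).1) hreach (hcore hmem) hq, hχ]
  have hweight : weight σ P.walk = χ P.fst + χ P.snd := by
    refine weight_eq_add fun u v huv hu hv => ?_
    obtain ⟨hL, hτ⟩ := hPL u hu v hv huv
    rw [← hτ]
    rcases hα.eq_or_add_eq hL (hPX u hu) (hPX v hv) with h | h
    · rw [hcore hu, hcore hv, Option.some_inj] at h
      exact absurd h huv.ne
    · exact h.2.2.symm
  rw [P.weight_eq, hzero (.inl rfl) P.fst_mem_verts P.fst_ne_snd.symm,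
    hzero (.inr rfl) P.snd_mem_verts P.fst_ne_snd, add_zero] at hweight
  exact one_ne_zero hweight

end IsAnchoring

/-! ### Shrinking branch sets -/

/-- The signing that is zero exactly on the bichromatic edges. -/
def monoSign (χ : V → ZMod 2) : Sym2 V → ZMod 2 :=
  Sym2.lift ⟨fun u v => 1 + χ u + χ v, fun u v => add_right_comm 1 (χ u) (χ v)⟩

open scoped Classical in
/-- The signing of the graph in which bags have been shrunk to the vertices of `T`: a shrunken bag
may be recolored freely, so its edges get sign zero. -/
noncomputable def linkSign (χ : V → ZMod 2) (T : Set V) (e : Sym2 V) : ZMod 2 :=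
  if ∃ v ∈ e, v ∈ T then 0 else monoSign χ e

open scoped Classical in
/-- The map that sends each bag `ρ j` with `j ∈ F` to its center `z j` and fixes all other
vertices. -/
noncomputable def collapse {m : ℕ} (ρ : Fin m → Set V) (z : Fin m → V) (F : Finset (Fin m))
    (v : V) : V :=
  if h : ∃ j ∈ F, v ∈ ρ j then z h.choose else v

/-- The image of `G` under `π`, keeping the edges whose color sum agrees with the signing `τ`. -/
def shrink (G : SimpleGraph V) (χ : V → ZMod 2) (π : V → V) (τ : Sym2 V → ZMod 2) :
    SimpleGraph V where
  Adj u v := u ≠ v ∧ ∃ x y, π x = u ∧ π y = v ∧ G.Adj x y ∧ χ x + χ y + τ s(u, v) = 1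
  symm := ⟨fun u v ⟨hne, x, y, hx, hy, hxy, h⟩ =>
    ⟨hne.symm, y, x, hy, hx, hxy.symm, by rwa [Sym2.eq_swap, add_comm (χ y)]⟩⟩
  loopless := ⟨fun _ h => h.1 rfl⟩

theorem monoSign_eq_zero {χ : V → ZMod 2} {u v : V} (h : χ u ≠ χ v) : monoSign χ s(u, v) = 0 := by
  change 1 + χ u + χ v = 0
  rw [eq_add_one_of_ne h]
  grind

section Collapse

variable {G : SimpleGraph V} {χ : V → ZMod 2} {A : Set V} {m : ℕ} {ρ : Fin m → Set V}
  {z : Fin m → V} {F : Finset (Fin m)} {u v x : V} {j : Fin m}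

theorem IsCliqueModel.collapse_eq (hρ : IsCliqueModel G A ρ) (hj : j ∈ F) (hx : x ∈ ρ j) :
    collapse ρ z F x = z j := by
  have h : ∃ j ∈ F, x ∈ ρ j := ⟨j, hj, hx⟩
  rw [collapse, dif_pos h, hρ.eq_of_mem h.choose_spec.2 hx]

theorem collapse_of_forall_notMem (h : ∀ j ∈ F, x ∉ ρ j) : collapse ρ z F x = x :=
  dif_neg fun ⟨j, hj, hx⟩ => h j hj hx

theorem linkSign_of_forall_notMem (hz : ∀ j, z j ∈ ρ j) (hu : ∀ j ∈ F, u ∉ ρ j)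
    (hv : ∀ j ∈ F, v ∉ ρ j) : linkSign χ (z '' F) s(u, v) = monoSign χ s(u, v) := by
  refine if_neg ?_
  rintro ⟨x, hx, j, hj, rfl⟩
  rcases Sym2.mem_iff.1 hx with h | h
  exacts [hu j hj (h ▸ hz j), hv j hj (h ▸ hz j)]

theorem shrink_adj_of_forall_notMem (hz : ∀ j, z j ∈ ρ j) (huv : G.Adj u v)
    (hu : ∀ j ∈ F, u ∉ ρ j) (hv : ∀ j ∈ F, v ∉ ρ j) :
    (shrink G χ (collapse ρ z F) (linkSign χ (z '' F))).Adj u v := by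
  refine ⟨huv.ne, u, v, collapse_of_forall_notMem hu, collapse_of_forall_notMem hv, huv, ?_⟩
  rw [linkSign_of_forall_notMem hz hu hv]
  change χ u + χ v + (1 + χ u + χ v) = 1
  grind

theorem IsCliqueModel.neutral_shrink_adj (hρ : IsCliqueModel (bichromatic G χ) A ρ)
    (hz : ∀ j, z j ∈ ρ j) (hux : (bichromatic G χ).Adj u x) (hu : ∀ j ∈ F, u ∉ ρ j) (hj : j ∈ F)
    (hx : x ∈ ρ j) : (neutral (shrink G χ (collapse ρ z F) (linkSign χ (z '' F)))
      (linkSign χ (z '' F))).Adj u (z j) := by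
  have hsign : linkSign χ (z '' F) s(u, z j) = 0 :=
    if_pos ⟨z j, Sym2.mem_mk_right u (z j), j, hj, rfl⟩
  refine ⟨⟨fun h => hu j hj (h ▸ hz j), u, x, collapse_of_forall_notMem hu,
    hρ.collapse_eq hj hx, hux.1, ?_⟩, hsign⟩
  rw [hsign, eq_add_one_of_ne hux.2]
  grind

theorem IsCliqueModel.connectedIn_collapse_preimage (hρ : IsCliqueModel G A ρ)
    (hz : ∀ j, z j ∈ ρ j) (u : V) : ConnectedIn G (collapse ρ z F ⁻¹' {u}) := by
  have hmem {x : V} (hx : collapse ρ z F x = u) : (∃ j ∈ F, x ∈ ρ j ∧ u = z j) ∨ x = u := by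
    by_cases h : ∃ j ∈ F, x ∈ ρ j
    · obtain ⟨j, hj, hxj⟩ := h
      exact .inl ⟨j, hj, hxj, hx ▸ hρ.collapse_eq hj hxj⟩
    · push Not at h
      exact .inr ((collapse_of_forall_notMem h).symm.trans hx)
  by_cases hu : ∃ j ∈ F, u ∈ ρ j
  · obtain ⟨j, hj, huj⟩ := hu
    have hbag {x : V} (hx : collapse ρ z F x = u) : x ∈ ρ j := by
      rcases hmem hx with ⟨i, -, hxi, rfl⟩ | rfl
      exacts [hρ.eq_of_mem (hz i) huj ▸ hxi, huj]
    intro a ha b hb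
    have huz : u = z j := by rw [← hρ.collapse_eq (z := z) hj (hbag ha)]; exact ha.symm
    exact (hρ.connectedIn j a (hbag ha) b (hbag hb)).mono_set fun x hx =>
      (hρ.collapse_eq hj hx).trans huz.symm
  · have hsingle {x : V} (hx : collapse ρ z F x = u) : x = u := by
      rcases hmem hx with ⟨j, hj, -, rfl⟩ | h
      exacts [absurd ⟨j, hj, hz j⟩ hu, h]
    intro a ha b hb
    rw [hsingle ha, hsingle hb]
    exact .refl

theorem IsCliqueModel.exists_isOddCliqueModel (hρ : IsCliqueModel (bichromatic G χ) A ρ)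
    (hz : ∀ j, z j ∈ ρ j) {τ : Sym2 V → ZMod 2}
    {P : W → OddPath (shrink G χ (collapse ρ z F) τ) τ (z '' F)}
    (hP : Pairwise fun i j => Disjoint (P i).verts (P j).verts) :
    ∃ (ψ : V → ZMod 2) (Q : W → Set V), IsOddCliqueModel G ψ Q := by
  refine exists_isOddCliqueModel_of_oddPaths hP (hρ.connectedIn_collapse_preimage hz)
    (fun u v h => h.2) ?_
  rintro _ ⟨i, hi, rfl⟩ _ ⟨j, hj, rfl⟩ hne
  obtain ⟨x, hx, y, hy, hxy⟩ := hρ.exists_adj i j fun h => hne (h ▸ rfl)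
  exact ⟨x, y, hρ.collapse_eq hi hx, hρ.collapse_eq hj hy, hxy⟩

end Collapse

/-! ### The structure of graphs without odd clique models -/

theorem exists_forall_not_of_card_lt {β ι : Type*} [Fintype ι] {r : β → ι → Prop}
    (hr : ∀ x i j, r x i → r x j → i = j) {Y : Finset β} (hY : Y.card < Fintype.card ι) :
    ∃ i, ∀ x ∈ Y, ¬ r x i := by
  by_contra! h
  exact hY.not_ge (Finset.card_le_card_of_forall_subsingleton (fun i x => r x i) (fun i _ => h i)
    fun x _ i hi j hj => hr x i j hi.2 hj.2)

section Structure

variable {G : SimpleGraph V} {χ χ' : V → ZMod 2} {A : Set V} {m t N : ℕ} {ρ : Fin m → Set V}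
  {z : Fin m → V} {F : Finset (Fin m)} {X Y : Finset V} {α : V → Option V} {v : V}

theorem IsCliqueModel.injective_of_mem (hρ : IsCliqueModel G A ρ) (hz : ∀ j, z j ∈ ρ j) :
    Function.Injective z :=
  fun i j h => hρ.eq_of_mem (hz i) (h ▸ hz j)

theorem IsCliqueModel.escapes (hρ : IsCliqueModel (bichromatic G χ) A ρ) (hz : ∀ j, z j ∈ ρ j)
    {c : Fin m} (hc : c ∉ F) (hX : ∀ x ∈ ρ c, x ∉ X)
    (hterm : ∀ j ∈ F, z j ∉ X → α (z j) = some (z j) ∧ χ' (z j) = 0)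
    (hcard : Fᶜ.card + X.card + 1 < (reachableBags (bichromatic G χ) ρ z c v).card)
    (hv : v ≠ z c) :
    Escapes (shrink G χ (collapse ρ z F) (linkSign χ (z '' F))) (linkSign χ (z '' F)) X α χ'
      (z c) v := by
  classical
  obtain ⟨j, hj, hjF, hjX, hjv⟩ : ∃ j ∈ reachableBags (bichromatic G χ) ρ z c v,
      j ∈ F ∧ z j ∉ X ∧ z j ≠ v := by
    by_contra! h
    have hle : (reachableBags (bichromatic G χ) ρ z c v \ Fᶜ).card ≤ (insert v X).card := by
      refine Finset.card_le_card_of_injOn z (fun j hj => ?_) (hρ.injective_of_mem hz).injOn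
      obtain ⟨hj, hjF⟩ := Finset.mem_sdiff.1 hj
      rw [Finset.mem_compl, not_not] at hjF
      grind
    have := Finset.card_le_card_sdiff_add_card (s := reachableBags (bichromatic G χ) ρ z c v)
      (t := Fᶜ)
    have := Finset.card_insert_le v X
    omega
  simp only [reachableBags, Finset.mem_filter, Finset.mem_univ, true_and] at hj
  obtain ⟨-, y, hy, x, hx, hyx, hreach⟩ := hj
  have havoid {x : V} (hx : x ∈ ρ c) : ∀ j ∈ F, x ∉ ρ j :=
    fun j hj hxj => hc (hρ.eq_of_mem hx hxj ▸ hj)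
  have hyv : y ∈ ρ c \ {v} := hreach.mem ⟨hz c, hv.symm⟩
  refine ⟨insert (z j) (ρ c \ {v}), z j, .inr ⟨hz c, hv.symm⟩, ?_, ?_, hterm j hjF hjX⟩
  · rintro x (rfl | hx)
    exacts [⟨hjX, hjv⟩, ⟨hX x hx.1, hx.2⟩]
  · refine (hreach.mono (Set.subset_insert _ _) fun x hx y hy hxy => ?_).trans
      (.of_adj (hρ.neutral_shrink_adj hz hyx (havoid hy) hjF hx) (.inr hyv) (.inl rfl))
    exact ⟨shrink_adj_of_forall_notMem hz hxy.1 (havoid hx.1) (havoid hy.1),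
      (linkSign_of_forall_notMem hz (havoid hx.1) (havoid hy.1)).trans (monoSign_eq_zero hxy.2)⟩

open scoped Classical in
/-- The bags whose centers are not ends of the given odd paths. -/
noncomputable def unusedBags {ι : Type*} {σ : Sym2 V → ZMod 2} {T : Set V} (z : Fin m → V)
    (P : ι → OddPath G σ T) : Finset (Fin m) :=
  {j | ∀ i, (P i).fst ≠ z j ∧ (P i).snd ≠ z j}

variable {ι : Type*} {σ : Sym2 V → ZMod 2} {T : Set V}

theorem mem_unusedBags {P : ι → OddPath G σ T} {j : Fin m} :
    j ∈ unusedBags z P ↔ ∀ i, (P i).fst ≠ z j ∧ (P i).snd ≠ z j := by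
  simp only [unusedBags, Finset.mem_filter, Finset.mem_univ, true_and]

theorem card_compl_unusedBags_le [Fintype ι] (hz : Function.Injective z) (P : ι → OddPath G σ T) :
    (unusedBags z P)ᶜ.card ≤ 2 * Fintype.card ι := by
  classical
  have hsub : (unusedBags z P)ᶜ.image z ⊆
      Finset.univ.image (fun i => (P i).fst) ∪ Finset.univ.image fun i => (P i).snd := by
    intro v hv
    simp only [Finset.mem_image, Finset.mem_compl, mem_unusedBags] at hv
    grind
  rw [← Finset.card_image_of_injective _ hz, two_mul]
  exact (Finset.card_le_card hsub).trans ((Finset.card_union_le _ _).trans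
    (add_le_add Finset.card_image_le Finset.card_image_le))

theorem IsCliqueModel.false_of_isAnchoring (hρ : IsCliqueModel (bichromatic G χ) A ρ)
    (hz : ∀ j, z j ∈ ρ j)
    (hcard : ∀ c, ∀ v ≠ z c, m ≤ 2 * (reachableBags (bichromatic G χ) ρ z c v).card + 1)
    {P : Fin (4 * t + 1) → OddPath G (monoSign χ) (Set.range z)}
    (hP : Pairwise fun i j => Disjoint (P i).verts (P j).verts)
    (hbag : ∀ i j, ∀ x ∈ (P i).verts, x ∈ ρ j → ∃ i, (P i).fst = z j ∨ (P i).snd = z j)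
    (hF : F = unusedBags z P) (hX : X.card ≤ 2 * t)
    (hm : 2 * (2 * (4 * t + 1) + 2 * t + 1) + 1 < m)
    (hα : IsAnchoring (shrink G χ (collapse ρ z F) (linkSign χ (z '' F))) (linkSign χ (z '' F))
      X α χ')
    (hterm : ∀ j ∈ F, z j ∉ X → α (z j) = some (z j) ∧ χ' (z j) = 0) : False := by
  classical
  have hpath {i : Fin (4 * t + 1)} {x : V} (hx : x ∈ (P i).verts) : ∀ j ∈ F, x ∉ ρ j := by
    intro j hj hxj
    rw [hF, mem_unusedBags] at hj
    obtain ⟨i, hi⟩ := hbag i j x hx hxj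
    exact hi.elim (hj i).1 (hj i).2
  have hFcard : Fᶜ.card ≤ 2 * (4 * t + 1) := by
    simpa [hF] using card_compl_unusedBags_le (hρ.injective_of_mem hz) P
  obtain ⟨i, hi⟩ : ∃ i, ∀ x ∈ X ∪ X.image (collapse ρ z Finset.univ), x ∉ (P i).verts := by
    refine exists_forall_not_of_card_lt (r := fun x i => x ∈ (P i).verts)
      (fun x i j => eq_of_mem_verts hP) ?_
    have := Finset.card_union_le X (X.image (collapse ρ z Finset.univ))
    have := Finset.card_image_le (s := X) (f := collapse ρ z Finset.univ)
    rw [Fintype.card_fin]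
    omega
  have hPX {x : V} (hx : x ∈ (P i).verts) : x ∉ X :=
    fun hxX => hi x (Finset.mem_union_left _ hxX) hx
  refine hα.false_of_oddPath (P := P i) (fun u hu v hv huv =>
    ⟨shrink_adj_of_forall_notMem hz huv (hpath hu) (hpath hv),
      linkSign_of_forall_notMem hz (hpath hu) (hpath hv)⟩) (fun v => hPX) ?_
  intro e he v hv
  have heP : e ∈ (P i).verts := by
    rcases he with rfl | rfl
    exacts [(P i).fst_mem_verts, (P i).snd_mem_verts]
  obtain ⟨c, rfl⟩ : e ∈ Set.range z := by
    rcases he with rfl | rfl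
    exacts [(P i).fst_mem, (P i).snd_mem]
  have := hcard c v hv
  refine hρ.escapes hz (fun hc => hpath heP c hc (hz c)) (fun x hx hxX => ?_) hterm (by omega) hv
  refine hi _ (Finset.mem_union_right _ (Finset.mem_image_of_mem _ hxX)) ?_
  rwa [hρ.collapse_eq (Finset.mem_univ c) hx]

theorem IsCliqueModel.exists_isOddCliqueModel_of_oddPaths [Finite V]
    (hρ : IsCliqueModel (bichromatic G χ) A ρ) (hz : ∀ j, z j ∈ ρ j)
    (hcard : ∀ c, ∀ v ≠ z c, m ≤ 2 * (reachableBags (bichromatic G χ) ρ z c v).card + 1)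
    (hm : 2 * (2 * (4 * t + 1) + 2 * t + 1) + 1 < m)
    (hex : ∃ P : Fin (4 * t + 1) → OddPath G (monoSign χ) (Set.range z),
      Pairwise fun i j => Disjoint (P i).verts (P j).verts) :
    ∃ (ψ : V → ZMod 2) (Q : Fin t → Set V), IsOddCliqueModel G ψ Q := by
  classical
  obtain ⟨P, hP, hbag⟩ := exists_oddPaths_forall_mem_bag (G := G) (B := bichromatic G χ)
    (fun _ _ h => h.1) (fun _ _ h => monoSign_eq_zero h.2) hρ hz hex
  rcases exists_oddPaths_or_isAnchoring (shrink G χ (collapse ρ z (unusedBags z P))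
    (linkSign χ (z '' unusedBags z P))) (linkSign χ (z '' unusedBags z P))
    ((unusedBags z P).image z) t with hpaths | ⟨X, α, χ', hX, hα, hterm⟩
  · rw [Finset.coe_image] at hpaths
    obtain ⟨P', hP'⟩ := hpaths
    exact hρ.exists_isOddCliqueModel hz hP'
  · exact (hρ.false_of_isAnchoring hz hcard hP hbag rfl hX hm hα
      fun j hj => hterm (z j) (Finset.mem_image_of_mem z hj)).elim

theorem IsAnchoring.add_of_monoSign (hα : IsAnchoring G (monoSign χ) X α χ') :
    IsAnchoring G (fun _ => 1) X α (χ + χ') := by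
  refine ⟨hα.anchor_eq_self, hα.notMem, fun u v huv hu hv => ?_⟩
  refine (hα.eq_or_add_eq huv hu hv).imp_right fun ⟨hαu, hαv, h⟩ => ⟨hαu, hαv, ?_⟩
  change χ' u + χ' v = 1 + χ u + χ v at h
  change χ u + χ' u + (χ v + χ' v) = 1
  grind

theorem IsCliqueModel.exists_adj_core (hρ : IsCliqueModel G A ρ) (hz : ∀ j, z j ∈ ρ j)
    {L : SimpleGraph V} (hGL : G ≤ L) (hα : IsAnchoring L σ X α χ)
    (hterm : ∀ j, z j ∉ X → α (z j) = some (z j)) (hm : X.card + Y.card + 2 ≤ m) :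
    ∃ u v, L.Adj u v ∧ α u = some u ∧ α v = some v ∧ u ∉ Y ∧ v ∉ Y := by
  classical
  have hbag (B : Finset V) (hB : B.card < m) : ∃ c, ∀ x ∈ B, x ∉ ρ c :=
    exists_forall_not_of_card_lt (r := fun x c => x ∈ ρ c) (fun _ _ _ => hρ.eq_of_mem)
      (by rwa [Fintype.card_fin])
  have hunion := Finset.card_union_le X Y
  obtain ⟨c, hc⟩ := hbag (X ∪ Y) (by omega)
  obtain ⟨d, hd⟩ := hbag (insert (z c) (X ∪ Y))
    ((Finset.card_insert_le _ _).trans_lt (by omega))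
  have hcd : c ≠ d := by
    rintro rfl
    exact hd (z c) (Finset.mem_insert_self _ _) (hz c)
  have havoid : ∀ x ∈ ρ c ∪ ρ d, x ∉ X ∧ x ∉ Y := by
    rintro x (hx | hx)
    · grind
    · grind
  obtain ⟨x, hx, y, hy, hxy⟩ := hρ.exists_adj c d hcd
  have hreach : ReachableIn G (ρ c ∪ ρ d) (z c) (z d) :=
    (((hρ.connectedIn c _ (hz c) _ hx).mono_set Set.subset_union_left).trans
      (.of_adj hxy (.inl hx) (.inr hy))).trans
      ((hρ.connectedIn d _ hy _ (hz d)).mono_set Set.subset_union_right)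
  by_contra! h
  have heq : α (z c) = α (z d) := hreach.eq_of_forall_adj fun x hx y hy hxy =>
    (hα.eq_or_add_eq (hGL hxy) (havoid x hx).1 (havoid y hy).1).resolve_right
      fun ⟨hαx, hαy, _⟩ => (havoid y hy).2 (h x y (hGL hxy) hαx hαy (havoid x hx).2)
  rw [hterm c (havoid _ (.inl (hz c))).1, hterm d (havoid _ (.inr (hz d))).1,
    Option.some_inj] at heq
  exact hcd (hρ.injective_of_mem hz heq)

theorem exists_isOddCliqueModel_or_isAnchoring [Finite V] (h : HasBipartiteCliqueModel G A m)
    (hm : 2 * (2 * (4 * t + 1) + 2 * t + 1) + 1 < m) (hm' : 2 * (4 * t + 1) + N + 2 ≤ m) :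
    (∃ (ψ : V → ZMod 2) (Q : Fin t → Set V), IsOddCliqueModel G ψ Q) ∨
    ∃ (X : Finset V) (α : V → Option V) (χ : V → ZMod 2), X.card ≤ 2 * (4 * t + 1) ∧
      IsAnchoring G (fun _ => 1) X α χ ∧ ∀ Y : Finset V, Y.card ≤ N →
        ∃ u v, G.Adj u v ∧ α u = some u ∧ α v = some v ∧ u ∉ Y ∧ v ∉ Y := by
  classical
  obtain ⟨χ, ρ, hρ⟩ := h
  obtain ⟨z, hz, hcard⟩ := hρ.exists_centers
  rcases exists_oddPaths_or_isAnchoring G (monoSign χ) (Finset.univ.image z) (4 * t + 1) with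
    hpaths | ⟨X, α, χ', hX, hα, hterm⟩
  · rw [Finset.coe_image, Finset.coe_univ, Set.image_univ] at hpaths
    exact .inl (hρ.exists_isOddCliqueModel_of_oddPaths hz hcard hm hpaths)
  · refine .inr ⟨X, α, χ + χ', hX, hα.add_of_monoSign, fun Y hY => ?_⟩
    exact hρ.exists_adj_core hz (fun _ _ h => h.1) hα (fun j hj =>
      (hterm (z j) (Finset.mem_image_of_mem z (Finset.mem_univ j)) hj).1) (by omega)

end Structure

/-! ### Extending precolorings -/

/-- If `R` is nonempty, then the number of times that some color occurs on `R` belongs to `S`. -/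
def Achieves (S : Set ℕ) (φ : V → ℕ) (R : Finset V) : Prop :=
  R.Nonempty → ∃ c, (R.filter (φ · = c)).card ∈ S

/-- A coloring `φ` of `Z ⊆ A` which does not already spoil a vertex of `A \ Z`: those all of whose
neighbors in `A` have been colored are `S`-achieved. -/
structure IsPrecoloring (G : SimpleGraph V) (S : Set ℕ) (A Z : Finset V) (φ : V → ℕ) : Prop where
  subset : Z ⊆ A
  ne_of_adj : ∀ u ∈ Z, ∀ v ∈ Z, G.Adj u v → φ u ≠ φ v
  achieves : ∀ v ∈ A, v ∉ Z → nbrsIn G A v ⊆ Z → Achieves S φ (nbrsIn G A v)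

/-- An extension `ψ` of the precoloring `φ` of `Z` to a proper coloring of `A` from the lists `L`,
in which every vertex of `A \ Z` is `S`-achieved and no neighbor in `A \ Z` of a vertex `z ∈ Z` has
the color `f z` forbidden by `z`. -/
structure IsExtension (G : SimpleGraph V) (S : Set ℕ) (L : V → Finset ℕ) (A Z : Finset V)
    (φ f ψ : V → ℕ) : Prop where
  eq_of_mem : ∀ z ∈ Z, ψ z = φ z
  mem_list : ∀ v ∈ A, v ∉ Z → ψ v ∈ L v
  ne_of_adj : ∀ u ∈ A, ∀ v ∈ A, G.Adj u v → ψ u ≠ ψ v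
  ne_forbidden : ∀ z ∈ Z, ∀ u ∈ A, u ∉ Z → G.Adj z u → ψ u ≠ f z
  achieves : ∀ v ∈ A, v ∉ Z → Achieves S ψ (nbrsIn G A v)

/-- Every precoloring of at most `N` vertices of `A` has an extension to `A`, whatever the
forbidden colors. -/
def IsExtendable (G : SimpleGraph V) (S : Set ℕ) (L : V → Finset ℕ) (N : ℕ) (A : Finset V) : Prop :=
  ∀ (Z : Finset V) (φ f : V → ℕ), IsPrecoloring G S A Z φ → Z.card ≤ N →
    ∃ ψ, IsExtension G S L A Z φ f ψ

section Precoloring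

variable {G : SimpleGraph V} {S : Set ℕ} {L : V → Finset ℕ} {k M : ℕ} {A B R X Z Z' : Finset V}
  {φ φ' f f' ψ : V → ℕ} {v w z : V}

theorem Achieves.congr (h : Achieves S φ R) (hψ : ∀ u ∈ R, φ u = ψ u) : Achieves S ψ R := by
  intro hR
  obtain ⟨c, hc⟩ := h hR
  refine ⟨c, ?_⟩
  rwa [Finset.filter_congr fun u hu => by rw [← hψ u hu]]

theorem IsUniqueNbr.filter_eq_singleton (h : IsUniqueNbr G A φ v w) :
    (nbrsIn G A v).filter (φ · = φ w) = {w} := by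
  ext u
  simp only [Finset.mem_filter, mem_nbrsIn, Finset.mem_singleton]
  exact ⟨fun ⟨⟨hu, hvu⟩, huw⟩ => h.eq_of_color_eq u hu hvu huw,
    by rintro rfl; exact ⟨⟨h.mem, h.adj⟩, rfl⟩⟩

theorem IsUniqueNbr.achieves (hS : 1 ∈ S) (h : IsUniqueNbr G A φ v w) :
    Achieves S φ (nbrsIn G A v) :=
  fun _ => ⟨φ w, by rwa [h.filter_eq_singleton]⟩

theorem IsExtension.filter_eq (hψ : IsExtension G S L A Z φ f ψ) (hZ : Z ⊆ A) (hz : z ∈ Z) :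
    (nbrsIn G A z).filter (ψ · = f z) = (nbrsIn G Z z).filter (φ · = f z) := by
  ext u
  simp only [Finset.mem_filter, mem_nbrsIn]
  by_cases hu : u ∈ Z
  · simp [hu, hZ hu, hψ.eq_of_mem u hu]
  · grind [hψ.ne_forbidden z hz u]

theorem IsExtension.achieves_of_mem (hψ : IsExtension G S L A Z φ f ψ) (hZ : Z ⊆ A) (hz : z ∈ Z)
    (h : ((nbrsIn G Z z).filter (φ · = f z)).card ∈ S) : Achieves S ψ (nbrsIn G A z) :=
  fun _ => ⟨f z, by rwa [hψ.filter_eq hZ hz]⟩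

theorem IsExtension.of_subset (hψ : IsExtension G S L A Z' φ' f' ψ) (hZ : Z ⊆ Z')
    (hφ : ∀ z ∈ Z, φ' z = φ z) (hf : ∀ z ∈ Z, f' z = f z)
    (hL : ∀ v ∈ Z', v ∉ Z → φ' v ∈ L v) (hne : ∀ v ∈ Z', v ∉ Z → ∀ z ∈ Z, φ' v ≠ f z)
    (hach : ∀ v ∈ Z', v ∉ Z → Achieves S ψ (nbrsIn G A v)) :
    IsExtension G S L A Z φ f ψ where
  eq_of_mem z hz := (hψ.eq_of_mem z (hZ hz)).trans (hφ z hz)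
  mem_list v hv hvZ := by
    by_cases hvZ' : v ∈ Z'
    · exact (hψ.eq_of_mem v hvZ').symm ▸ hL v hvZ' hvZ
    · exact hψ.mem_list v hv hvZ'
  ne_of_adj := hψ.ne_of_adj
  ne_forbidden z hz v hv hvZ hzv := by
    by_cases hvZ' : v ∈ Z'
    · exact (hψ.eq_of_mem v hvZ').symm ▸ hne v hvZ' hvZ z hz
    · exact hf z hz ▸ hψ.ne_forbidden z (hZ hz) v hv hvZ' hzv
  achieves v hv hvZ := by
    by_cases hvZ' : v ∈ Z'
    exacts [hach v hvZ' hvZ, hψ.achieves v hv hvZ']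

/-- The pair `Z', φ'` extends the precoloring `Z, φ` by list colors in a way that any extension of
the former, avoiding the colors forbidden by `f'`, is an extension of the latter, avoiding those
forbidden by `f`. -/
structure IsRefinement (G : SimpleGraph V) (S : Set ℕ) (L : V → Finset ℕ) (A Z : Finset V)
    (φ f : V → ℕ) (Z' : Finset V) (φ' f' : V → ℕ) : Prop where
  isPrecoloring : IsPrecoloring G S A Z' φ'
  subset : Z ⊆ Z'
  isExtension : ∀ ψ, IsExtension G S L A Z' φ' f' ψ → IsExtension G S L A Z φ f ψ

theorem IsPrecoloring.of_injective (hS : 1 ∈ S) (h : IsPrecoloring G S A Z φ) (hZ : Z ⊆ Z')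
    (hZ'A : Z' ⊆ A) (hφ : ∀ z ∈ Z, φ' z = φ z)
    (hinj : ∀ v ∈ Z', v ∉ Z → ∀ u ∈ Z', φ' u = φ' v → u = v) : IsPrecoloring G S A Z' φ' where
  subset := hZ'A
  ne_of_adj u hu v hv huv heq := by
    by_cases hvZ : v ∈ Z
    · by_cases huZ : u ∈ Z
      · exact h.ne_of_adj u huZ v hvZ huv (by rw [← hφ u huZ, heq, hφ v hvZ])
      · exact huv.ne' (hinj u hu huZ v hv heq.symm)
    · exact huv.ne (hinj v hv hvZ u hu heq)
  achieves v hv hvZ' hsub := by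
    by_cases hsubZ : nbrsIn G A v ⊆ Z
    · exact (h.achieves v hv (fun hvZ => hvZ' (hZ hvZ)) hsubZ).congr
        fun u hu => (hφ u (hsubZ hu)).symm
    · obtain ⟨w, hw, hwZ⟩ := Finset.not_subset.1 hsubZ
      refine IsUniqueNbr.achieves hS (w := w) ⟨hZ'A (hsub hw), (mem_nbrsIn.1 hw).2, ?_⟩
      exact fun u hu hvu => hinj w (hsub hw) hwZ u (hsub (mem_nbrsIn.2 ⟨hu, hvu⟩))

theorem IsPrecoloring.exists_refinement_of_nbrsIn_subset [DecidableEq V] (hS : 1 ∈ S)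
    (h : IsPrecoloring G S A Z φ) (hv : v ∈ A) (hvZ : v ∉ Z) (hsub : nbrsIn G A v ⊆ Z)
    (hL : 2 * Z.card < (L v).card) :
    ∃ φ' f', IsRefinement G S L A Z φ f (insert v Z) φ' f' := by
  obtain ⟨c, hcL, hcφ, hcf, -⟩ := exists_mem_forall_ne (s := Z) (t := ∅) (f := φ) (g := f)
    (by simpa using hL)
  have hφ : ∀ z ∈ Z, Function.update φ v c z = φ z :=
    fun z hz => Function.update_of_ne (ne_of_mem_of_not_mem hz hvZ) c φ
  have hA : insert v Z ⊆ A := Finset.insert_subset hv h.subset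
  refine ⟨Function.update φ v c, f, h.of_injective hS (Finset.subset_insert v Z) hA hφ ?_,
    Finset.subset_insert v Z, fun ψ hψ => ?_⟩
  · grind
  · refine hψ.of_subset (Finset.subset_insert v Z) hφ (fun _ _ => rfl) (by grind) (by grind) ?_
    intro u hu huZ
    obtain rfl := (Finset.mem_insert.1 hu).resolve_right huZ
    exact (h.achieves u hv hvZ hsub).congr fun w hw =>
      ((hψ.eq_of_mem w (Finset.mem_insert_of_mem (hsub hw))).trans (hφ w (hsub hw))).symm

theorem IsPrecoloring.exists_refinement_of_adj [DecidableEq V] (hS : 1 ∈ S)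
    (h : IsPrecoloring G S A Z φ) (hv : v ∈ A) (hvZ : v ∉ Z) (hw : w ∈ A) (hwZ : w ∉ Z)
    (hvw : G.Adj v w) (hL : ∀ u, 2 * Z.card + 1 < (L u).card) :
    ∃ φ' f', IsRefinement G S L A Z φ f (insert v (insert w Z)) φ' f' := by
  obtain ⟨c, hcL, hcφ, hcf, -⟩ := exists_mem_forall_ne (s := Z) (t := ∅) (f := φ) (g := f)
    (l := L v) (by have := hL v; rw [Finset.card_empty]; omega)
  obtain ⟨d, hdL, hdφ, hdf, hdc⟩ := exists_mem_forall_ne (s := Z) (t := {v})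
    (f := Function.update φ v c) (g := f) (by simpa using hL w)
  have hne := hvw.ne
  have hdc : c ≠ d := by simpa using hdc
  obtain ⟨φ', hφ'v, hφ'w, hφ'⟩ : ∃ φ' : V → ℕ, φ' v = c ∧ φ' w = d ∧ ∀ z ∈ Z, φ' z = φ z :=
    ⟨Function.update (Function.update φ v c) w d, by grind⟩
  obtain ⟨f', hf'v, hf'w, hf'⟩ : ∃ f' : V → ℕ, f' v = d ∧ f' w = c ∧ ∀ z ∈ Z, f' z = f z :=
    ⟨Function.update (Function.update f v d) w c, by grind⟩
  have hsub : Z ⊆ insert v (insert w Z) := by grind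
  have hA : insert v (insert w Z) ⊆ A := by have := h.subset; grind
  have hdφ : ∀ z ∈ Z, φ z ≠ d := by grind
  have hunique : IsUniqueNbr G (insert v (insert w Z)) φ' v w := ⟨by grind, hvw, by grind⟩
  have hunique' : IsUniqueNbr G (insert v (insert w Z)) φ' w v := ⟨by grind, hvw.symm, by grind⟩
  refine ⟨φ', f', h.of_injective hS hsub hA hφ' (by grind), hsub, fun ψ hψ => ?_⟩
  refine hψ.of_subset hsub hφ' hf' (by grind) (by grind) fun u hu huZ => ?_
  obtain rfl | rfl : u = v ∨ u = w := by grind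
  · refine hψ.achieves_of_mem hA hu ?_
    rwa [hf'v, ← hφ'w, hunique.filter_eq_singleton]
  · refine hψ.achieves_of_mem hA hu ?_
    rwa [hf'w, ← hφ'v, hunique'.filter_eq_singleton]

theorem IsPrecoloring.exists_refinement_insert (hS : 1 ∈ S)
    (h : IsPrecoloring G S A Z φ) (hv : v ∈ A) (hL : ∀ u, 2 * Z.card + 1 < (L u).card) :
    ∃ Z' φ' f', IsRefinement G S L A Z φ f Z' φ' f' ∧ v ∈ Z' ∧ Z'.card ≤ Z.card + 2 := by
  classical
  by_cases hvZ : v ∈ Z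
  · exact ⟨Z, φ, f, ⟨h, subset_rfl, fun ψ hψ => hψ⟩, hvZ, by omega⟩
  by_cases hsub : nbrsIn G A v ⊆ Z
  · obtain ⟨φ', f', href⟩ := h.exists_refinement_of_nbrsIn_subset hS (f := f) hv hvZ hsub
      ((Nat.lt_succ_self _).trans (hL v))
    exact ⟨_, φ', f', href, by simp, by rw [Finset.card_insert_of_notMem hvZ]; omega⟩
  · obtain ⟨w, hw, hwZ⟩ := Finset.not_subset.1 hsub
    obtain ⟨hw, hvw⟩ := mem_nbrsIn.1 hw
    obtain ⟨φ', f', href⟩ := h.exists_refinement_of_adj hS (f := f) hv hvZ hw hwZ hvw hL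
    refine ⟨_, φ', f', href, by simp, (Finset.card_insert_le v _).trans ?_⟩
    rw [Finset.card_insert_of_notMem hwZ]

theorem IsPrecoloring.exists_refinement (hS : 1 ∈ S) (h : IsPrecoloring G S A Z φ) (hX : X ⊆ A)
    (hL : ∀ v, 2 * (Z.card + 2 * X.card) < (L v).card) :
    ∃ Z' φ' f', IsRefinement G S L A Z φ f Z' φ' f' ∧ X ⊆ Z' ∧
      Z'.card ≤ Z.card + 2 * X.card := by
  classical
  induction X using Finset.induction with
  | empty => exact ⟨Z, φ, f, ⟨h, subset_rfl, fun ψ hψ => hψ⟩, by simp⟩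
  | insert v X hvX ih =>
    rw [Finset.card_insert_of_notMem hvX] at hL ⊢
    obtain ⟨hv, hX⟩ := Finset.insert_subset_iff.1 hX
    obtain ⟨Z₁, φ₁, f₁, h₁, hXZ₁, hcard₁⟩ := ih hX fun v => by have := hL v; omega
    obtain ⟨Z₂, φ₂, f₂, h₂, hvZ₂, hcard₂⟩ := h₁.isPrecoloring.exists_refinement_insert hS (L := L)
      (f := f₁) hv fun v => by have := hL v; omega
    exact ⟨Z₂, φ₂, f₂, ⟨h₂.isPrecoloring, h₁.subset.trans h₂.subset,
      fun ψ hψ => h₁.isExtension ψ (h₂.isExtension ψ hψ)⟩,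
      Finset.insert_subset hvZ₂ (hXZ₁.trans h₂.subset), by omega⟩

theorem card_le_card_sdiff_image_union (hL : k + 2 * Z.card ≤ (L v).card) :
    k ≤ (L v \ (Z.image φ ∪ Z.image f)).card := by
  have := Finset.le_card_sdiff (Z.image φ ∪ Z.image f) (L v)
  have := Finset.card_union_le (Z.image φ) (Z.image f)
  have := Z.card_image_le (f := φ)
  have := Z.card_image_le (f := f)
  omega

theorem mem_sdiff_image_union {l : Finset ℕ} {c : ℕ} :
    c ∈ l \ (Z.image φ ∪ Z.image f) ↔ c ∈ l ∧ ∀ z ∈ Z, c ≠ φ z ∧ c ≠ f z := by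
  grind

theorem IsPrecoloring.exists_isExtension_of_not_hasBipartiteCliqueModel (hS : 1 ∈ S)
    (h : IsPrecoloring G S A Z φ) (hno : ¬ HasBipartiteCliqueModel G A M)
    (hL : ∀ v, 2 * sparseDegree M + sparseCommonDegree M + 1 + 2 * Z.card ≤ (L v).card) :
    ∃ ψ, IsExtension G S L A Z φ f ψ := by
  classical
  obtain ⟨φ₀, hφ₀L, hφ₀adj, hφ₀⟩ := exists_coloring_isUniqueNbr (A := A \ Z)
    (L := fun v => L v \ (Z.image φ ∪ Z.image f))
    (fun h => hno (h.mono (Finset.coe_subset.2 Finset.sdiff_subset)))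
    fun v _ => Nat.lt_of_succ_le (card_le_card_sdiff_image_union (hL v))
  have hmem (v : V) (hv : v ∈ A) (hvZ : v ∉ Z) : φ₀ v ∈ L v ∧ ∀ z ∈ Z, φ₀ v ≠ φ z ∧ φ₀ v ≠ f z :=
    mem_sdiff_image_union.1 (hφ₀L v (Finset.mem_sdiff.2 ⟨hv, hvZ⟩))
  have hadj := h.ne_of_adj
  refine ⟨Z.piecewise φ φ₀, by simp +contextual, ?_, ?_, ?_, fun v hv hvZ => ?_⟩
  · grind [Finset.piecewise]
  · grind [Finset.piecewise]
  · grind [Finset.piecewise]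
  by_cases hsub : nbrsIn G A v ⊆ Z
  · exact (h.achieves v hv hvZ hsub).congr fun u hu =>
      (Finset.piecewise_eq_of_mem _ _ _ (hsub hu)).symm
  · obtain ⟨w, hw, hwZ⟩ := Finset.not_subset.1 hsub
    obtain ⟨hw, hvw⟩ := mem_nbrsIn.1 hw
    obtain ⟨u, hu, hvu, hunique⟩ := hφ₀ v (Finset.mem_sdiff.2 ⟨hv, hvZ⟩)
      ⟨w, mem_nbrsIn.2 ⟨Finset.mem_sdiff.2 ⟨hw, hwZ⟩, hvw⟩⟩
    exact IsUniqueNbr.achieves hS (w := u) ⟨by grind, hvu, by grind [Finset.piecewise]⟩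

end Precoloring

/-! ### Gluing extensions -/

section Gluing

variable {G : SimpleGraph V} {S : Set ℕ} {L : V → Finset ℕ} {A A₁ A₂ B C Z : Finset V}
  {φ f f₂ ψ ψ₁ ψ₂ : V → ℕ} {u v : V} {N : ℕ}

theorem nbrsIn_eq_of_subset (hB : B ⊆ A) (h : nbrsIn G A v ⊆ B) : nbrsIn G B v = nbrsIn G A v :=
  (nbrsIn_mono hB v).antisymm fun _ hu => mem_nbrsIn.2 ⟨h hu, (mem_nbrsIn.1 hu).2⟩

variable [DecidableEq V]

theorem IsPrecoloring.inter (h : IsPrecoloring G S A Z φ) (hB : B ⊆ A)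
    (hclosed : ∀ v ∈ B, v ∉ Z → nbrsIn G B v ⊆ Z → nbrsIn G A v ⊆ B) :
    IsPrecoloring G S B (B ∩ Z) φ where
  subset := Finset.inter_subset_left
  ne_of_adj u hu v hv :=
    h.ne_of_adj u (Finset.mem_of_mem_inter_right hu) v (Finset.mem_of_mem_inter_right hv)
  achieves v hv hvZ hsub := by
    have hvZ : v ∉ Z := fun h => hvZ (Finset.mem_inter.2 ⟨hv, h⟩)
    replace hsub := hsub.trans Finset.inter_subset_right
    have heq := nbrsIn_eq_of_subset hB (hclosed v hv hvZ hsub)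
    exact heq ▸ h.achieves v (hB hv) hvZ (heq ▸ hsub)

theorem IsPrecoloring.exists_isExtension_of_pieces {ι : Type*} (h : IsPrecoloring G S A Z φ)
    (r : V → ι) {B : ι → Finset V} (hB : ∀ i, B i ⊆ A)
    (hclosed : ∀ i, ∀ v ∈ B i, v ∉ Z → nbrsIn G A v ⊆ B i)
    (hr : ∀ i, ∀ v ∈ A, v ∉ Z → (v ∈ B i ↔ r v = i))
    (hext : ∀ i, ∃ ψ, IsExtension G S L (B i) (B i ∩ Z) φ f ψ) :
    ∃ ψ, IsExtension G S L A Z φ f ψ := by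
  choose ψ hψ using hext
  have heq (i : ι) (v : V) (hv : v ∈ B i) : Z.piecewise φ (fun v => ψ (r v) v) v = ψ i v := by
    by_cases hvZ : v ∈ Z
    · rw [Finset.piecewise_eq_of_mem _ _ _ hvZ,
        (hψ i).eq_of_mem v (Finset.mem_inter.2 ⟨hv, hvZ⟩)]
    · rw [Finset.piecewise_eq_of_notMem _ _ _ hvZ, (hr i v (hB i hv) hvZ).1 hv]
  have hmem {v : V} (hv : v ∈ A) (hvZ : v ∉ Z) : v ∈ B (r v) ∧ v ∉ B (r v) ∩ Z :=
    ⟨(hr _ v hv hvZ).2 rfl, fun h => hvZ (Finset.mem_of_mem_inter_right h)⟩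
  have hadj {u v : V} (hv : v ∈ A) (hvZ : v ∉ Z) (hu : u ∈ A) (hvu : G.Adj v u) : u ∈ B (r v) :=
    hclosed _ v (hmem hv hvZ).1 hvZ (mem_nbrsIn.2 ⟨hu, hvu⟩)
  refine ⟨Z.piecewise φ fun v => ψ (r v) v, fun z hz => Finset.piecewise_eq_of_mem _ _ _ hz,
    fun v hv hvZ => ?_, fun u hu v hv huv => ?_, fun z hz v hv hvZ hzv => ?_,
    fun v hv hvZ => ?_⟩
  · obtain ⟨hvB, hvBZ⟩ := hmem hv hvZ
    exact heq _ v hvB ▸ (hψ _).mem_list v hvB hvBZ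
  · by_cases huZ : u ∈ Z
    · by_cases hvZ : v ∈ Z
      · simpa only [Finset.piecewise_eq_of_mem _ _ _ huZ, Finset.piecewise_eq_of_mem _ _ _ hvZ]
          using h.ne_of_adj u huZ v hvZ huv
      · rw [heq _ v (hmem hv hvZ).1, heq _ u (hadj hv hvZ hu huv.symm)]
        exact (hψ _).ne_of_adj u (hadj hv hvZ hu huv.symm) v (hmem hv hvZ).1 huv
    · rw [heq _ u (hmem hu huZ).1, heq _ v (hadj hu huZ hv huv)]
      exact (hψ _).ne_of_adj u (hmem hu huZ).1 v (hadj hu huZ hv huv) huv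
  · obtain ⟨hvB, hvBZ⟩ := hmem hv hvZ
    have hzB := hadj hv hvZ (h.subset hz) hzv.symm
    exact heq _ v hvB ▸ (hψ _).ne_forbidden z (Finset.mem_inter.2 ⟨hzB, hz⟩) v hvB hvBZ hzv
  · obtain ⟨hvB, hvBZ⟩ := hmem hv hvZ
    have hsub := hclosed _ v hvB hvZ
    rw [← nbrsIn_eq_of_subset (hB _) hsub]
    exact ((hψ _).achieves v hvB hvBZ).congr fun u hu => (heq _ u (mem_nbrsIn.1 hu).1).symm

/-- Every vertex of `A₁ ∩ A₂` outside `Z` protects the color by which it is achieved in `A₁`. -/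
theorem IsExtension.union (h₁ : IsExtension G S L A₁ Z φ f ψ₁)
    (h₂ : IsExtension G S L A₂ (A₁ ∩ A₂) ψ₁ f₂ ψ₂) (hZ : Z ⊆ A₁ ∩ A₂)
    (hsep : ∀ u ∈ A₁, ∀ v ∈ A₂, G.Adj u v → u ∈ A₂ ∨ v ∈ A₁) (hf : ∀ z ∈ Z, f₂ z = f z)
    (hf₂ : ∀ v ∈ A₁ ∩ A₂, v ∉ Z → ((nbrsIn G A₁ v).filter (ψ₁ · = f₂ v)).card ∈ S) :
    IsExtension G S L (A₁ ∪ A₂) Z φ f (A₁.piecewise ψ₁ ψ₂) := by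
  have hψ₁ : ∀ v ∈ A₁, A₁.piecewise ψ₁ ψ₂ v = ψ₁ v :=
    fun v hv => Finset.piecewise_eq_of_mem _ _ _ hv
  have hψ₂ : ∀ v ∈ A₂, A₁.piecewise ψ₁ ψ₂ v = ψ₂ v := fun v hv => by
    by_cases hv₁ : v ∈ A₁
    · rw [hψ₁ v hv₁, h₂.eq_of_mem v (Finset.mem_inter.2 ⟨hv₁, hv⟩)]
    · exact Finset.piecewise_eq_of_notMem _ _ _ hv₁
  obtain ⟨h₁Z, h₁L, h₁adj, h₁f, h₁ach⟩ := h₁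
  obtain ⟨-, h₂L, h₂adj, h₂f, h₂ach⟩ := h₂
  have hsep' : ∀ u ∈ A₂, ∀ v ∈ A₁, G.Adj u v → u ∈ A₁ ∨ v ∈ A₂ :=
    fun u hu v hv huv => (hsep v hv u hu huv.symm).symm
  refine ⟨by grind, by grind, by grind, by grind, fun v hv hvZ => ?_⟩
  by_cases hv₂ : v ∈ A₂
  · by_cases hv₁ : v ∈ A₁
    · refine fun _ => ⟨f₂ v, ?_⟩
      convert hf₂ v (Finset.mem_inter.2 ⟨hv₁, hv₂⟩) hvZ using 2
      ext u
      simp only [Finset.mem_filter, mem_nbrsIn, Finset.mem_union]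
      have := h₂f v (Finset.mem_inter.2 ⟨hv₁, hv₂⟩) u
      grind
    · rw [← nbrsIn_eq_of_subset Finset.subset_union_right (by grind [mem_nbrsIn, G.adj_comm])]
      exact (h₂ach v hv₂ (by grind)).congr fun u hu => (hψ₂ u (mem_nbrsIn.1 hu).1).symm
  · rw [← nbrsIn_eq_of_subset Finset.subset_union_left (by grind [mem_nbrsIn])]
    exact (h₁ach v (by grind) hvZ).congr fun u hu => (hψ₁ u (mem_nbrsIn.1 hu).1).symm

theorem IsPrecoloring.inter_of_isExtension (h : IsPrecoloring G S (A₁ ∪ A₂) Z φ)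
    (hψ : IsExtension G S L A₁ Z φ f ψ) (hZ : Z ⊆ A₁ ∩ A₂)
    (hsep : ∀ u ∈ A₁, ∀ v ∈ A₂, G.Adj u v → u ∈ A₂ ∨ v ∈ A₁)
    (hclosed : ∀ v ∈ A₂, v ∉ A₁ → nbrsIn G (A₁ ∪ A₂) v ⊆ A₁ → nbrsIn G (A₁ ∪ A₂) v ⊆ Z) :
    IsPrecoloring G S A₂ (A₁ ∩ A₂) ψ where
  subset := Finset.inter_subset_right
  ne_of_adj u hu v hv :=
    hψ.ne_of_adj u (Finset.mem_of_mem_inter_left hu) v (Finset.mem_of_mem_inter_left hv)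
  achieves v hv hvZ hsub := by
    have hv₁ : v ∉ A₁ := fun h => hvZ (Finset.mem_inter.2 ⟨h, hv⟩)
    rw [nbrsIn_eq_of_subset (A := A₁ ∪ A₂) Finset.subset_union_right
      (by grind [mem_nbrsIn, G.adj_comm])] at hsub ⊢
    have hsubZ := hclosed v hv hv₁ (hsub.trans Finset.inter_subset_left)
    exact (h.achieves v (Finset.mem_union_right _ hv) (fun h => hvZ (hZ h)) hsubZ).congr
      fun u hu => (hψ.eq_of_mem u (hsubZ hu)).symm

theorem IsPrecoloring.exists_isExtension_of_separation (h : IsPrecoloring G S A Z φ)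
    (hA : A₁ ∪ A₂ = A) (hZ : Z ⊆ A₁ ∩ A₂) (hsep : ∀ u ∈ A₁, ∀ v ∈ A₂, G.Adj u v → u ∈ A₂ ∨ v ∈ A₁)
    (hclosed : ∀ v ∈ A₂, v ∉ A₁ → nbrsIn G A v ⊆ A₁ → nbrsIn G A v ⊆ Z)
    (hnbr : ∀ v ∈ A₁ ∩ A₂, v ∉ Z → (nbrsIn G A₁ v).Nonempty)
    (h₁ : ∃ ψ, IsExtension G S L A₁ Z φ f ψ)
    (h₂ : ∀ φ f, IsPrecoloring G S A₂ (A₁ ∩ A₂) φ → ∃ ψ, IsExtension G S L A₂ (A₁ ∩ A₂) φ f ψ) :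
    ∃ ψ, IsExtension G S L A Z φ f ψ := by
  obtain ⟨ψ₁, h₁⟩ := h₁
  subst hA
  have hprotect (v : V) : ∃ c, (v ∈ Z → c = f v) ∧ (v ∈ A₁ ∩ A₂ → v ∉ Z →
      ((nbrsIn G A₁ v).filter (ψ₁ · = c)).card ∈ S) := by
    by_cases hvZ : v ∈ Z
    · exact ⟨f v, fun _ => rfl, fun _ h => absurd hvZ h⟩
    by_cases hv : v ∈ A₁ ∩ A₂
    · obtain ⟨c, hc⟩ := h₁.achieves v (Finset.mem_of_mem_inter_left hv) hvZ (hnbr v hv hvZ)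
      exact ⟨c, fun h => absurd h hvZ, fun _ _ => hc⟩
    · exact ⟨f v, fun _ => rfl, fun h => absurd h hv⟩
  choose f₂ hf₂ hprotect using hprotect
  obtain ⟨ψ₂, h₂⟩ := h₂ ψ₁ f₂ (h.inter_of_isExtension h₁ hZ hsep hclosed)
  exact ⟨_, h₁.union h₂ hZ hsep (fun z hz => hf₂ z hz) hprotect⟩

end Gluing

/-! ### Splitting off a piece with many precolored vertices -/

/-- Vertices of `C ⊆ A` have all their neighbors in `A` inside `C` or its boundary `B`. -/
structure IsPiece (G : SimpleGraph V) (A C B : Finset V) : Prop where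
  subset : C ⊆ A
  boundary_subset : B ⊆ A
  disjoint : Disjoint C B
  mem_or_mem : ∀ v ∈ C, ∀ u ∈ A, G.Adj v u → u ∈ C ∨ u ∈ B

open scoped Classical in
/-- The piece `C` together with the vertices outside `B ∪ Z` that would be spoiled by coloring `B`
on top of `Z`. -/
noncomputable def enlarge (G : SimpleGraph V) (A Z C B : Finset V) : Finset V :=
  {v ∈ A | v ∈ C ∨ v ∉ B ∧ v ∉ Z ∧ nbrsIn G A v ⊆ B ∪ Z ∧ ¬ nbrsIn G A v ⊆ Z}

open scoped Classical in
/-- The uncolored boundary vertices with an uncolored neighbor in the enlarged piece or in the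
boundary. -/
noncomputable def portals (G : SimpleGraph V) (A Z C B : Finset V) : Finset V :=
  {v ∈ B | v ∉ Z ∧ ∃ u ∈ A, G.Adj v u ∧ u ∉ Z ∧ (u ∈ enlarge G A Z C B ∨ u ∈ B)}

section Piece

variable {G : SimpleGraph V} {S : Set ℕ} {L : V → Finset ℕ} {A B C Z : Finset V}
  {φ f : V → ℕ} {u v : V} {N : ℕ}

theorem mem_enlarge [DecidableEq V] : v ∈ enlarge G A Z C B ↔
    v ∈ A ∧ (v ∈ C ∨ v ∉ B ∧ v ∉ Z ∧ nbrsIn G A v ⊆ B ∪ Z ∧ ¬ nbrsIn G A v ⊆ Z) := by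
  simp only [enlarge, Finset.mem_filter]
  congr!

theorem mem_portals : v ∈ portals G A Z C B ↔ v ∈ B ∧ v ∉ Z ∧
    ∃ u ∈ A, G.Adj v u ∧ u ∉ Z ∧ (u ∈ enlarge G A Z C B ∨ u ∈ B) := by
  simp only [portals, Finset.mem_filter]

theorem IsPiece.mem_or_mem_of_mem_enlarge (h : IsPiece G A C B) (hv : v ∈ enlarge G A Z C B)
    (hu : u ∈ A) (hvu : G.Adj v u) : u ∈ C ∨ u ∈ B ∨ u ∈ Z := by
  classical
  obtain ⟨-, hv | ⟨-, -, hsub, -⟩⟩ := mem_enlarge.1 hv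
  · exact (h.mem_or_mem v hv u hu hvu).imp_right .inl
  · exact .inr (Finset.mem_union.1 (hsub (mem_nbrsIn.2 ⟨hu, hvu⟩)))

theorem IsPiece.notMem_boundary (h : IsPiece G A C B) (hv : v ∈ enlarge G A Z C B) : v ∉ B := by
  classical
  obtain ⟨-, hv | ⟨hv, -⟩⟩ := mem_enlarge.1 hv
  exacts [Finset.disjoint_left.1 h.disjoint hv, hv]

theorem IsPiece.separation (h : IsPiece G A C B) (hv : v ∈ enlarge G A Z C B) (hvZ : v ∉ Z)
    (hu : u ∈ A) (hvu : G.Adj v u) : u ∈ enlarge G A Z C B ∨ u ∈ Z ∨ u ∈ portals G A Z C B := by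
  classical
  have hvA := (mem_enlarge.1 hv).1
  rcases h.mem_or_mem_of_mem_enlarge hv hu hvu with huC | huB | huZ
  · exact .inl (mem_enlarge.2 ⟨hu, .inl huC⟩)
  · by_cases huZ : u ∈ Z
    · exact .inr (.inl huZ)
    · exact .inr (.inr (mem_portals.2 ⟨huB, huZ, v, hvA, hvu.symm, hvZ, .inl hv⟩))
  · exact .inr (.inl huZ)

theorem IsPiece.mem_of_forall_adj (h : IsPiece G A C B) (hv : v ∈ A)
    (hvE : v ∉ enlarge G A Z C B) (hvZ : v ∉ Z) (hvP : v ∉ portals G A Z C B)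
    (hall : ∀ u ∈ A, G.Adj v u → u ∈ enlarge G A Z C B ∨ u ∈ Z ∨ u ∈ portals G A Z C B)
    (hu : u ∈ A) (hvu : G.Adj v u) : u ∈ Z := by
  classical
  have hBZ : nbrsIn G A v ⊆ B ∪ Z := by
    intro w hw
    obtain ⟨hw, hvw⟩ := mem_nbrsIn.1 hw
    rcases hall w hw hvw with hwE | hwZ | hwP
    · refine Finset.mem_union_right _ (by_contra fun hwZ => ?_)
      have := h.separation hwE hwZ hv hvw.symm
      tauto
    · exact Finset.mem_union_right _ hwZ
    · exact Finset.mem_union_left _ (mem_portals.1 hwP).1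
  by_contra huZ
  have huB := (Finset.mem_union.1 (hBZ (mem_nbrsIn.2 ⟨hu, hvu⟩))).resolve_right huZ
  by_cases hvB : v ∈ B
  · exact hvP (mem_portals.2 ⟨hvB, hvZ, u, hu, hvu, huZ, .inr huB⟩)
  · exact hvE (mem_enlarge.2 ⟨hv, .inr ⟨hvB, hvZ, hBZ,
      fun hsub => huZ (hsub (mem_nbrsIn.2 ⟨hu, hvu⟩))⟩⟩)

theorem IsPiece.exists_mem_adj_of_mem_portals (h : IsPiece G A C B)
    (hv : v ∈ portals G A Z C B) :
    ∃ u, u ∉ Z ∧ (u ∈ enlarge G A Z C B ∨ u ∈ portals G A Z C B) ∧ G.Adj v u := by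
  obtain ⟨hvB, hvZ, u, -, hvu, huZ, huE | huB⟩ := mem_portals.1 hv
  · exact ⟨u, huZ, .inl huE, hvu⟩
  · exact ⟨u, huZ, .inr (mem_portals.2 ⟨huB, huZ, v, h.boundary_subset hvB, hvu.symm, hvZ,
      .inr hvB⟩), hvu⟩

end Piece

section PieceExtension

variable [DecidableEq V] {G : SimpleGraph V} {S : Set ℕ} {L : V → Finset ℕ} {A B C Z : Finset V}
  {φ f : V → ℕ} {N : ℕ}

theorem IsPiece.enlarge_union_sdiff (hp : IsPiece G A C B) (hZ : Z ⊆ A) :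
    enlarge G A Z C B ∪ Z ∪ portals G A Z C B ∪ (A \ enlarge G A Z C B ∪ Z) = A := by
  have := hp.boundary_subset
  grind [mem_enlarge, mem_portals]

theorem IsPiece.enlarge_inter_sdiff (hp : IsPiece G A C B) :
    (enlarge G A Z C B ∪ Z ∪ portals G A Z C B) ∩ (A \ enlarge G A Z C B ∪ Z) =
      Z ∪ portals G A Z C B := by
  have := hp.boundary_subset
  grind [mem_portals, hp.notMem_boundary]

theorem IsPiece.exists_isExtension_enlarge (hp : IsPiece G A C B) (h : IsPrecoloring G S A Z φ)
    (hZ : Z.card ≤ N)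
    (ih : IsExtendable G S L N (enlarge G A Z C B ∪ Z ∪ portals G A Z C B)) :
    ∃ ψ, IsExtension G S L (enlarge G A Z C B ∪ Z ∪ portals G A Z C B) Z φ f ψ := by
  refine ih Z φ f ?_ hZ
  have hBA := hp.boundary_subset
  have hZA := h.subset
  suffices h' : IsPrecoloring G S (enlarge G A Z C B ∪ Z ∪ portals G A Z C B)
      ((enlarge G A Z C B ∪ Z ∪ portals G A Z C B) ∩ Z) φ by
    rwa [Finset.inter_eq_right.2 (by grind)] at h'
  refine h.inter (by grind [mem_enlarge, mem_portals]) fun v hv hvZ hsub u hu => ?_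
  obtain ⟨hu, hvu⟩ := mem_nbrsIn.1 hu
  simp only [Finset.mem_union] at hv
  obtain (hv | hv) | hv := hv
  · have := hp.separation hv hvZ hu hvu
    grind
  · exact absurd hv hvZ
  · obtain ⟨w, hwZ, hw, hvw⟩ := hp.exists_mem_adj_of_mem_portals hv
    exact absurd (hsub (mem_nbrsIn.2 ⟨by grind, hvw⟩)) hwZ

theorem IsPiece.exists_isExtension_sdiff_enlarge (hS : 1 ∈ S) (hp : IsPiece G A C B)
    (hZA : Z ⊆ A)
    (h : IsPrecoloring G S (A \ enlarge G A Z C B ∪ Z) (Z ∪ portals G A Z C B) φ)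
    (hZ : Z.card ≤ N) (hB : 2 * B.card ≤ (Z ∩ C).card)
    (ih : IsExtendable G S L N (A \ enlarge G A Z C B))
    (hL : ∀ v, 2 * (Z.card + 2 * B.card) < (L v).card) :
    ∃ ψ, IsExtension G S L (A \ enlarge G A Z C B ∪ Z) (Z ∪ portals G A Z C B) φ f ψ := by
  set D := enlarge G A Z C B
  set P := portals G A Z C B
  have hPB : P ⊆ B := fun v hv => (mem_portals.1 hv).1
  have hBD : ∀ v ∈ B, v ∉ D := fun v hvB hvD => hp.notMem_boundary hvD hvB
  have hCD : C ⊆ D := fun v hv => mem_enlarge.2 ⟨hp.subset hv, .inl hv⟩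
  have hBA := hp.boundary_subset
  have hcard : (Z ∪ P).card + 2 * (B \ (Z ∪ P)).card ≤ Z.card + 2 * B.card := by
    have := Finset.card_union_le Z P
    have := Finset.card_sdiff_add_card_eq_card hPB
    have := Finset.card_le_card (show B \ (Z ∪ P) ⊆ B \ P by grind)
    omega
  obtain ⟨Z', φ', f', href, hX, hZ'⟩ := h.exists_refinement hS (L := L) (f := f)
    (X := B \ (Z ∪ P)) (by grind) fun v => lt_of_le_of_lt (by omega) (hL v)
  have hZZ' := href.subset
  have hcard' : (A \ D ∩ Z').card ≤ N := by
    have := Finset.card_sdiff_add_card_eq_card (show Z ∩ C ⊆ Z' by grind)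
    have := Finset.card_le_card (show A \ D ∩ Z' ⊆ Z' \ (Z ∩ C) by grind)
    omega
  suffices hext : ∃ ψ, IsExtension G S L (A \ D ∪ Z) Z' φ' f' ψ from hext.imp href.isExtension
  have hclosed : ∀ v ∈ A \ D, v ∉ Z' → nbrsIn G (A \ D ∪ Z) v ⊆ A \ D := by
    intro v hv hvZ' u hu
    obtain ⟨hu, hvu⟩ := mem_nbrsIn.1 hu
    have := fun hu => hp.mem_or_mem_of_mem_enlarge (Z := Z) (u := v) (v := u) hu (by grind) hvu.symm
    grind
  refine href.isPrecoloring.exists_isExtension_of_pieces (fun _ => ()) (B := fun _ => A \ D)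
    (fun _ => Finset.subset_union_left) (fun _ => hclosed) (fun _ v hv hvZ' => by grind) fun _ => ?_
  exact ih _ φ' f' (href.isPrecoloring.inter Finset.subset_union_left
    fun v hv hvZ' _ => hclosed v hv hvZ') hcard'

theorem IsPiece.exists_isExtension (hS : 1 ∈ S) (hp : IsPiece G A C B)
    (h : IsPrecoloring G S A Z φ) (hZ : Z.card ≤ N) (hC : C.Nonempty)
    (hB : 2 * B.card ≤ (Z ∩ C).card)
    (hrich : ∃ u ∈ A, ∃ v ∈ A, G.Adj u v ∧ u ∉ C ∪ B ∪ Z ∧ v ∉ B ∪ Z)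
    (ih : ∀ A' ⊂ A, IsExtendable G S L N A')
    (hL : ∀ v, 2 * (Z.card + 2 * B.card) < (L v).card) :
    ∃ ψ, IsExtension G S L A Z φ f ψ := by
  obtain ⟨u, hu, v, hv, huv, huZ, hvZ⟩ := hrich
  obtain ⟨w, hw⟩ := hC
  have huD : u ∉ enlarge G A Z C B := by grind [mem_enlarge, mem_nbrsIn]
  have hZA := h.subset
  have hA := hp.enlarge_union_sdiff hZA
  have hinter := hp.enlarge_inter_sdiff (Z := Z)
  have h₁ := hp.exists_isExtension_enlarge (f := f) h hZ
    (ih _ ⟨Finset.subset_union_left.trans hA.subset, by grind [mem_portals]⟩)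
  have ih₂ := ih (A \ enlarge G A Z C B)
    ⟨Finset.sdiff_subset, fun hsub => by grind [mem_enlarge, hp.subset hw]⟩
  refine h.exists_isExtension_of_separation hA (by grind) ?_ ?_ ?_ h₁ fun φ₂ f₂ h₂ => ?_
  · intro a ha b hb hab
    have := hp.separation (Z := Z) (v := a) (u := b)
    grind
  · intro a ha ha₁ hsub b hb
    have := mem_nbrsIn.1 hb
    refine hp.mem_of_forall_adj (v := a) (by grind) (by grind) (by grind) (by grind)
      (fun c hc hac => ?_) this.1 this.2
    have := hsub (mem_nbrsIn.2 ⟨hc, hac⟩)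
    grind
  · intro a ha haZ
    obtain ⟨b, -, hb, hab⟩ := hp.exists_mem_adj_of_mem_portals (Z := Z) (v := a) (by grind)
    exact ⟨b, mem_nbrsIn.2 ⟨by grind, hab⟩⟩
  · rw [hinter] at h₂ ⊢
    exact hp.exists_isExtension_sdiff_enlarge hS hZA h₂ hZ hB ih₂ hL

end PieceExtension

/-! ### Anchorings without pieces having many precolored vertices -/

/-- The subgraph formed by the edges of `G` with both ends in `A`. -/
def restrict (G : SimpleGraph V) (A : Set V) : SimpleGraph V :=
  ((⊤ : G.Subgraph).induce A).spanningCoe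

/-- A set `P` of vertices of `A \ Z` consisting of all those in the core and, for each of them, at
most one vertex outside the core which is anchored and adjacent to it. -/
structure IsSkeleton (G : SimpleGraph V) (A Z : Finset V) (α : V → Option V) (P : Finset V) :
    Prop where
  subset : P ⊆ A
  notMem : ∀ v ∈ P, v ∉ Z
  mem_of_core : ∀ v ∈ A, v ∉ Z → α v = some v → v ∈ P
  exists_adj : ∀ v ∈ P, α v ≠ some v → ∃ u ∈ P, α v = some u ∧ G.Adj v u
  eq_of_anchor_eq : ∀ u ∈ P, ∀ v ∈ P, α u ≠ some u → α v ≠ some v → α u = α v → u = v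

section Skeleton

variable {G : SimpleGraph V} {S : Set ℕ} {L : V → Finset ℕ} {A P X Z : Finset V}
  {α : V → Option V} {χ : V → ZMod 2} {φ φ₀ f : V → ℕ} {u v : V} {k N : ℕ}

theorem restrict_adj {A : Set V} : (restrict G A).Adj u v ↔ u ∈ A ∧ v ∈ A ∧ G.Adj u v :=
  Iff.rfl

theorem IsAnchoring.anchor_eq_of_adj (hα : IsAnchoring (restrict G A) (fun _ => 1) X α χ)
    (hu : u ∈ A) (huX : u ∉ X) (hcore : α u ≠ some u) (hv : v ∈ A) (hvX : v ∉ X)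
    (huv : G.Adj u v) : α u = α v :=
  (hα.eq_or_add_eq (restrict_adj.2 ⟨hu, hv, huv⟩) huX hvX).resolve_right fun h => hcore h.1

theorem IsAnchoring.colorable_two (hα : IsAnchoring G (fun _ => 1) X α χ) {P : Set V}
    (hPX : ∀ v ∈ P, v ∉ X)
    (hP : ∀ u ∈ P, ∀ v ∈ P, G.Adj u v → α u = α v → α u = some u ∨ α v = some v) :
    (G.induce P).Colorable 2 := by
  classical
  let color (v : V) : ZMod 2 := (α v).elim 0 fun u => if u = v then χ v else χ u + 1
  have hne {u v : V} (hu : α u = some u) (hv : α v = some u) (huv : G.Adj u v) :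
      color u ≠ color v := by
    simp [color, hu, hv, huv.ne]
  have hcolor : ∀ u ∈ P, ∀ v ∈ P, G.Adj u v → color u ≠ color v := by
    intro u hu v hv huv
    obtain heq | ⟨hαu, hαv, hχ⟩ := hα.eq_or_add_eq huv (hPX u hu) (hPX v hv)
    · obtain hαu | hαv := hP u hu v hv huv heq
      · exact hne hαu (heq ▸ hαu) huv
      · exact (hne hαv (heq ▸ hαv) huv.symm).symm
    · have : χ u ≠ χ v := fun heq => by grind
      simpa [color, hαu, hαv]
  exact (Coloring.mk (fun v : P => color v)
    fun {u v} huv => hcolor u u.2 v v.2 huv).colorable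

theorem IsSkeleton.adj_of_anchor_eq (hP : IsSkeleton G A Z α P) (hu : u ∈ P) (hv : v ∈ P)
    (hne : u ≠ v) (heq : α u = α v) : G.Adj u v := by
  by_cases hαu : α u = some u
  · obtain ⟨w, -, hvw, hadj⟩ := hP.exists_adj v hv (by grind)
    obtain rfl : u = w := by grind
    exact hadj.symm
  · have hαv : α v = some v := by_contra fun hαv => hne (hP.eq_of_anchor_eq u hu v hv hαu hαv heq)
    obtain ⟨w, -, huw, hadj⟩ := hP.exists_adj u hu hαu
    obtain rfl : v = w := by grind
    exact hadj

theorem IsSkeleton.card_filter_anchor_le [DecidableEq V] (hP : IsSkeleton G A Z α P)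
    (ρ : Option V) : (P.filter (α · = ρ)).card ≤ 2 := by
  by_contra! hcard
  obtain ⟨a, ha, b, hb, c, hc, hab, hac, hbc⟩ := Finset.two_lt_card.1 hcard
  have hcore (u v : V) (hu : u ∈ P.filter (α · = ρ)) (hv : v ∈ P.filter (α · = ρ)) (huv : u ≠ v) :
      α u = some u ↔ α v ≠ some v := by
    have := hP.eq_of_anchor_eq u (by grind) v (by grind)
    grind
  have := hcore a b ha hb hab
  have := hcore a c ha hc hac
  have := hcore b c hb hc hbc
  tauto

theorem IsSkeleton.colorable_two (hP : IsSkeleton G A Z α P)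
    (hα : IsAnchoring (restrict G A) (fun _ => 1) X α χ) (hXZ : X ⊆ Z) :
    (G.induce (P : Set V)).Colorable 2 := by
  refine Colorable.mono_left (G' := (restrict G A).induce (P : Set V))
    (fun u v huv => restrict_adj.2 ⟨hP.subset u.2, hP.subset v.2, huv⟩)
    (hα.colorable_two (fun v hv hvX => hP.notMem v hv (hXZ hvX)) fun u hu v hv huv heq => ?_)
  by_contra! hcore
  exact huv.ne (hP.eq_of_anchor_eq u hu v hv hcore.1 hcore.2 heq)

theorem IsSkeleton.insert [DecidableEq V] (hP : IsSkeleton G A Z α P) (hu : u ∈ P)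
    (hempty : nbrsIn G P u = ∅) (hv : v ∈ A) (hvZ : v ∉ Z) (hvu : α v = some u)
    (hadj : G.Adj v u) : IsSkeleton G A Z α (insert v P) := by
  have huP : ∀ w ∈ P, ¬ G.Adj u w :=
    fun w hw huw => Finset.notMem_empty w (hempty ▸ mem_nbrsIn.2 ⟨hw, huw⟩)
  have hne : ∀ w ∈ P, α w ≠ some w → α w ≠ some u := fun w hw hcore hwu => by
    obtain ⟨x, -, hwx, hadj⟩ := hP.exists_adj w hw hcore
    obtain rfl : u = x := by grind
    exact huP w hw hadj.symm
  obtain ⟨hPA, hPZ, hcore, hexists, heq⟩ := hP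
  constructor
  · exact Finset.insert_subset hv hPA
  all_goals grind

theorem exists_isSkeleton (hα : IsAnchoring (restrict G A) (fun _ => 1) X α χ) (hXZ : X ⊆ Z) :
    ∃ P, IsSkeleton G A Z α P ∧ ∀ v ∈ P, nbrsIn G P v = ∅ → nbrsIn G A v ⊆ Z := by
  classical
  have hcore : IsSkeleton G A Z α {v ∈ A | v ∉ Z ∧ α v = some v} := by
    constructor <;> grind
  obtain ⟨P, hP⟩ := (A.powerset.filter (IsSkeleton G A Z α)).exists_maximal
    ⟨_, Finset.mem_filter.2 ⟨Finset.mem_powerset.2 hcore.subset, hcore⟩⟩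
  have hsk : IsSkeleton G A Z α P := (Finset.mem_filter.1 hP.1).2
  refine ⟨P, hsk, fun v hv hempty w hw => by_contra fun hwZ => ?_⟩
  obtain ⟨hwA, hvw⟩ := mem_nbrsIn.1 hw
  have hwP : w ∉ P := fun h => Finset.notMem_empty w (hempty ▸ mem_nbrsIn.2 ⟨h, hvw⟩)
  have hαv : α v = some v := by
    by_contra hαv
    obtain ⟨x, hx, -, hadj⟩ := hsk.exists_adj v hv hαv
    exact Finset.notMem_empty x (hempty ▸ mem_nbrsIn.2 ⟨hx, hadj⟩)
  have hαw : α w = some v := by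
    have hcore : α w ≠ some w := fun h => hwP (hsk.mem_of_core w hwA hwZ h)
    rw [hα.anchor_eq_of_adj hwA (fun h => hwZ (hXZ h)) hcore (hsk.subset hv)
      (fun h => hsk.notMem v hv (hXZ h)) hvw.symm, hαv]
  have hins := hsk.insert hv hempty hwA hwZ hαw hvw.symm
  exact hwP (hP.2 (Finset.mem_filter.2 ⟨Finset.mem_powerset.2 hins.subset, hins⟩)
    (Finset.subset_insert w P) (Finset.mem_insert_self w P))

theorem SChoosable.exists_coloring_achieves (hk : SChoosable S (G.induce (P : Set V)) k)
    (hL : ∀ v, k ≤ (L v).card) : ∃ φ : V → ℕ, (∀ v ∈ P, φ v ∈ L v) ∧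
      (∀ u ∈ P, ∀ v ∈ P, G.Adj u v → φ u ≠ φ v) ∧ ∀ v ∈ P, Achieves S φ (nbrsIn G P v) := by
  classical
  obtain ⟨φ, hφL, hφ, hach⟩ := hk (fun v => L v) fun v => hL v
  let φ' (v : V) : ℕ := if hv : v ∈ P then φ ⟨v, hv⟩ else 0
  have hφ' (v : V) (hv : v ∈ P) : φ' v = φ ⟨v, hv⟩ := dif_pos hv
  refine ⟨φ', fun v hv => hφ' v hv ▸ hφL ⟨v, hv⟩, fun u hu v hv huv => ?_, fun v hv hne => ?_⟩
  · rw [hφ' u hu, hφ' v hv]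
    exact hφ (show (G.induce (P : Set V)).Adj ⟨u, hu⟩ ⟨v, hv⟩ from huv)
  · obtain ⟨u, hu⟩ := hne
    obtain ⟨hu, hvu⟩ := mem_nbrsIn.1 hu
    obtain ⟨s, hs, c, rfl⟩ := hach ⟨v, hv⟩ ⟨⟨u, hu⟩, hvu⟩
    refine ⟨c, ?_⟩
    convert hs
    rw [← Set.ncard_coe_finset, ← Set.ncard_image_of_injective _ Subtype.val_injective]
    congr 1
    ext w
    simp only [Finset.coe_filter, mem_nbrsIn, Set.mem_ofPred_eq, Set.mem_image]
    constructor
    · rintro ⟨⟨hw, hvw⟩, hc⟩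
      exact ⟨⟨w, hw⟩, ⟨hvw, hφ' w hw ▸ hc⟩, rfl⟩
    · rintro ⟨⟨w, hw⟩, ⟨hvw, hc⟩, rfl⟩
      exact ⟨⟨hw, hvw⟩, (hφ' w hw).trans hc⟩

end Skeleton

section Branch

variable [DecidableEq V] {G : SimpleGraph V} {S : Set ℕ} {L : V → Finset ℕ} {A P X Z : Finset V}
  {α : V → Option V} {χ : V → ZMod 2} {φ φ₀ f : V → ℕ} {v : V} {k N : ℕ}

theorem IsPrecoloring.piecewise (hS : 1 ∈ S) (h : IsPrecoloring G S A Z φ) (hPA : P ⊆ A)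
    (hPZ : ∀ v ∈ P, v ∉ Z) (hadj : ∀ u ∈ P, ∀ v ∈ P, G.Adj u v → φ₀ u ≠ φ₀ v)
    (hφ : ∀ v ∈ P, ∀ z ∈ Z, φ₀ v ≠ φ z)
    (hclique : ∀ v ∈ A, v ∉ Z ∪ P → ∀ u ∈ P, ∀ w ∈ P, G.Adj v u → G.Adj v w → u ≠ w → G.Adj u w) :
    IsPrecoloring G S A (Z ∪ P) (Z.piecewise φ φ₀) where
  subset := Finset.union_subset h.subset hPA
  ne_of_adj := by
    have := h.ne_of_adj
    grind [Finset.piecewise]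
  achieves v hv hvZP hsub := by
    by_cases hsubZ : nbrsIn G A v ⊆ Z
    · exact (h.achieves v hv (by grind) hsubZ).congr fun u hu =>
        (Finset.piecewise_eq_of_mem _ _ _ (hsubZ hu)).symm
    · obtain ⟨w, hw, hwZ⟩ := Finset.not_subset.1 hsubZ
      have hwP : w ∈ P := (Finset.mem_union.1 (hsub hw)).resolve_left hwZ
      obtain ⟨hw, hvw⟩ := mem_nbrsIn.1 hw
      refine IsUniqueNbr.achieves hS (w := w) ⟨hw, hvw, fun u hu hvu heq => ?_⟩
      rw [Finset.piecewise_eq_of_notMem _ _ _ hwZ] at heq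
      by_contra hne
      obtain huZ | huP := Finset.mem_union.1 (hsub (mem_nbrsIn.2 ⟨hu, hvu⟩))
      · rw [Finset.piecewise_eq_of_mem _ _ _ huZ] at heq
        exact hφ w hwP u huZ heq.symm
      · rw [Finset.piecewise_eq_of_notMem _ _ _ (hPZ u huP)] at heq
        exact hadj u huP w hwP (hclique v hv hvZP u huP w hwP hvu hvw hne) heq

theorem IsPrecoloring.exists_refinement_union (hpos : ∀ s ∈ S, 0 < s)
    (h : IsPrecoloring G S A Z φ) (hZP : IsPrecoloring G S A (Z ∪ P) (Z.piecewise φ φ₀))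
    (hPZ : ∀ v ∈ P, v ∉ Z) (hφ₀ : ∀ v ∈ P, φ₀ v ∈ L v ∧ ∀ z ∈ Z, φ₀ v ≠ φ z ∧ φ₀ v ≠ f z)
    (hach : ∀ v ∈ P, Achieves S φ₀ (nbrsIn G P v))
    (hempty : ∀ v ∈ P, nbrsIn G P v = ∅ → nbrsIn G A v ⊆ Z) :
    ∃ f', IsRefinement G S L A Z φ f (Z ∪ P) (Z.piecewise φ φ₀) f' := by
  have hprotect (v : V) : ∃ c, v ∈ P → (nbrsIn G P v).Nonempty →
      ((nbrsIn G P v).filter (φ₀ · = c)).card ∈ S := by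
    by_cases hv : v ∈ P ∧ (nbrsIn G P v).Nonempty
    · obtain ⟨c, hc⟩ := hach v hv.1 hv.2
      exact ⟨c, fun _ _ => hc⟩
    · exact ⟨0, fun h₁ h₂ => absurd ⟨h₁, h₂⟩ hv⟩
  choose f₀ hf₀ using hprotect
  refine ⟨Z.piecewise f f₀, hZP, Finset.subset_union_left, fun ψ hψ => ?_⟩
  have hmem {v : V} (hv : v ∈ Z ∪ P) (hvZ : v ∉ Z) : v ∈ P :=
    (Finset.mem_union.1 hv).resolve_left hvZ
  refine hψ.of_subset Finset.subset_union_left (fun z hz => Finset.piecewise_eq_of_mem _ _ _ hz)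
    (fun z hz => Finset.piecewise_eq_of_mem _ _ _ hz) ?_ ?_ fun v hv hvZ => ?_
  · grind [Finset.piecewise]
  · grind [Finset.piecewise]
  obtain hv' | hne := (nbrsIn G P v).eq_empty_or_nonempty
  · have hsub := hempty v (hmem hv hvZ) hv'
    refine (h.achieves v (hZP.subset hv) hvZ hsub).congr fun u hu => ?_
    rw [hψ.eq_of_mem u (Finset.mem_union_left _ (hsub hu)),
      Finset.piecewise_eq_of_mem _ _ _ (hsub hu)]
  · refine hψ.achieves_of_mem hZP.subset hv ?_
    have hcard := hf₀ v (hmem hv hvZ) hne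
    obtain ⟨w, hw⟩ := Finset.card_pos.1 (hpos _ hcard)
    convert hcard using 2
    ext u
    simp only [Finset.mem_filter, mem_nbrsIn, Finset.mem_union] at hw ⊢
    grind [Finset.piecewise]

theorem IsSkeleton.exists_refinement (hS : 1 ∈ S) (hpos : ∀ s ∈ S, 0 < s)
    (hk : ∀ s : Set V, (G.induce s).Colorable 2 → SChoosable S (G.induce s) k)
    (h : IsPrecoloring G S A Z φ) (hα : IsAnchoring (restrict G A) (fun _ => 1) X α χ)
    (hXZ : X ⊆ Z) (hP : IsSkeleton G A Z α P)
    (hempty : ∀ v ∈ P, nbrsIn G P v = ∅ → nbrsIn G A v ⊆ Z)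
    (hL : ∀ v, k + 2 * Z.card ≤ (L v).card) :
    ∃ φ' f', IsRefinement G S L A Z φ f (Z ∪ P) φ' f' := by
  obtain ⟨φ₀, hφ₀L, hadj, hach⟩ := (hk P (hP.colorable_two hα hXZ)).exists_coloring_achieves
    (L := fun v => L v \ (Z.image φ ∪ Z.image f)) fun v => card_le_card_sdiff_image_union (hL v)
  have hφ₀ (v : V) (hv : v ∈ P) := mem_sdiff_image_union.1 (hφ₀L v hv)
  have hanchor (v : V) (hv : v ∈ A) (hvZP : v ∉ Z ∪ P) (u : V) (hu : u ∈ P) (hvu : G.Adj v u) :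
      α v = α u := by
    obtain ⟨hvZ, hvP⟩ := Finset.notMem_union.1 hvZP
    exact hα.anchor_eq_of_adj hv (fun hvX => hvZ (hXZ hvX))
      (fun hcore => hvP (hP.mem_of_core v hv hvZ hcore)) (hP.subset hu)
      (fun huX => hP.notMem u hu (hXZ huX)) hvu
  have hZP : IsPrecoloring G S A (Z ∪ P) (Z.piecewise φ φ₀) :=
    h.piecewise hS hP.subset hP.notMem hadj (fun v hv z hz => ((hφ₀ v hv).2 z hz).1)
      fun v hv hvZP u hu w hw hvu hvw hne => hP.adj_of_anchor_eq hu hw hne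
        ((hanchor v hv hvZP u hu hvu).symm.trans (hanchor v hv hvZP w hw hvw))
  exact ⟨_, h.exists_refinement_union hpos hZP hP.notMem hφ₀ hach hempty⟩

/-- The vertices of `A \ X` outside the core with a given anchor `ρ`. -/
def branch (α : V → Option V) (A X : Finset V) (ρ : Option V) : Finset V :=
  {v ∈ A | v ∉ X ∧ α v = ρ ∧ α v ≠ some v}

/-- The set `X` together with the vertex of the core that anchors the branch of `ρ`, if any. -/
def branchBoundary (α : V → Option V) (A X : Finset V) (ρ : Option V) : Finset V :=
  X ∪ {v ∈ A | α v = ρ ∧ α v = some v}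

theorem mem_branch {ρ : Option V} :
    v ∈ branch α A X ρ ↔ v ∈ A ∧ v ∉ X ∧ α v = ρ ∧ α v ≠ some v :=
  Finset.mem_filter

theorem mem_branchBoundary {ρ : Option V} :
    v ∈ branchBoundary α A X ρ ↔ v ∈ X ∨ v ∈ A ∧ α v = ρ ∧ α v = some v := by
  simp [branchBoundary]

theorem card_branchBoundary_le (α : V → Option V) (A X : Finset V) (ρ : Option V) :
    (branchBoundary α A X ρ).card ≤ X.card + 1 := by
  refine (Finset.card_union_le _ _).trans (Nat.add_le_add_left (Finset.card_le_one.2 ?_) _)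
  grind

theorem IsAnchoring.isPiece (hα : IsAnchoring (restrict G A) (fun _ => 1) X α χ) (hX : X ⊆ A)
    (ρ : Option V) : IsPiece G A (branch α A X ρ) (branchBoundary α A X ρ) where
  subset := Finset.filter_subset _ _
  boundary_subset := Finset.union_subset hX (Finset.filter_subset _ _)
  disjoint := Finset.disjoint_left.2 (by grind [mem_branch, mem_branchBoundary])
  mem_or_mem v hv u hu hvu := by
    obtain ⟨hvA, hvX, hvρ, hcore⟩ := mem_branch.1 hv
    have := hα.anchor_eq_of_adj hvA hvX hcore hu
    grind [mem_branch, mem_branchBoundary]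

theorem IsAnchoring.exists_isExtension_of_subset
    (hα : IsAnchoring (restrict G A) (fun _ => 1) X α χ) (h : IsPrecoloring G S A Z φ)
    (hXZ : X ⊆ Z) (hcore : ∀ v ∈ A, v ∉ Z → α v ≠ some v)
    (hcard : ∀ ρ, (Z.filter fun v => v ∈ X ∨ α v = ρ).card ≤ N)
    (hrich : ∀ ρ, ∃ u ∈ A, u ∉ X ∧ α u ≠ ρ) (ih : ∀ A' ⊂ A, IsExtendable G S L N A') :
    ∃ ψ, IsExtension G S L A Z φ f ψ := by
  have hclosed (ρ : Option V) : ∀ v ∈ A.filter (fun v => v ∈ X ∨ α v = ρ), v ∉ Z →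
      nbrsIn G A v ⊆ A.filter fun v => v ∈ X ∨ α v = ρ := by
    intro v hv hvZ u hu
    obtain ⟨hu, hvu⟩ := mem_nbrsIn.1 hu
    obtain ⟨hv, hvρ⟩ := Finset.mem_filter.1 hv
    have := hα.anchor_eq_of_adj hv (fun hvX => hvZ (hXZ hvX)) (hcore v hv hvZ) hu
    grind
  refine h.exists_isExtension_of_pieces α (fun ρ => Finset.filter_subset _ A) hclosed
    (by grind) fun ρ => ih _ ?_ _ φ f (h.inter (Finset.filter_subset _ A) fun v hv hvZ _ =>
      hclosed ρ v hv hvZ) ((Finset.card_le_card ?_).trans (hcard ρ))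
  · obtain ⟨u, hu, huX, huρ⟩ := hrich ρ
    exact Finset.filter_ssubset.2 ⟨u, hu, by tauto⟩
  · grind

theorem IsSkeleton.card_filter_union_le (hP : IsSkeleton G A Z α P) (hZ : Z ⊆ A) (ρ : Option V) :
    ((Z ∪ P).filter fun v => v ∈ X ∨ α v = ρ).card ≤
      (Z ∩ branch α A X ρ).card + X.card + 3 := by
  have hsub : ((Z ∪ P).filter fun v => v ∈ X ∨ α v = ρ) ⊆
      (Z ∩ branch α A X ρ) ∪ branchBoundary α A X ρ ∪ P.filter (α · = ρ) := by
    grind [mem_branch, mem_branchBoundary]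
  grw [hsub, Finset.card_union_le, Finset.card_union_le, card_branchBoundary_le,
    hP.card_filter_anchor_le]
  omega

theorem IsAnchoring.exists_isExtension (hS : 1 ∈ S) (hpos : ∀ s ∈ S, 0 < s)
    (hk : ∀ s : Set V, (G.induce s).Colorable 2 → SChoosable S (G.induce s) k)
    (hα : IsAnchoring (restrict G A) (fun _ => 1) X α χ) (h : IsPrecoloring G S A Z φ)
    (hXZ : X ⊆ Z) (hcard : ∀ ρ, (Z ∩ branch α A X ρ).card + X.card + 3 ≤ N)
    (hrich : ∀ ρ, ∃ u ∈ A, u ∉ X ∧ α u ≠ ρ) (ih : ∀ A' ⊂ A, IsExtendable G S L N A')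
    (hL : ∀ v, k + 2 * Z.card ≤ (L v).card) : ∃ ψ, IsExtension G S L A Z φ f ψ := by
  obtain ⟨P, hP, hempty⟩ := exists_isSkeleton hα hXZ
  obtain ⟨φ', f', href⟩ := hP.exists_refinement hS hpos hk h hα hXZ hempty (f := f) hL
  have hcore (v : V) (hv : v ∈ A) (hvZP : v ∉ Z ∪ P) : α v ≠ some v := by
    obtain ⟨hvZ, hvP⟩ := Finset.notMem_union.1 hvZP
    exact fun hcore => hvP (hP.mem_of_core v hv hvZ hcore)
  obtain ⟨ψ, hψ⟩ := hα.exists_isExtension_of_subset (f := f') href.isPrecoloring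
    (hXZ.trans href.subset) hcore
    (fun ρ => (hP.card_filter_union_le h.subset ρ).trans (hcard ρ)) hrich ih
  exact ⟨ψ, href.isExtension ψ hψ⟩

end Branch

/-! ### Graphs without odd clique models -/

section Main

variable {G : SimpleGraph V} {S : Set ℕ} {L : V → Finset ℕ} {A X Z : Finset V}
  {α : V → Option V} {χ : V → ZMod 2} {φ f : V → ℕ} {k M N t : ℕ}

theorem HasBipartiteCliqueModel.restrict {A : Set V} (h : HasBipartiteCliqueModel G A M) :
    HasBipartiteCliqueModel (restrict G A) A M := by
  obtain ⟨χ, ρ, hρ⟩ := h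
  refine ⟨χ, ρ, hρ.subset, hρ.nonempty, fun i a ha b hb => ?_, hρ.disjoint, fun i j hij => ?_⟩
  · exact (hρ.connectedIn i a ha b hb).mono subset_rfl fun x hx y hy hxy =>
      ⟨restrict_adj.2 ⟨hρ.subset i hx, hρ.subset i hy, hxy.1⟩, hxy.2⟩
  · obtain ⟨x, hx, y, hy, hxy⟩ := hρ.exists_adj i j hij
    exact ⟨x, hx, y, hy, restrict_adj.2 ⟨hρ.subset i hx, hρ.subset j hy, hxy.1⟩, hxy.2⟩

theorem IsOddCliqueModel.mono {G' : SimpleGraph V} {ψ : V → ZMod 2} {Q : W → Set V}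
    (h : IsOddCliqueModel G ψ Q) (hG : G ≤ G') : IsOddCliqueModel G' ψ Q where
  nonempty := h.nonempty
  connectedIn i a ha b hb := (h.connectedIn i a ha b hb).mono subset_rfl
    fun _ _ _ _ hxy => ⟨hG hxy.1, hxy.2⟩
  disjoint := h.disjoint
  exists_adj i j hij := by
    obtain ⟨x, hx, y, hy, hxy, hψ⟩ := h.exists_adj hij
    exact ⟨x, hx, y, hy, hG hxy, hψ⟩

theorem IsOddCliqueModel.comp {W' : Type*} {ψ : V → ZMod 2} {Q : W → Set V} {e : W' → W}
    (h : IsOddCliqueModel G ψ Q) (he : Function.Injective e) :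
    IsOddCliqueModel G ψ fun i => Q (e i) where
  nonempty i := h.nonempty (e i)
  connectedIn i := h.connectedIn (e i)
  disjoint _ _ hij := h.disjoint (he.ne hij)
  exists_adj _ _ hij := h.exists_adj (he.ne hij)

theorem IsAnchoring.inter [DecidableEq V] (hα : IsAnchoring (restrict G A) (fun _ => 1) X α χ) :
    IsAnchoring (restrict G A) (fun _ => 1) (X ∩ A) α χ where
  anchor_eq_self := hα.anchor_eq_self
  notMem _ hv hvX := hα.notMem hv (Finset.mem_of_mem_inter_left hvX)
  eq_or_add_eq _ _ huv huX hvX := hα.eq_or_add_eq huv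
    (fun h => huX (Finset.mem_inter.2 ⟨h, huv.1⟩)) fun h => hvX (Finset.mem_inter.2 ⟨h, huv.2.1⟩)

theorem exists_isAnchoring_restrict [Finite V]
    (hno : ∀ (ψ : V → ZMod 2) (Q : Fin t → Set V), ¬ IsOddCliqueModel G ψ Q)
    (h : HasBipartiteCliqueModel G A M) (hM : 2 * (2 * (4 * t + 1) + 2 * t + 1) + 1 < M)
    (hM' : 2 * (4 * t + 1) + N + 2 ≤ M) :
    ∃ (X : Finset V) (α : V → Option V) (χ : V → ZMod 2), X ⊆ A ∧ X.card ≤ 2 * (4 * t + 1) ∧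
      IsAnchoring (restrict G A) (fun _ => 1) X α χ ∧ ∀ Y : Finset V, Y.card ≤ N →
        ∃ u ∈ A, ∃ v ∈ A, G.Adj u v ∧ α u = some u ∧ α v = some v ∧ u ∉ Y ∧ v ∉ Y := by
  classical
  obtain ⟨ψ, Q, hQ⟩ | ⟨X, α, χ, hX, hα, hcore⟩ :=
    exists_isOddCliqueModel_or_isAnchoring h.restrict hM hM'
  · exact absurd (hQ.mono fun _ _ huv => huv.2.2) (hno ψ Q)
  · refine ⟨X ∩ A, α, χ, Finset.inter_subset_right,
      (Finset.card_le_card Finset.inter_subset_left).trans hX, hα.inter, fun Y hY => ?_⟩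
    obtain ⟨u, v, huv, h⟩ := hcore Y hY
    exact ⟨u, huv.1, v, huv.2.1, huv.2.2, h⟩

theorem IsAnchoring.exists_isExtension_of_card_le [DecidableEq V] (hS : 1 ∈ S)
    (hpos : ∀ s ∈ S, 0 < s)
    (hk : ∀ s : Set V, (G.induce s).Colorable 2 → SChoosable S (G.induce s) k)
    (hα : IsAnchoring (restrict G A) (fun _ => 1) X α χ) (h : IsPrecoloring G S A Z φ)
    (hX : X ⊆ A) (hcard : ∀ ρ, (Z ∩ branch α A X ρ).card + 3 * X.card + 3 ≤ N)
    (hrich : ∀ ρ, ∃ u ∈ A, u ∉ X ∧ α u ≠ ρ) (ih : ∀ A' ⊂ A, IsExtendable G S L N A')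
    (hL : ∀ v, k + 2 * (Z.card + 2 * X.card) < (L v).card) :
    ∃ ψ, IsExtension G S L A Z φ f ψ := by
  obtain ⟨Z', φ', f', href, hXZ', hZ'⟩ := h.exists_refinement (L := L) (f := f) hS hX
    fun v => by have := hL v; omega
  have hcard' (ρ : Option V) : (Z' ∩ branch α A X ρ).card + X.card + 3 ≤ N := by
    have hsub : Z' ∩ branch α A X ρ ⊆ (Z ∩ branch α A X ρ) ∪ (Z' \ Z) := by grind
    have := Finset.card_le_card hsub
    have := Finset.card_union_le (Z ∩ branch α A X ρ) (Z' \ Z)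
    have := Finset.card_sdiff_add_card_eq_card href.subset
    have := hcard ρ
    omega
  obtain ⟨ψ, hψ⟩ := hα.exists_isExtension (f := f') hS hpos hk href.isPrecoloring hXZ' hcard'
    hrich ih fun v => by have := hL v; omega
  exact ⟨ψ, href.isExtension ψ hψ⟩

theorem IsAnchoring.exists_isExtension_of_le_card [DecidableEq V] {ρ : Option V} (hS : 1 ∈ S)
    (hα : IsAnchoring (restrict G A) (fun _ => 1) X α χ) (h : IsPrecoloring G S A Z φ)
    (hX : X ⊆ A) (hZ : Z.card ≤ N) (hcard : 2 * (X.card + 1) ≤ (Z ∩ branch α A X ρ).card)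
    (hrich : ∀ Y : Finset V, Y.card ≤ N + X.card + 1 →
      ∃ u ∈ A, ∃ v ∈ A, G.Adj u v ∧ α u = some u ∧ α v = some v ∧ u ∉ Y ∧ v ∉ Y)
    (ih : ∀ A' ⊂ A, IsExtendable G S L N A')
    (hL : ∀ v, 2 * (Z.card + 2 * (X.card + 1)) < (L v).card) :
    ∃ ψ, IsExtension G S L A Z φ f ψ := by
  have hB := card_branchBoundary_le α A X ρ
  obtain ⟨u, hu, v, hv, huv, hαu, -, huY, hvY⟩ := hrich (branchBoundary α A X ρ ∪ Z)
    ((Finset.card_union_le _ _).trans (by omega))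
  refine (hα.isPiece hX ρ).exists_isExtension hS h hZ (Finset.card_pos.1 ?_)
    ((Nat.mul_le_mul_left 2 hB).trans hcard) ⟨u, hu, v, hv, huv, ?_, hvY⟩ ih
    fun v => by have := hL v; omega
  · have := Finset.card_le_card (Finset.inter_subset_right (s₁ := Z) (s₂ := branch α A X ρ))
    omega
  · grind [mem_branch]

theorem isExtendable_of_forall_not_isOddCliqueModel [Finite V] (hS : 1 ∈ S)
    (hpos : ∀ s ∈ S, 0 < s)
    (hk : ∀ s : Set V, (G.induce s).Colorable 2 → SChoosable S (G.induce s) k)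
    (hno : ∀ (ψ : V → ZMod 2) (Q : Fin t → Set V), ¬ IsOddCliqueModel G ψ Q)
    (hN : 5 * (2 * (4 * t + 1)) + 4 ≤ N) (hM : 3 * (2 * (4 * t + 1)) + 4 * t + N + 5 ≤ M)
    (hL : ∀ v, k + 2 * sparseDegree M + sparseCommonDegree M + 4 * N ≤ (L v).card)
    (A : Finset V) : IsExtendable G S L N A := by
  classical
  induction A using Finset.strongInduction with
  | H A ih =>
  intro Z φ f h hZ
  by_cases hmodel : HasBipartiteCliqueModel G A M
  swap
  · exact h.exists_isExtension_of_not_hasBipartiteCliqueModel hS hmodel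
      fun v => by have := hL v; omega
  obtain ⟨X, α, χ, hX, hXcard, hα, hrich⟩ := exists_isAnchoring_restrict
    (N := N + 2 * (4 * t + 1) + 1) hno hmodel (by omega) (by omega)
  by_cases hheavy : ∃ ρ, 2 * (X.card + 1) ≤ (Z ∩ branch α A X ρ).card
  · obtain ⟨ρ, hheavy⟩ := hheavy
    exact hα.exists_isExtension_of_le_card hS h hX hZ hheavy
      (fun Y hY => hrich Y (hY.trans (by omega))) ih fun v => by have := hL v; omega
  · push Not at hheavy
    refine hα.exists_isExtension_of_card_le hS hpos hk h hX
      (fun ρ => by have := hheavy ρ; omega) (fun ρ => ?_) ih fun v => by have := hL v; omega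
    obtain ⟨u, hu, -, -, -, hαu, -, huY, -⟩ := hrich (branchBoundary α A X ρ)
      ((card_branchBoundary_le α A X ρ).trans (by omega))
    grind [mem_branchBoundary]

theorem SChoosable.of_isExtendable [Fintype V] {n : ℕ} (h : ∀ L : V → Finset ℕ,
    (∀ v, n ≤ (L v).card) → IsExtendable G S L N Finset.univ) : SChoosable S G n := by
  classical
  intro L hL
  have hempty : IsPrecoloring G S Finset.univ ∅ 0 := by
    refine ⟨Finset.empty_subset _, by simp, fun v _ _ hsub hne => ?_⟩
    exact absurd (hne.mono hsub) Finset.not_nonempty_empty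
  obtain ⟨ψ, hψ⟩ := h L hL ∅ 0 0 hempty (Nat.zero_le N)
  refine ⟨ψ, fun v => hψ.mem_list v (Finset.mem_univ v) (Finset.notMem_empty v),
    fun u v => hψ.ne_of_adj u (Finset.mem_univ u) v (Finset.mem_univ v), fun v ⟨u, hvu⟩ => ?_⟩
  obtain ⟨c, hc⟩ := hψ.achieves v (Finset.mem_univ v) (Finset.notMem_empty v)
    ⟨u, mem_nbrsIn.2 ⟨Finset.mem_univ u, hvu⟩⟩
  refine ⟨_, hc, c, ?_⟩
  rw [← Set.ncard_coe_finset]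
  simp [mem_nbrsIn]

end Main

theorem stmt5 (WH : Type) [Fintype WH] (H : SimpleGraph WH) :
    ∃ c : ℕ, ∀ (V : Type) [Fintype V] (G : SimpleGraph V), ¬ IsOddMinor H G →
      ∀ S : Set ℕ, (∀ s ∈ S, 0 < s) → 1 ∈ S →
      ∀ k : ℕ, 0 < k →
        (∀ s : Set V, (G.induce s).Colorable 2 → SChoosable S (G.induce s) k) →
        SChoosable S G (k + c) := by
  let t := Fintype.card WH
  let N := 5 * (2 * (4 * t + 1)) + 4
  let M := 3 * (2 * (4 * t + 1)) + 4 * t + N + 5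
  refine ⟨2 * sparseDegree M + sparseCommonDegree M + 4 * N,
    fun V _ G hG S hpos hS k _ hk => SChoosable.of_isExtendable (N := N) fun L hL => ?_⟩
  have hno (ψ : V → ZMod 2) (Q : Fin t → Set V) : ¬ IsOddCliqueModel G ψ Q := fun hQ =>
    hG ((hQ.comp (Fintype.equivFin WH).injective).isOddMinor H)
  exact isExtendable_of_forall_not_isOddCliqueModel (N := N) (M := M) hS hpos hk hno le_rfl le_rfl
    (fun v => by have := hL v; omega) Finset.univ

end CFPaper
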